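/- For every integer Δ ≥ 1 and all reals d, α > 0 there exist η, μ > 0 and n₀ ∈ ℕ such that the following holds for every integer n ≥ n₀. Let G be a (d,η)-dense 3-uniform hypergraph on n vertices with d_G(v) ≥ αn² for every vertex v of G. Then G contains a copy of the 1-expansion of every μ-separable graph H with Δ(H) ≤ Δ and v(H) + e(H) ≤ n. -/

import Mathlib

open Finset
open scoped Classical

/-- Number of ordered pairs `(x,y) ∈ A × B` with `{x,y}` an edge of `G`. -/
noncomputable def pairCount {V : Type*} (G : SimpleGraph V) (A B : Finset V) : ℕ :=
  ((A ×ˢ B).filter (fun p => G.Adj p.1 p.2)).card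

/-- Number of neighbours of `v` in `B`. -/
noncomputable def degIn {V : Type*} (G : SimpleGraph V) (v : V) (B : Finset V) : ℕ :=
  (B.filter (fun w => G.Adj v w)).card

/-- Degree of `v` in `G`. -/
noncomputable def degOf {V : Type*} [Fintype V] (G : SimpleGraph V) (v : V) : ℕ :=
  ((univ : Finset V).filter (fun w => G.Adj v w)).card

/-- Number of edges of `G`. -/
noncomputable def edgeCnt {V : Type*} [Fintype V] (G : SimpleGraph V) : ℕ :=
  ((univ : Finset (Sym2 V)).filter (fun e => e ∈ G.edgeSet)).card

/-- Number of edges of `H` with one endpoint in `A` and the other in `B`. -/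
noncomputable def eBetween {W : Type*} [Fintype W] (H : SimpleGraph W) (A B : Finset W) : ℕ :=
  ((univ : Finset (Sym2 W)).filter
    (fun e => e ∈ H.edgeSet ∧ ∃ x ∈ A, ∃ y ∈ B, e = s(x, y))).card

/-- A graph `H` on `h` vertices is `μ`-separable if there is `X ⊆ V(H)` with `|X| ≤ μ h`
such that every connected component of `H - X` has at most `μ h` vertices. -/
def Separable {W : Type*} [Fintype W] (H : SimpleGraph W) (μ : ℝ) : Prop :=
  ∃ X : Finset W, (X.card : ℝ) ≤ μ * (Fintype.card W : ℝ) ∧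
    ∀ K : (SimpleGraph.induce ((↑X : Set W)ᶜ) H).ConnectedComponent,
      (K.supp.ncard : ℝ) ≤ μ * (Fintype.card W : ℝ)

/-- A transversal copy of `H` in the graph collection `G`. -/
def HasTransversal {V C W : Type*} (G : C → SimpleGraph V) (H : SimpleGraph W) : Prop :=
  ∃ (τ : W → V) (σ : Sym2 W → C),
    Function.Injective τ ∧ Set.InjOn σ H.edgeSet ∧
    ∀ x y, H.Adj x y → (G (σ s(x, y))).Adj (τ x) (τ y)

/-- Density of a collection of bipartite graphs. -/
noncomputable def colDensity {V C : Type*} (G : C → SimpleGraph V)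
    (A B : Finset V) (D : Finset C) : ℝ :=
  (∑ c ∈ D, (pairCount (G c) A B : ℝ)) / ((D.card : ℝ) * (A.card : ℝ) * (B.card : ℝ))

/-- `(ε,d)`-regularity of a collection of bipartite graphs with parts `V₁, V₂`
and colour set `D`. -/
def ColReg {V C : Type*} (ε d : ℝ) (G : C → SimpleGraph V)
    (V₁ V₂ : Finset V) (D : Finset C) : Prop :=
  d ≤ colDensity G V₁ V₂ D ∧
  ∀ V₁' ⊆ V₁, ∀ V₂' ⊆ V₂, ∀ D' ⊆ D,
    ε * (V₁.card : ℝ) ≤ (V₁'.card : ℝ) → ε * (V₂.card : ℝ) ≤ (V₂'.card : ℝ) →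
    ε * (D.card : ℝ) ≤ (D'.card : ℝ) →
    |colDensity G V₁' V₂' D' - colDensity G V₁ V₂ D| < ε

/-- `(ε,d)`-superregularity of a collection of bipartite graphs. -/
def ColSuperReg {V C : Type*} (ε d : ℝ) (G : C → SimpleGraph V)
    (V₁ V₂ : Finset V) (D : Finset C) : Prop :=
  ColReg ε d G V₁ V₂ D ∧
  (∀ v ∈ V₁, d * (V₂.card : ℝ) * (D.card : ℝ) ≤ ∑ c ∈ D, (degIn (G c) v V₂ : ℝ)) ∧
  (∀ v ∈ V₂, d * (V₁.card : ℝ) * (D.card : ℝ) ≤ ∑ c ∈ D, (degIn (G c) v V₁ : ℝ)) ∧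
  (∀ c ∈ D, d * (V₁.card : ℝ) * (V₂.card : ℝ) ≤ (pairCount (G c) V₁ V₂ : ℝ))

/-- `(ε,d)`-half-superregularity of a collection of bipartite graphs. -/
def ColHalfSuperReg {V C : Type*} (ε d : ℝ) (G : C → SimpleGraph V)
    (V₁ V₂ : Finset V) (D : Finset C) : Prop :=
  (∀ V₁' ⊆ V₁, ∀ V₂' ⊆ V₂, ∀ D' ⊆ D,
    ε * (V₁.card : ℝ) ≤ (V₁'.card : ℝ) → ε * (V₂.card : ℝ) ≤ (V₂'.card : ℝ) →
    ε * (D.card : ℝ) ≤ (D'.card : ℝ) →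
    d * (D'.card : ℝ) * (V₁'.card : ℝ) * (V₂'.card : ℝ) ≤
      ∑ c ∈ D', (pairCount (G c) V₁' V₂' : ℝ)) ∧
  (∀ v ∈ V₁, d * (V₂.card : ℝ) * (D.card : ℝ) ≤ ∑ c ∈ D, (degIn (G c) v V₂ : ℝ)) ∧
  (∀ v ∈ V₂, d * (V₁.card : ℝ) * (D.card : ℝ) ≤ ∑ c ∈ D, (degIn (G c) v V₁ : ℝ)) ∧
  (∀ c ∈ D, d * (V₁.card : ℝ) * (V₂.card : ℝ) ≤ (pairCount (G c) V₁ V₂ : ℝ))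

/-- `(ε,d)`-half-superregularity of a bipartite graph (given by an adjacency relation)
with parts `V₁, V₂`. -/
def BipHalfSuper {V : Type*} (ε d : ℝ) (A : V → V → Prop) (V₁ V₂ : Finset V) : Prop :=
  (∀ U₁ ⊆ V₁, ∀ U₂ ⊆ V₂,
    ε * (V₁.card : ℝ) ≤ (U₁.card : ℝ) → ε * (V₂.card : ℝ) ≤ (U₂.card : ℝ) →
    d * (U₁.card : ℝ) * (U₂.card : ℝ) ≤
      (((U₁ ×ˢ U₂).filter (fun p => A p.1 p.2)).card : ℝ)) ∧
  (∀ x ∈ V₁, d * (V₂.card : ℝ) ≤ ((V₂.filter (fun y => A x y)).card : ℝ)) ∧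
  (∀ y ∈ V₂, d * (V₁.card : ℝ) ≤ ((V₁.filter (fun x => A x y)).card : ℝ))

/-- Number of ordered triples `(x₁,x₂,x₃) ∈ U₁ × U₂ × U₃` with `{x₁,x₂,x₃}` an edge. -/
noncomputable def tripCount {V : Type*} (E : Set (Finset V)) (U₁ U₂ U₃ : Finset V) : ℕ :=
  ((U₁ ×ˢ U₂ ×ˢ U₃).filter
    (fun p => ({p.1, p.2.1, p.2.2} : Finset V) ∈ E)).card

/-- Density of the triple `(U₁,U₂,U₃)` in a `3`-graph. -/
noncomputable def tripDensity {V : Type*} (E : Set (Finset V)) (U₁ U₂ U₃ : Finset V) : ℝ :=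
  (tripCount E U₁ U₂ U₃ : ℝ) / ((U₁.card : ℝ) * (U₂.card : ℝ) * (U₃.card : ℝ))

/-- Degree of a vertex in a hypergraph: the number of edges containing it. -/
noncomputable def hDeg {V : Type*} [Fintype V] (E : Set (Finset V)) (v : V) : ℕ :=
  ((univ : Finset (Finset V)).filter (fun e => e ∈ E ∧ v ∈ e)).card

/-- Weak `(ε,d)`-regularity of a 3-partite triple in a 3-graph. -/
def TripReg {V : Type*} (ε d : ℝ) (E : Set (Finset V)) (V₁ V₂ V₃ : Finset V) : Prop :=
  d ≤ tripDensity E V₁ V₂ V₃ ∧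
  ∀ U₁ ⊆ V₁, ∀ U₂ ⊆ V₂, ∀ U₃ ⊆ V₃,
    ε * (V₁.card : ℝ) ≤ (U₁.card : ℝ) → ε * (V₂.card : ℝ) ≤ (U₂.card : ℝ) →
    ε * (V₃.card : ℝ) ≤ (U₃.card : ℝ) →
    |tripDensity E U₁ U₂ U₃ - tripDensity E V₁ V₂ V₃| < ε

/-- Weak `(ε,d)`-half-superregularity of a 3-partite triple in a 3-graph. -/
def TripHalfSuper {V : Type*} (ε d : ℝ) (E : Set (Finset V)) (V₁ V₂ V₃ : Finset V) : Prop :=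
  (∀ U₁ ⊆ V₁, ∀ U₂ ⊆ V₂, ∀ U₃ ⊆ V₃,
    ε * (V₁.card : ℝ) ≤ (U₁.card : ℝ) → ε * (V₂.card : ℝ) ≤ (U₂.card : ℝ) →
    ε * (V₃.card : ℝ) ≤ (U₃.card : ℝ) →
    d * (U₁.card : ℝ) * (U₂.card : ℝ) * (U₃.card : ℝ) ≤ (tripCount E U₁ U₂ U₃ : ℝ)) ∧
  (∀ x ∈ V₁, d * (V₂.card : ℝ) * (V₃.card : ℝ) ≤ (tripCount E {x} V₂ V₃ : ℝ)) ∧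
  (∀ y ∈ V₂, d * (V₁.card : ℝ) * (V₃.card : ℝ) ≤ (tripCount E V₁ {y} V₃ : ℝ)) ∧
  (∀ z ∈ V₃, d * (V₁.card : ℝ) * (V₂.card : ℝ) ≤ (tripCount E V₁ V₂ {z} : ℝ))

/-- A copy of the 1-expansion of `H` in a 3-graph with edge set `E`. -/
def HasExpansionCopy {V W : Type*} (E : Set (Finset V)) (H : SimpleGraph W) : Prop :=
  ∃ (ρv : W → V) (ρe : Sym2 W → V),
    Function.Injective ρv ∧ Set.InjOn ρe H.edgeSet ∧
    (∀ x, ∀ e ∈ H.edgeSet, ρv x ≠ ρe e) ∧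
    ∀ x y, H.Adj x y → ({ρv x, ρv y, ρe s(x, y)} : Finset V) ∈ E

/-- Number of edges (as functions picking one vertex per part) inside the sets `U i`. -/
noncomputable def kCount {V : Type*} {k : ℕ} (E : Set (Fin k → V)) (U : Fin k → Finset V) : ℕ :=
  ((Fintype.piFinset U).filter (fun e => e ∈ E)).card

/-- Density of a `k`-tuple in a `k`-partite `k`-graph. -/
noncomputable def kDensity {V : Type*} {k : ℕ} (E : Set (Fin k → V)) (U : Fin k → Finset V) : ℝ :=
  (kCount E U : ℝ) / ∏ i, ((U i).card : ℝ)

/-- Degree of `x` as a vertex of the `i`-th part of a `k`-partite `k`-graph. -/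
noncomputable def kDegAt {V : Type*} [Fintype V] {k : ℕ} (E : Set (Fin k → V))
    (i : Fin k) (x : V) : ℕ :=
  ((univ : Finset (Fin k → V)).filter (fun e => e ∈ E ∧ e i = x)).card

/-- Weak ε-regularity of a `k`-tuple in a `k`-partite `k`-graph. -/
def KTupleReg {V : Type*} {k : ℕ} (ε : ℝ) (E : Set (Fin k → V)) (Wp : Fin k → Finset V) : Prop :=
  ∀ U : Fin k → Finset V, (∀ i, U i ⊆ Wp i) →
    (∀ i, ε * ((Wp i).card : ℝ) ≤ ((U i).card : ℝ)) →
    |kDensity E U - kDensity E Wp| < ε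

/-- Weak `(ε,d)`-regularity of a `k`-partite `k`-graph with parts `P`. -/
def KReg {V : Type*} {k : ℕ} (ε d : ℝ) (E : Set (Fin k → V)) (P : Fin k → Finset V) : Prop :=
  d ≤ kDensity E P ∧
  ∀ U : Fin k → Finset V, (∀ i, U i ⊆ P i) →
    (∀ i, ε * ((P i).card : ℝ) ≤ ((U i).card : ℝ)) →
    |kDensity E U - kDensity E P| < ε

/-- Weak `(ε,d)`-superregularity of a `k`-partite `k`-graph with parts `P`. -/
def KSuper {V : Type*} [Fintype V] {k : ℕ} (ε d : ℝ) (E : Set (Fin k → V))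
    (P : Fin k → Finset V) : Prop :=
  KReg ε d E P ∧
  ∀ i, ∀ x ∈ P i, d * (∏ j, ((P j).card : ℝ)) / ((P i).card : ℝ) ≤ (kDegAt E i x : ℝ)

/-- Weak `(ε,d)`-half-superregularity of a `k`-partite `k`-graph with parts `P`. -/
def KHalfSuper {V : Type*} [Fintype V] {k : ℕ} (ε d : ℝ) (E : Set (Fin k → V))
    (P : Fin k → Finset V) : Prop :=
  (∀ U : Fin k → Finset V, (∀ i, U i ⊆ P i) →
    (∀ i, ε * ((P i).card : ℝ) ≤ ((U i).card : ℝ)) →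
    d ≤ kDensity E U) ∧
  ∀ i, ∀ x ∈ P i, d * (∏ j, ((P j).card : ℝ)) / ((P i).card : ℝ) ≤ (kDegAt E i x : ℝ)

/-- An `R`-template: vertex clusters `Vc`, colour clusters `Cc i j` (one for each
edge `ij` of `R`), and for each colour `c ∈ Cc i j` a bipartite graph `Ge c i j`
with parts `Vc i`, `Vc j`.  The graph `G_c` of the collection is the union of the
`Ge c i j` over the edges `ij` of `R` whose colour cluster contains `c`. -/
structure GTemplate (V C : Type*) (r : ℕ) where
  R : SimpleGraph (Fin r)
  Vc : Fin r → Finset V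
  Cc : Fin r → Fin r → Finset C
  Ge : C → Fin r → Fin r → SimpleGraph V
  Cc_symm : ∀ i j, Cc i j = Cc j i
  Ge_symm : ∀ c i j, Ge c i j = Ge c j i
  Vc_disj : ∀ i j, i ≠ j → Disjoint (Vc i) (Vc j)
  Cc_support : ∀ i j, ¬ R.Adj i j → Cc i j = ∅
  Ge_support : ∀ c i j, c ∉ Cc i j → Ge c i j = ⊥
  Ge_bipartite : ∀ c i j x y, (Ge c i j).Adj x y →
    (x ∈ Vc i ∧ y ∈ Vc j) ∨ (x ∈ Vc j ∧ y ∈ Vc i)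

namespace GTemplate

variable {V C : Type*} {r : ℕ}

/-- The graph `G_c` of the template: the union of the bipartite pieces. -/
noncomputable def Gc (T : GTemplate V C r) (c : C) : SimpleGraph V :=
  ⨆ i, ⨆ j, T.Ge c i j

/-- `T` is an `R`-template with parameters `(m, ε, d, δ)`. -/
def IsParam (T : GTemplate V C r) (m ε d δ : ℝ) : Prop :=
  (∀ j, m ≤ ((T.Vc j).card : ℝ) ∧ ((T.Vc j).card : ℝ) ≤ m / δ) ∧
  (∀ i j, T.R.Adj i j → δ * m ≤ ((T.Cc i j).card : ℝ)) ∧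
  (∀ i j, T.R.Adj i j →
    ColReg ε d (fun c => T.Ge c i j) (T.Vc i) (T.Vc j) (T.Cc i j))

/-- `T` is a super `R`-template with parameters `(m, ε, d, δ)`. -/
def IsSuperParam (T : GTemplate V C r) (m ε d δ : ℝ) : Prop :=
  (∀ j, m ≤ ((T.Vc j).card : ℝ) ∧ ((T.Vc j).card : ℝ) ≤ m / δ) ∧
  (∀ i j, T.R.Adj i j → δ * m ≤ ((T.Cc i j).card : ℝ)) ∧
  (∀ i j, T.R.Adj i j →
    ColSuperReg ε d (fun c => T.Ge c i j) (T.Vc i) (T.Vc j) (T.Cc i j))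

/-- `T` is a half-super `R`-template with parameters `(m, ε, d, δ)`. -/
def IsHalfSuperParam (T : GTemplate V C r) (m ε d δ : ℝ) : Prop :=
  (∀ j, m ≤ ((T.Vc j).card : ℝ) ∧ ((T.Vc j).card : ℝ) ≤ m / δ) ∧
  (∀ i j, T.R.Adj i j → δ * m ≤ ((T.Cc i j).card : ℝ)) ∧
  (∀ i j, T.R.Adj i j →
    ColHalfSuperReg ε d (fun c => T.Ge c i j) (T.Vc i) (T.Vc j) (T.Cc i j))

/-- `T` is a semi-super `R`-template with parameters `(m, ε, d, δ)`. -/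
def IsSemiSuperParam (T : GTemplate V C r) (m ε d δ : ℝ) : Prop :=
  T.IsParam m ε d δ ∧
  ∀ i j, T.R.Adj i j →
    (∀ v ∈ T.Vc i, d * ((T.Vc j).card : ℝ) * ((T.Cc i j).card : ℝ) ≤
      ∑ c ∈ T.Cc i j, (degIn (T.Ge c i j) v (T.Vc j) : ℝ)) ∧
    (∀ v ∈ T.Vc j, d * ((T.Vc i).card : ℝ) * ((T.Cc i j).card : ℝ) ≤
      ∑ c ∈ T.Cc i j, (degIn (T.Ge c i j) v (T.Vc i) : ℝ))

/-- The template is rainbow: the colour clusters are pairwise disjoint. -/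
def Rainbow (T : GTemplate V C r) : Prop :=
  ∀ i j k l, T.R.Adj i j → T.R.Adj k l → s(i, j) ≠ s(k, l) →
    Disjoint (T.Cc i j) (T.Cc k l)

/-- Adjacency in the `l`-thick graph of the template, between clusters `i` and `j`. -/
def ThickAdj (T : GTemplate V C r) (l : ℝ) (i j : Fin r) (x y : V) : Prop :=
  l * ((T.Cc i j).card : ℝ) ≤
    (((T.Cc i j).filter (fun c => (T.Ge c i j).Adj x y)).card : ℝ)

end GTemplate

/-!
Density makes the hypergraph *typical*: for all large `B` and `P`, almost every vertex forms
`P`-thick pairs (pairs lying in edges with many vertices of `P`) with a positive fraction of `B`.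
Hence the vertices of `H` can be embedded greedily with all edges of `H` going to thick pairs,
after which the expansion vertices are chosen one by one. This settles graphs `H` with few edges.

If `H` has many edges, the copy may have to use all of `V`. Separability provides a small set of
components of `H - X` that still spans many edges. A linear number of these edges, far apart, are
sent to the pairs `p i` of an absorber, which can be completed by distinct vertices whatever
vertices are left over in its clusters `A j`. So the rest of `H` can be embedded greedily into the
clusters, component by component, and the reserved edges are completed last.

In the absorber a cluster vertex does not complete a pair of its cluster directly: it replaces the
apex of one of many randomly chosen flexible triples, and the freed apex completes the pair. A
vertex outside the clusters is the fixed completion of a pair of its own, which exists by the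
minimum degree condition.
-/

/-! ### Thick pairs and typical vertices -/

section Thick

variable {V : Type*} {E : Set (Finset V)} {c t : ℝ} {P : Finset V}

/-- The link of the pair `e` in `P`: the vertices of `P` completing `e` to an edge of the 3-graph
`E`. Pairs are unordered (`Sym2`), so that symmetry in the two vertices is automatic. -/
noncomputable def link (E : Set (Finset V)) (P : Finset V) (e : Sym2 V) : Finset V :=
  {z ∈ P | insert z e.toFinset ∈ E}

/-- The pair `e` is `P`-thick if it forms an edge with at least a `c`-fraction of `P`. Thick pairs
are the ones on which an edge of the host graph may be placed: its expansion vertex can then be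
chosen in `P` in many ways. -/
def IsThick (E : Set (Finset V)) (c : ℝ) (P : Finset V) (e : Sym2 V) : Prop :=
  c * #P ≤ #(link E P e)

/-- Typicality with parameter `c` and threshold `t`: for all `B`, `P` of size at least `t`, all but
at most `t` vertices form `P`-thick pairs with at least a `c`-fraction of `B`. This is all that the
embedding uses of the density condition. -/
def IsTypical [Fintype V] (E : Set (Finset V)) (c t : ℝ) : Prop :=
  ∀ B P : Finset V, t ≤ #B → t ≤ #P →
    (#{x | (#{y ∈ B | IsThick E c P s(x, y)} : ℝ) < c * #B} : ℝ) ≤ t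

lemma insert_toFinset_mk (x y z : V) : insert z s(x, y).toFinset = {x, y, z} := by
  grind [Sym2.mem_toFinset]

lemma tripCount_eq_sum_card_link (A B P : Finset V) :
    tripCount E A B P = ∑ x ∈ A, ∑ y ∈ B, #(link E P s(x, y)) := by
  simp only [tripCount, link, card_filter, sum_product, insert_toFinset_mk]

lemma sum_card_link_le (hc : 0 ≤ c) (B : Finset V) (x : V) :
    (∑ y ∈ B, #(link E P s(x, y)) : ℝ) ≤
      (#{y ∈ B | IsThick E c P s(x, y)} + c * #B) * #P := by
  have hle : ∀ y ∈ B, (#(link E P s(x, y)) : ℝ) ≤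
      (if IsThick E c P s(x, y) then (#P : ℝ) else 0) + c * #P := by
    intro y _
    split_ifs with h
    · have : (#(link E P s(x, y)) : ℝ) ≤ #P := mod_cast card_filter_le _ _
      exact this.trans (le_add_of_nonneg_right (by positivity))
    · exact (not_le.1 h).le.trans_eq (zero_add _).symm
  calc (∑ y ∈ B, #(link E P s(x, y)) : ℝ)
      ≤ ∑ y ∈ B, ((if IsThick E c P s(x, y) then (#P : ℝ) else 0) + c * #P) := sum_le_sum hle
    _ = (#{y ∈ B | IsThick E c P s(x, y)} + c * #B) * #P := by
      rw [sum_add_distrib, ← sum_filter, sum_const, sum_const, nsmul_eq_mul, nsmul_eq_mul]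
      ring

lemma IsTypical.nonneg [Fintype V] (hE : IsTypical E c t) : 0 ≤ t := by
  by_contra! ht
  exact ((Nat.cast_nonneg _).trans (hE ∅ ∅ (by simpa using ht.le) (by simpa using ht.le))).not_gt ht

theorem isTypical_of_dense [Fintype V] {d δ : ℝ} (hd : 0 < d) (ht : 0 < t) (hδ : δ < d / 2 * t ^ 3)
    (hdense : ∀ U₁ U₂ U₃ : Finset V, d * #U₁ * #U₂ * #U₃ - δ ≤ (tripCount E U₁ U₂ U₃ : ℝ)) :
    IsTypical E (d / 4) t := by
  intro B P hB hP
  set A : Finset V := {x | (#{y ∈ B | IsThick E (d / 4) P s(x, y)} : ℝ) < d / 4 * #B} with hA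
  by_contra! htA
  have hupper : (tripCount E A B P : ℝ) ≤ #A * (d / 2 * #B * #P) := by
    rw [tripCount_eq_sum_card_link, ← nsmul_eq_mul]
    push_cast
    refine sum_le_card_nsmul _ _ _ fun x hx =>
      (sum_card_link_le (c := d / 4) (by positivity) B x).trans ?_
    refine mul_le_mul_of_nonneg_right ?_ (Nat.cast_nonneg _)
    linarith [(mem_filter.1 hx).2]
  have hlower := hdense A B P
  have hvol : d / 2 * (t * t * t) ≤ d / 2 * (#A * #B * #P) := by gcongr
  linarith

end Thick

/-! ### Embedding vertices on thick pairs -/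

section VertexEmbedding

variable {V W : Type*} {E : Set (Finset V)} {c t : ℝ} {H : SimpleGraph W} {Δ : ℕ}

/-- The vertices of `C` that remain available for `w` once the vertices of `D` are placed by `φ`:
those forming `T s(x, w)`-thick pairs with the image of every neighbour `x ∈ D` of `w`. -/
noncomputable def candidates (E : Set (Finset V)) (c : ℝ) (H : SimpleGraph W) (D : Finset W)
    (φ : W → V) (T : Sym2 W → Finset V) (C : Finset V) (w : W) : Finset V :=
  {v ∈ C | ∀ x ∈ D, H.Adj x w → IsThick E c (T s(x, w)) s(φ x, v)}

lemma mem_candidates {D : Finset W} {φ : W → V} {T : Sym2 W → Finset V} {C : Finset V} {w : W}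
    {v : V} : v ∈ candidates E c H D φ T C w ↔
      v ∈ C ∧ ∀ x ∈ D, H.Adj x w → IsThick E c (T s(x, w)) s(φ x, v) :=
  mem_filter

lemma candidates_subset {D : Finset W} {φ : W → V} {T : Sym2 W → Finset V} {C : Finset V}
    {w : W} : candidates E c H D φ T C w ⊆ C :=
  filter_subset _ _

lemma candidates_congr {D : Finset W} {φ φ' : W → V} (h : Set.EqOn φ φ' D) {T : Sym2 W → Finset V}
    {C : Finset V} {w : W} : candidates E c H D φ T C w = candidates E c H D φ' T C w :=
  filter_congr fun v _ => forall₂_congr fun x hx => by rw [h hx]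

lemma candidates_insert {D : Finset W} {a : W} {φ : W → V} {T : Sym2 W → Finset V}
    {C : Finset V} {w : W} : candidates E c H (insert a D) φ T C w =
      candidates E c H D φ T (candidates E c H {a} φ T C w) w := by
  ext v
  simp only [mem_candidates, forall_mem_insert, mem_singleton, forall_eq, and_assoc]

/-- The edges of `H` with both endpoints in `D`. -/
noncomputable def edgesIn [Fintype W] (H : SimpleGraph W) (D : Finset W) : Finset (Sym2 W) :=
  {e | e ∈ H.edgeSet ∧ ∀ x ∈ e, x ∈ D}

lemma mk_mem_edgesIn [Fintype W] {D : Finset W} {x y : W} :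
    s(x, y) ∈ edgesIn H D ↔ H.Adj x y ∧ x ∈ D ∧ y ∈ D := by
  simp [edgesIn]

lemma mem_of_mem_edgesIn [Fintype W] {D : Finset W} {e : Sym2 W} {x : W} (he : e ∈ edgesIn H D)
    (hx : x ∈ e) : x ∈ D :=
  (mem_filter.1 he).2.2 x hx

lemma edgesIn_mono [Fintype W] {D D' : Finset W} (h : D ⊆ D') : edgesIn H D ⊆ edgesIn H D' :=
  monotone_filter_right _ fun _ _ he => ⟨he.1, fun x hx => h (he.2 x hx)⟩

lemma mem_edgesIn_or_exists_of_mem_union_sdiff [Fintype W] {D K : Finset W} {e : Sym2 W}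
    (he : e ∈ edgesIn H (D ∪ K) \ edgesIn H D) :
    e ∈ edgesIn H K ∨ ∃ x ∈ D, ∃ y ∈ K, H.Adj x y ∧ e = s(x, y) := by
  induction e with | _ x y => ?_
  simp only [mem_sdiff, mk_mem_edgesIn, mem_union, not_and] at he ⊢
  obtain ⟨⟨hxy, hx | hx, hy | hy⟩, hne⟩ := he
  · exact absurd hy (hne hxy hx)
  · exact .inr ⟨x, hx, y, hy, hxy, rfl⟩
  · exact .inr ⟨y, hy, x, hx, hxy.symm, Sym2.eq_swap⟩
  · exact .inl ⟨hxy, hx, hy⟩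

lemma card_filter_adj_le [Fintype W] (hdeg : ∀ w, degOf H w ≤ Δ) (K : Finset W) (w : W) :
    #{x ∈ K | H.Adj x w} ≤ Δ :=
  (card_le_card fun _ hx => by simpa using (mem_filter.1 hx).2.symm).trans (hdeg w)

lemma card_edgesIn_union_sdiff_le [Fintype W] (hdeg : ∀ w, degOf H w ≤ Δ) (D K : Finset W) :
    #(edgesIn H (D ∪ K) \ edgesIn H D) ≤ Δ * #K := by
  have hsub : edgesIn H (D ∪ K) \ edgesIn H D ⊆
      K.biUnion fun w => image (fun x => s(w, x)) {x | H.Adj w x} := by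
    intro e he
    induction e with | _ x y => ?_
    simp only [mem_sdiff, mk_mem_edgesIn, mem_union] at he
    simp only [mem_biUnion, mem_image, mem_filter, mem_univ, true_and]
    by_cases hxK : x ∈ K
    · exact ⟨x, hxK, y, he.1.1, rfl⟩
    · exact ⟨y, by tauto, x, he.1.1.symm, Sym2.eq_swap⟩
  calc #(edgesIn H (D ∪ K) \ edgesIn H D) ≤ #K * Δ :=
        (card_le_card hsub).trans (card_biUnion_le_card_mul _ _ _ fun w _ =>
          card_image_le.trans (hdeg w))
    _ = Δ * #K := mul_comm _ _

lemma thick_embedding_update {T : Sym2 W → Finset V} {C : W → Finset V} {F : Finset V}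
    {K : Finset W} {a : W} (ha : a ∉ K) {v : V} (hvC : v ∈ C a) (hvF : v ∉ F) {φ : W → V}
    (hinj : Set.InjOn φ K)
    (hmem : ∀ w ∈ K, φ w ∈ candidates E c H {a} (fun _ => v) T (C w) w ∧ φ w ∉ insert v F)
    (hthick : ∀ x ∈ K, ∀ y ∈ K, H.Adj x y → IsThick E c (T s(x, y)) s(φ x, φ y)) :
    Set.InjOn (Function.update φ a v) (insert a K : Finset W) ∧
      (∀ w ∈ insert a K, Function.update φ a v w ∈ C w ∧ Function.update φ a v w ∉ F) ∧
      ∀ x ∈ insert a K, ∀ y ∈ insert a K, H.Adj x y →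
        IsThick E c (T s(x, y)) s(Function.update φ a v x, Function.update φ a v y) := by
  simp only [mem_candidates, mem_singleton, forall_eq, mem_insert, not_or] at hmem
  have hφ : Set.EqOn (Function.update φ a v) φ K := fun x hx =>
    Function.update_of_ne (ne_of_mem_of_not_mem hx ha) _ _
  refine ⟨?_, ?_, ?_⟩
  · rw [coe_insert, Set.injOn_insert ha, Function.update_self]
    refine ⟨hinj.congr hφ.symm, ?_⟩
    rintro ⟨x, hx, hxv⟩
    exact (hmem x hx).2.1 (by rw [← hφ hx, hxv])
  · simp only [forall_mem_insert, Function.update_self]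
    exact ⟨⟨hvC, hvF⟩, fun w hw => by
      rw [hφ hw]; exact ⟨(hmem w hw).1.1, (hmem w hw).2.2⟩⟩
  · simp only [forall_mem_insert, Function.update_self]
    refine ⟨⟨fun h => (H.irrefl h).elim, fun y hy h => ?_⟩, fun x hx => ⟨fun h => ?_,
      fun y hy => ?_⟩⟩
    · rw [hφ hy]; exact (hmem y hy).1.2 h
    · rw [hφ hx, Sym2.eq_swap, Sym2.eq_swap (a := φ x)]; exact (hmem x hx).1.2 h.symm
    · rw [hφ hx, hφ hy]; exact hthick x hx y hy

variable [Fintype V] [Fintype W]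

lemma IsTypical.exists_image (hE : IsTypical E c t) (hdeg : ∀ w, degOf H w ≤ Δ)
    {T : Sym2 W → Finset V} (hT : ∀ e, t ≤ #(T e)) {C : W → Finset V} (hC : ∀ w, t ≤ #(C w))
    (F : Finset V) {a : W} (ha : Δ * t + #(F ∩ C a) < #(C a)) :
    ∃ v ∈ C a, v ∉ F ∧ ∀ w, H.Adj a w →
      c * #(C w) ≤ (#{u ∈ C w | IsThick E c (T s(a, w)) s(v, u)} : ℝ) := by
  let bad (w : W) : Finset V :=
    {v | (#{u ∈ C w | IsThick E c (T s(a, w)) s(v, u)} : ℝ) < c * #(C w)}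
  let N : Finset W := {w | H.Adj a w}
  have ht : ∀ w, (#(bad w) : ℝ) ≤ t := fun w => hE _ _ (hC w) (hT _)
  have hbad : (#(N.biUnion bad) : ℝ) ≤ Δ * t :=
    calc (#(N.biUnion bad) : ℝ) ≤ ∑ w ∈ N, (#(bad w) : ℝ) := mod_cast card_biUnion_le
      _ ≤ #N * t := by rw [← nsmul_eq_mul]; exact sum_le_card_nsmul _ _ _ fun w _ => ht w
      _ ≤ Δ * t := by
        have := hE.nonneg
        gcongr
        exact hdeg a
  have hcard : #(N.biUnion bad ∪ (F ∩ C a)) < #(C a) := by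
    have hunion : (#(N.biUnion bad ∪ (F ∩ C a)) : ℝ) ≤ #(N.biUnion bad) + #(F ∩ C a) :=
      mod_cast card_union_le _ _
    have : (#(N.biUnion bad ∪ (F ∩ C a)) : ℝ) < #(C a) := by linarith
    exact_mod_cast this
  obtain ⟨v, hv, hv'⟩ := exists_mem_notMem_of_card_lt_card hcard
  simp only [mem_union, mem_biUnion, mem_inter, not_or, not_exists, not_and] at hv'
  refine ⟨v, hv, fun hF => hv'.2 hF hv, fun w hw => ?_⟩
  simpa [bad] using hv'.1 w (by simpa [N] using hw)

-- Embedding `a` first costs a factor `c` in the candidate set of each of its neighbours.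
theorem IsTypical.exists_thick_embedding_pow [Nonempty V] (hE : IsTypical E c t) (hc : 0 ≤ c)
    (hc1 : c ≤ 1) (hdeg : ∀ w, degOf H w ≤ Δ) {T : Sym2 W → Finset V} (hT : ∀ e, t ≤ #(T e))
    (K : Finset W) (F : Finset V) (C : W → Finset V)
    (hC : ∀ w, t ≤ c ^ #{x ∈ K | H.Adj x w} * #(C w))
    (hK : ∀ w ∈ K, Δ * t + #K + #(F ∩ C w) < c ^ #{x ∈ K | H.Adj x w} * #(C w)) :
    ∃ φ : W → V, Set.InjOn φ K ∧ (∀ w ∈ K, φ w ∈ C w ∧ φ w ∉ F) ∧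
      (∀ x ∈ K, ∀ y ∈ K, H.Adj x y → IsThick E c (T s(x, y)) s(φ x, φ y)) ∧
      ∀ w, w ∉ K → c ^ #{x ∈ K | H.Adj x w} * #(C w) ≤ #(candidates E c H K φ T (C w) w) := by
  induction K using Finset.induction_on generalizing F C with
  | empty => exact ⟨fun _ => Classical.arbitrary V, by simp [candidates]⟩
  | insert a K ha ih =>
    have hCle (w : W) : c ^ #{x ∈ insert a K | H.Adj x w} * #(C w) ≤ (#(C w) : ℝ) :=
      mul_le_of_le_one_left (Nat.cast_nonneg _) (pow_le_one₀ hc hc1)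
    obtain ⟨v, hvC, hvF, hv⟩ := hE.exists_image hdeg hT (fun w => (hC w).trans (hCle w)) F
      (a := a) (by
        have hKa := (hK a (mem_insert_self _ _)).trans_le (hCle a)
        linarith [(#(insert a K)).cast_nonneg (α := ℝ)])
    let C' (w : W) : Finset V := candidates E c H {a} (fun _ => v) T (C w) w
    have hC' (w : W) : c ^ #{x ∈ insert a K | H.Adj x w} * (#(C w) : ℝ) ≤
        c ^ #{x ∈ K | H.Adj x w} * #(C' w) := by
      by_cases h : H.Adj a w
      · rw [filter_insert, if_pos h, card_insert_of_notMem (by simp [ha]), pow_succ, mul_assoc]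
        gcongr
        simpa only [C', candidates, mem_singleton, forall_eq, h, true_imp_iff] using hv w h
      · simp [C', candidates, filter_insert, h]
    obtain ⟨φ, hinj, hmem, hthick, hcand⟩ := ih (insert v F) C' (fun w => (hC w).trans (hC' w))
      fun w hw => by
        have h₁ := (hK w (mem_insert_of_mem hw)).trans_le (hC' w)
        have h₂ : #(insert v F ∩ C' w) ≤ #(F ∩ C w) + 1 :=
          (card_le_card (s := insert v F ∩ C' w) (t := insert v (F ∩ C w)) (by
            have := candidates_subset (E := E) (c := c) (H := H) (D := {a}) (φ := fun _ => v)
              (T := T) (C := C w) (w := w)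
            grind)).trans (card_insert_le v _)
        rw [card_insert_of_notMem ha] at h₁
        have h₃ : (#(insert v F ∩ C' w) : ℝ) ≤ #(F ∩ C w) + 1 := mod_cast h₂
        push_cast at h₁
        linarith
    have hφ : Set.EqOn (Function.update φ a v) φ K := fun x hx =>
      Function.update_of_ne (ne_of_mem_of_not_mem hx ha) _ _
    obtain ⟨hinj', hmem', hthick'⟩ := thick_embedding_update ha hvC hvF hinj hmem hthick
    refine ⟨Function.update φ a v, hinj', hmem', hthick', fun w hw => (hC' w).trans ?_⟩
    rw [candidates_insert, candidates_congr hφ,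
      candidates_congr (φ' := fun _ => v) (D := {a}) (by simp)]
    exact hcand w fun h => hw (mem_insert_of_mem h)

theorem IsTypical.exists_thick_embedding [Nonempty V] (hE : IsTypical E c t) (hc : 0 ≤ c)
    (hc1 : c ≤ 1) (hdeg : ∀ w, degOf H w ≤ Δ) {T : Sym2 W → Finset V} (hT : ∀ e, t ≤ #(T e))
    (K : Finset W) (F : Finset V) {C : W → Finset V} (hC : ∀ w, t ≤ c ^ Δ * #(C w))
    (hK : ∀ w ∈ K, Δ * t + #K + #(F ∩ C w) < c ^ Δ * #(C w)) :
    ∃ φ : W → V, Set.InjOn φ K ∧ (∀ w ∈ K, φ w ∈ C w ∧ φ w ∉ F) ∧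
      (∀ x ∈ K, ∀ y ∈ K, H.Adj x y → IsThick E c (T s(x, y)) s(φ x, φ y)) ∧
      ∀ w, w ∉ K → c ^ Δ * #(C w) ≤ #(candidates E c H K φ T (C w) w) := by
  have hpow (w : W) : c ^ Δ * (#(C w) : ℝ) ≤ c ^ #{x ∈ K | H.Adj x w} * #(C w) := by
    gcongr ?_ * _
    exact pow_le_pow_of_le_one hc hc1 (card_filter_adj_le hdeg K w)
  obtain ⟨φ, hinj, hmem, hthick, hcand⟩ := hE.exists_thick_embedding_pow hc hc1 hdeg hT K F C
    (fun w => (hC w).trans (hpow w)) (fun w hw => (hK w hw).trans_le (hpow w))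
  exact ⟨φ, hinj, hmem, hthick, fun w hw => (hpow w).trans (hcand w hw)⟩

end VertexEmbedding

/-! ### Extending partial expansions -/

section Extension

variable {V W : Type*} {E : Set (Finset V)} {c t : ℝ} {H : SimpleGraph W} {Δ : ℕ}

lemma exists_injOn_mem_of_card_le [Nonempty V] {ι : Type*} {I : Finset ι} {F : ι → Finset V}
    (h : ∀ i ∈ I, #I ≤ #(F i)) : ∃ g : ι → V, Set.InjOn g I ∧ ∀ i ∈ I, g i ∈ F i := by
  have hall : ∀ S : Finset I, #S ≤ #(S.biUnion fun i => F i) := by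
    intro S
    obtain rfl | ⟨i, hi⟩ := S.eq_empty_or_nonempty
    · simp
    · calc #S ≤ #I := by simpa using card_le_univ S
        _ ≤ #(F i) := h i i.2
        _ ≤ _ := card_le_card (subset_biUnion_of_mem (fun i : I => F i) hi)
  obtain ⟨g, hinj, hmem⟩ := (all_card_le_biUnion_card_iff_exists_injective _).1 hall
  refine ⟨fun i => if hi : i ∈ I then g ⟨i, hi⟩ else Classical.arbitrary V, ?_, fun i hi => ?_⟩
  · intro i hi j hj hij
    rw [mem_coe] at hi hj
    simpa [hi, hj, hinj.eq_iff] using hij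
  · simpa [hi] using hmem ⟨i, hi⟩

variable [Fintype W]

/-- The vertices of the 1-expansion of `H[D]`: the vertices in `D` (`Sum.inl`) and one expansion
vertex for each edge of `H` inside `D` (`Sum.inr`). -/
noncomputable def expVerts (H : SimpleGraph W) (D : Finset W) : Finset (W ⊕ Sym2 W) :=
  D.disjSum (edgesIn H D)

/-- `ρ` restricts to a copy of the 1-expansion of `H[D]` in the 3-graph `E`. The map `ρ` is total;
its values outside `expVerts H D` are irrelevant. -/
def IsExpansionOn (E : Set (Finset V)) (H : SimpleGraph W) (D : Finset W) (ρ : W ⊕ Sym2 W → V) :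
    Prop :=
  Set.InjOn ρ (expVerts H D) ∧
    ∀ e ∈ edgesIn H D, insert (ρ (Sum.inr e)) (e.map (ρ ∘ Sum.inl)).toFinset ∈ E

@[simp] lemma inl_mem_expVerts {D : Finset W} {w : W} : Sum.inl w ∈ expVerts H D ↔ w ∈ D :=
  inl_mem_disjSum

@[simp] lemma inr_mem_expVerts {D : Finset W} {e : Sym2 W} :
    Sum.inr e ∈ expVerts H D ↔ e ∈ edgesIn H D :=
  inr_mem_disjSum

lemma expVerts_mono {D D' : Finset W} (h : D ⊆ D') : expVerts H D ⊆ expVerts H D' :=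
  disjSum_mono h (edgesIn_mono h)

lemma card_expVerts_univ : #(expVerts H univ) = Fintype.card W + edgeCnt H := by
  simp [expVerts, edgesIn, edgeCnt, card_disjSum]

lemma IsExpansionOn.hasExpansionCopy {ρ : W ⊕ Sym2 W → V} (h : IsExpansionOn E H univ ρ) :
    HasExpansionCopy E H := by
  have hmem {e : Sym2 W} (he : e ∈ H.edgeSet) : e ∈ edgesIn H univ := by simp [edgesIn, he]
  refine ⟨ρ ∘ Sum.inl, ρ ∘ Sum.inr, ?_, ?_, ?_, ?_⟩
  · exact fun x y hxy => Sum.inl_injective (h.1 (by simp) (by simp) hxy)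
  · exact fun e he f hf hef => Sum.inr_injective (h.1 (by simp [hmem he]) (by simp [hmem hf]) hef)
  · exact fun x e he hxe => Sum.inl_ne_inr (h.1 (by simp) (by simp [hmem he]) hxe)
  · intro x y hxy
    rw [← insert_toFinset_mk]
    exact h.2 s(x, y) (hmem hxy)

lemma expVerts_union_sdiff {D K : Finset W} (hDK : Disjoint D K) :
    expVerts H (D ∪ K) \ expVerts H D = K.disjSum (edgesIn H (D ∪ K) \ edgesIn H D) := by
  ext (w | e)
  · have : w ∈ D → w ∉ K := fun hw => disjoint_left.1 hDK hw
    simp only [mem_sdiff, inl_mem_expVerts, mem_union, inl_mem_disjSum]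
    tauto
  · simp

lemma IsExpansionOn.congr {D : Finset W} {ρ ρ' : W ⊕ Sym2 W → V} (h : IsExpansionOn E H D ρ)
    (heq : Set.EqOn ρ' ρ (expVerts H D)) : IsExpansionOn E H D ρ' := by
  refine ⟨h.1.congr heq.symm, fun e he => ?_⟩
  have hmap : e.map (ρ' ∘ Sum.inl) = e.map (ρ ∘ Sum.inl) :=
    Sym2.map_congr fun x hx => heq (by simpa using mem_of_mem_edgesIn he hx)
  rw [hmap, heq (by simpa using he)]
  exact h.2 e he

lemma IsExpansionOn.of_expVerts_subset {H' : SimpleGraph W} {D D' : Finset W}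
    (hsub : expVerts H D ⊆ expVerts H' D') {ρ : W ⊕ Sym2 W → V} {F : Finset V}
    (h : IsExpansionOn E H D ρ) (hF : ∀ i ∈ expVerts H D, ρ i ∈ F)
    (hinj : Set.InjOn ρ (expVerts H' D' \ expVerts H D : Finset _))
    (hnew : ∀ i ∈ expVerts H' D' \ expVerts H D, ρ i ∉ F)
    (hlink : ∀ e ∈ edgesIn H' D' \ edgesIn H D,
      insert (ρ (Sum.inr e)) (e.map (ρ ∘ Sum.inl)).toFinset ∈ E) :
    IsExpansionOn E H' D' ρ := by
  refine ⟨?_, fun e he => ?_⟩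
  · rw [← union_sdiff_of_subset hsub, coe_union, Set.injOn_union (disjoint_coe.2 disjoint_sdiff)]
    exact ⟨h.1, hinj, fun i hi j hj hij => hnew j hj (hij ▸ hF i hi)⟩
  · by_cases heD : e ∈ edgesIn H D
    · exact h.2 e heD
    · exact hlink e (mem_sdiff.2 ⟨he, heD⟩)

lemma injOn_disjSum {ι κ : Type*} {I : Finset ι} {J : Finset κ} {f : ι ⊕ κ → V}
    (hI : Set.InjOn (f ∘ Sum.inl) I) (hJ : Set.InjOn (f ∘ Sum.inr) J)
    (hne : ∀ j ∈ J, f (Sum.inr j) ∉ I.image (f ∘ Sum.inl)) : Set.InjOn f (I.disjSum J) := by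
  have hne' : ∀ i ∈ I, ∀ j ∈ J, f (Sum.inl i) ≠ f (Sum.inr j) := fun i hi j hj h =>
    hne j hj (h ▸ mem_image_of_mem (f ∘ Sum.inl) hi)
  rintro (i | j) hx (i' | j') hy h <;>
    simp only [mem_coe, inl_mem_disjSum, inr_mem_disjSum] at hx hy
  · exact congrArg _ (hI hx hy h)
  · exact (hne' i hx j' hy h).elim
  · exact (hne' i' hy j hx h.symm).elim
  · exact congrArg _ (hJ hx hy h)

lemma isThick_map_of_union {A : Sym2 W → Finset V} {D K : Finset W} {φ : W → V}
    (hK : ∀ x ∈ K, ∀ y ∈ K, H.Adj x y → IsThick E c (A s(x, y)) s(φ x, φ y))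
    (hDK : ∀ x ∈ D, ∀ y ∈ K, H.Adj x y → IsThick E c (A s(x, y)) s(φ x, φ y)) :
    ∀ e ∈ edgesIn H (D ∪ K) \ edgesIn H D, IsThick E c (A e) (e.map φ) := by
  intro e he
  obtain he | ⟨x, hx, y, hy, hxy, rfl⟩ := mem_edgesIn_or_exists_of_mem_union_sdiff he
  · induction e with | _ x y => ?_
    obtain ⟨hxy, hx, hy⟩ := mk_mem_edgesIn.1 he
    exact hK x hx y hy hxy
  · exact hDK x hx y hy hxy

lemma exists_expansion_vertices [Nonempty V] (hdeg : ∀ w, degOf H w ≤ Δ) {A : Sym2 W → Finset V}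
    {D K : Finset W} {F : Finset V} {φ : W → V}
    (hthick : ∀ e ∈ edgesIn H (D ∪ K) \ edgesIn H D, IsThick E c (A e) (e.map φ))
    (hcol : ∀ e ∈ edgesIn H (D ∪ K) \ edgesIn H D,
      #(F ∩ A e) + (Δ + 1) * (#K : ℝ) ≤ c * #(A e)) :
    ∃ g : Sym2 W → V, Set.InjOn g (edgesIn H (D ∪ K) \ edgesIn H D : Finset _) ∧
      ∀ e ∈ edgesIn H (D ∪ K) \ edgesIn H D,
        g e ∈ link E (A e) (e.map φ) ∧ g e ∉ F ∧ g e ∉ K.image φ := by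
  obtain ⟨g, hinj, hg⟩ := exists_injOn_mem_of_card_le (I := edgesIn H (D ∪ K) \ edgesIn H D)
    (F := fun e => link E (A e) (e.map φ) \ (F ∩ A e ∪ K.image φ)) fun e he => by
      have hnew : (#(edgesIn H (D ∪ K) \ edgesIn H D) : ℝ) ≤ Δ * #K :=
        mod_cast card_edgesIn_union_sdiff_le hdeg D K
      have hforb : (#(F ∩ A e ∪ K.image φ) : ℝ) ≤ #(F ∩ A e) + #K :=
        mod_cast (card_union_le _ _).trans (add_le_add_right card_image_le _)
      have hdiff : (#(link E (A e) (e.map φ)) : ℝ) ≤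
          #(F ∩ A e ∪ K.image φ) + #(link E (A e) (e.map φ) \ (F ∩ A e ∪ K.image φ)) := by
        exact_mod_cast card_le_card_sdiff_add_card.trans_eq (add_comm _ _)
      have := (hcol e he).trans (hthick e he)
      have : (#(edgesIn H (D ∪ K) \ edgesIn H D) : ℝ) ≤
        #(link E (A e) (e.map φ) \ (F ∩ A e ∪ K.image φ)) := by linarith
      exact_mod_cast this
  refine ⟨g, hinj, fun e he => ?_⟩
  have := hg e he
  simp only [mem_sdiff, mem_union, mem_inter, not_or, not_and] at this
  exact ⟨this.1, fun hF => this.2.1 hF (mem_filter.1 this.1).1, this.2.2⟩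

variable [Fintype V]

theorem IsTypical.exists_extend [Nonempty V] (hE : IsTypical E c t) (hc : 0 ≤ c) (hc1 : c ≤ 1)
    (hdeg : ∀ w, degOf H w ≤ Δ) {A : W ⊕ Sym2 W → Finset V} (hA : ∀ i, t ≤ c ^ Δ * #(A i))
    {D K : Finset W} (hDK : Disjoint D K) {F : Finset V} {ρ : W ⊕ Sym2 W → V}
    (hρ : IsExpansionOn E H D ρ) (hF : ∀ i ∈ expVerts H D, ρ i ∈ F)
    (hK : ∀ w ∈ K, Δ * t + #K + #(F ∩ A (Sum.inl w)) < c ^ Δ * #(A (Sum.inl w)))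
    (hadj : ∀ w ∈ K, ∀ v ∈ A (Sum.inl w), ∀ x ∈ D, H.Adj x w →
      IsThick E c (A (Sum.inr s(x, w))) s(ρ (Sum.inl x), v))
    (hcol : ∀ e ∈ edgesIn H (D ∪ K) \ edgesIn H D,
      #(F ∩ A (Sum.inr e)) + (Δ + 1) * (#K : ℝ) ≤ c * #(A (Sum.inr e))) :
    ∃ ρ' : W ⊕ Sym2 W → V, IsExpansionOn E H (D ∪ K) ρ' ∧ Set.EqOn ρ' ρ (expVerts H D) ∧
      (∀ i ∈ expVerts H (D ∪ K) \ expVerts H D, ρ' i ∈ A i ∧ ρ' i ∉ F) ∧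
      ∀ w, w ∉ K → c ^ Δ * #(A (Sum.inl w)) ≤
        #(candidates E c H K (ρ' ∘ Sum.inl) (A ∘ Sum.inr) (A (Sum.inl w)) w) := by
  obtain ⟨φ, hφinj, hφmem, hφthick, hφcand⟩ := hE.exists_thick_embedding hc hc1 hdeg
    (T := A ∘ Sum.inr) (fun e => (hA _).trans (mul_le_of_le_one_left (Nat.cast_nonneg _)
      (pow_le_one₀ hc hc1))) K F (fun w => hA (Sum.inl w)) hK
  let φ' : W → V := K.piecewise φ (ρ ∘ Sum.inl)
  have hφ' : Set.EqOn φ' φ K := fun x hx => piecewise_eq_of_mem _ _ _ hx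
  have hφ'D : Set.EqOn φ' (ρ ∘ Sum.inl) D := fun x hx =>
    K.piecewise_eq_of_notMem _ _ (disjoint_left.1 hDK hx)
  obtain ⟨g, hginj, hg⟩ := exists_expansion_vertices (φ := φ') hdeg
    (isThick_map_of_union
      (fun x hx y hy hxy => by rw [hφ' hx, hφ' hy]; exact hφthick x hx y hy hxy)
      fun x hx y hy hxy => by
        rw [hφ'D hx, hφ' hy]; exact hadj y hy _ (hφmem y hy).1 x hx hxy) hcol
  let ρ' : W ⊕ Sym2 W → V :=
    Sum.elim φ' ((edgesIn H (D ∪ K) \ edgesIn H D).piecewise g (ρ ∘ Sum.inr))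
  have hρ'e : ∀ e ∈ edgesIn H (D ∪ K) \ edgesIn H D, ρ' (Sum.inr e) = g e := fun e he =>
    piecewise_eq_of_mem _ _ _ he
  have heq : Set.EqOn ρ' ρ (expVerts H D) := by
    rintro (w | e) hi
    · exact hφ'D (by simpa using hi)
    · exact piecewise_eq_of_notMem _ _ _ fun he => (mem_sdiff.1 he).2 (by simpa using hi)
  have hnew : ∀ i ∈ expVerts H (D ∪ K) \ expVerts H D, ρ' i ∈ A i ∧ ρ' i ∉ F := by
    rw [expVerts_union_sdiff hDK]
    rintro (w | e) hi
    · rw [inl_mem_disjSum] at hi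
      rw [show ρ' (Sum.inl w) = φ w from hφ' hi]
      exact hφmem w hi
    · rw [inr_mem_disjSum] at hi
      rw [hρ'e e hi]
      exact ⟨(mem_filter.1 (hg e hi).1).1, (hg e hi).2.1⟩
  refine ⟨ρ', (hρ.congr heq).of_expVerts_subset (F := F)
    (expVerts_mono subset_union_left)
    (fun i hi => heq hi ▸ hF i hi) ?_ (fun i hi => (hnew i hi).2) (fun e he => ?_), heq, hnew,
    fun w hw => ?_⟩
  · rw [expVerts_union_sdiff hDK]
    refine injOn_disjSum (hφinj.congr hφ'.symm) (hginj.congr fun e he => (hρ'e e he).symm)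
      fun e he => ?_
    rw [hρ'e e he]
    exact (hg e he).2.2
  · rw [hρ'e e he]
    exact (mem_filter.1 (hg e he).1).2
  · rw [candidates_congr (show Set.EqOn (ρ' ∘ Sum.inl) φ K from hφ')]
    exact hφcand w hw

end Extension

/-! ### Pooled extensions -/

section Pooled

variable {V W J : Type*} [Fintype W] {E : Set (Finset V)} {c t : ℝ} {H : SimpleGraph W} {Δ : ℕ}
  {D₁ D K : Finset W} {ρ₁ ρ : W ⊕ Sym2 W → V} {P : J → Finset V} {f : W ⊕ Sym2 W → J}

/-- The part of the 1-expansion of `H` outside `H[D₁]` that is assigned to the pool `j` by `f`. -/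
noncomputable def assigned (H : SimpleGraph W) (D₁ : Finset W) (f : W ⊕ Sym2 W → J) (j : J) :
    Finset (W ⊕ Sym2 W) :=
  {i ∈ expVerts H univ \ expVerts H D₁ | f i = j}

lemma mem_assigned {i : W ⊕ Sym2 W} {j : J} : i ∈ assigned H D₁ f j ↔
    i ∈ expVerts H univ \ expVerts H D₁ ∧ f i = j :=
  mem_filter

/-- `ρ` extends the copy `ρ₁` of the 1-expansion of `H[D₁]` to one of `H[D]`, and every new vertex
`i` of the expansion is placed in its assigned pool `P (f i)`. -/
structure IsPooledExtension (E : Set (Finset V)) (H : SimpleGraph W) (D₁ : Finset W)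
    (ρ₁ : W ⊕ Sym2 W → V) (P : J → Finset V) (f : W ⊕ Sym2 W → J) (D : Finset W)
    (ρ : W ⊕ Sym2 W → V) : Prop where
  subset : D₁ ⊆ D
  isExpansionOn : IsExpansionOn E H D ρ
  eqOn : Set.EqOn ρ ρ₁ (expVerts H D₁)
  mem_pool : ∀ i ∈ expVerts H D \ expVerts H D₁, ρ i ∈ P (f i)

lemma IsPooledExtension.card_image_inter_le (h : IsPooledExtension E H D₁ ρ₁ P f D ρ)
    (hP : Pairwise (Function.onFun Disjoint P)) (hP₁ : ∀ i ∈ expVerts H D₁, ∀ j, ρ₁ i ∉ P j)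
    (j : J) : #((expVerts H D).image ρ ∩ P j) ≤ #(assigned H D₁ f j) := by
  refine (card_le_card fun v hv => ?_).trans (card_image_le (f := ρ))
  simp only [mem_inter, mem_image] at hv
  obtain ⟨⟨i, hi, rfl⟩, hj⟩ := hv
  have hi₁ : i ∉ expVerts H D₁ := fun hi₁ => hP₁ i hi₁ j (h.eqOn hi₁ ▸ hj)
  refine mem_image_of_mem ρ (mem_assigned.2
    ⟨mem_sdiff.2 ⟨expVerts_mono (subset_univ D) hi, hi₁⟩, ?_⟩)
  by_contra hne
  exact disjoint_left.1 (hP hne) (h.mem_pool i (mem_sdiff.2 ⟨hi, hi₁⟩)) hj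

lemma IsPooledExtension.le_card_sdiff (h : IsPooledExtension E H D₁ ρ₁ P f D ρ)
    (hP : Pairwise (Function.onFun Disjoint P)) (hP₁ : ∀ i ∈ expVerts H D₁, ∀ j, ρ₁ i ∉ P j)
    {A : Finset V} {j : J} {q : ℝ} (hA : A ⊆ P j) (hq : q + #(assigned H D₁ f j) ≤ #A) :
    q ≤ #(A \ (expVerts H D).image ρ) := by
  have hsplit : (#A : ℝ) = #((expVerts H D).image ρ ∩ A) + #(A \ (expVerts H D).image ρ) := by
    rw [inter_comm]
    exact_mod_cast (card_inter_add_card_sdiff A _).symm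
  have hused : (#((expVerts H D).image ρ ∩ A) : ℝ) ≤ #(assigned H D₁ f j) :=
    mod_cast (card_le_card (inter_subset_inter_left hA)).trans (h.card_image_inter_le hP hP₁ j)
  linarith

lemma IsPooledExtension.trans (h : IsPooledExtension E H D₁ ρ₁ P f D ρ) {D' : Finset W}
    {ρ' : W ⊕ Sym2 W → V} (hD : D ⊆ D') (hρ' : IsExpansionOn E H D' ρ')
    (heq : Set.EqOn ρ' ρ (expVerts H D))
    (hmem : ∀ i ∈ expVerts H D' \ expVerts H D, ρ' i ∈ P (f i)) :
    IsPooledExtension E H D₁ ρ₁ P f D' ρ' where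
  subset := h.subset.trans hD
  isExpansionOn := hρ'
  eqOn i hi := (heq (expVerts_mono h.subset hi)).trans (h.eqOn hi)
  mem_pool i hi := by
    by_cases hiD : i ∈ expVerts H D
    · rw [heq hiD]
      exact h.mem_pool i (mem_sdiff.2 ⟨hiD, (mem_sdiff.1 hi).2⟩)
    · exact hmem i (mem_sdiff.2 ⟨(mem_sdiff.1 hi).1, hiD⟩)

variable [Fintype V] [Nonempty V]

theorem IsPooledExtension.exists_union (h : IsPooledExtension E H D₁ ρ₁ P f D ρ)
    (hE : IsTypical E c t) (hc : 0 ≤ c) (hc1 : c ≤ 1) (hdeg : ∀ w, degOf H w ≤ Δ)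
    (hP : Pairwise (Function.onFun Disjoint P)) (hP₁ : ∀ i ∈ expVerts H D₁, ∀ j, ρ₁ i ∉ P j)
    {q m : ℝ} (hq : (Δ + 1) * t + m < c ^ Δ * q) (hm : (Δ + 1) * m ≤ c * q)
    (hpool : ∀ j, q + #(assigned H D₁ f j) ≤ #(P j))
    (hcand : ∀ w ∈ K, q + #(assigned H D₁ f (f (Sum.inl w))) ≤
      #(candidates E c H D₁ (ρ₁ ∘ Sum.inl) (P ∘ f ∘ Sum.inr) (P (f (Sum.inl w))) w))
    (hcross : ∀ x ∈ D₁, ∀ w ∈ K, H.Adj x w →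
      q + #(assigned H D₁ f (f (Sum.inr s(x, w)))) ≤ c * #(P (f (Sum.inr s(x, w)))))
    (hDK : Disjoint D K) (hKm : #K ≤ m) (hsep : ∀ x ∈ D, ∀ w ∈ K, H.Adj x w → x ∈ D₁) :
    ∃ ρ', IsPooledExtension E H D₁ ρ₁ P f (D ∪ K) ρ' := by
  have ht := hE.nonneg
  let F := (expVerts H D).image ρ
  let A : W ⊕ Sym2 W → Finset V := Sum.elim
    (fun w => if w ∈ K then candidates E c H D₁ (ρ₁ ∘ Sum.inl) (P ∘ f ∘ Sum.inr)
      (P (f (Sum.inl w))) w \ F else P (f (Sum.inl w)))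
    (fun e => if e ∈ edgesIn H K then P (f (Sum.inr e)) \ F else P (f (Sum.inr e)))
  have hAP (i) : A i ⊆ P (f i) := by
    rcases i with w | e <;> simp only [A, Sum.elim_inl, Sum.elim_inr] <;> split_ifs
    exacts [sdiff_subset.trans candidates_subset, subset_rfl, sdiff_subset, subset_rfl]
  have hqP (j : J) : q ≤ #(P j) := le_of_add_le_of_nonneg_left (hpool j) (Nat.cast_nonneg _)
  have hqA (i) : q ≤ #(A i) := by
    rcases i with w | e <;> simp only [A, Sum.elim_inl, Sum.elim_inr] <;> split_ifs with hK
    exacts [h.le_card_sdiff hP hP₁ candidates_subset (hcand w hK), hqP _,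
      h.le_card_sdiff hP hP₁ subset_rfl (hpool _), hqP _]
  have hqA' (i) : (Δ + 1) * t + m < c ^ Δ * #(A i) :=
    hq.trans_le (mul_le_mul_of_nonneg_left (hqA i) (by positivity))
  have hcross_notMem {x w} (hx : x ∈ D) : s(x, w) ∉ edgesIn H K := fun he =>
    disjoint_left.1 hDK hx (mk_mem_edgesIn.1 he).2.1
  have hq₀ : 0 < q := pos_of_mul_pos_right
    ((by positivity : 0 ≤ (Δ + 1) * t).trans_lt (by linarith [(#K).cast_nonneg (α := ℝ)]))
    (pow_nonneg hc Δ)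
  have hΔK : (Δ + 1) * (#K : ℝ) ≤ c * q := (mul_le_mul_of_nonneg_left hKm (by positivity)).trans hm
  obtain ⟨ρ', hρ', heq, hnew, -⟩ := hE.exists_extend hc hc1 hdeg (A := A)
    (fun i => by nlinarith [hqA' i]) hDK h.isExpansionOn (fun i => mem_image_of_mem ρ)
    (fun w hw => by
      have : F ∩ A (Sum.inl w) = ∅ := by simp [A, hw]
      rw [this, card_empty, Nat.cast_zero]
      linarith [hqA' (Sum.inl w)])
    (fun w hw v hv x hx hxw => by
      have hx₁ := hsep x hx w hw hxw
      simp only [A, Sum.elim_inl, if_pos hw, Sum.elim_inr, if_neg (hcross_notMem hx)] at hv ⊢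
      rw [h.eqOn (by simpa using hx₁)]
      exact (mem_candidates.1 (mem_sdiff.1 hv).1).2 x hx₁ hxw)
    (fun e he => by
      obtain heK | ⟨x, hx, w, hw, hxw, rfl⟩ := mem_edgesIn_or_exists_of_mem_union_sdiff he
      · have : F ∩ A (Sum.inr e) = ∅ := by
          simp only [A, Sum.elim_inr, if_pos heK, F, inter_sdiff_self]
        rw [this, card_empty, Nat.cast_zero, zero_add]
        exact hΔK.trans (mul_le_mul_of_nonneg_left (hqA _) hc)
      · simp only [A, Sum.elim_inr, if_neg (hcross_notMem hx)]
        have hF : (#(F ∩ P (f (Sum.inr s(x, w)))) : ℝ) ≤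
            #(assigned H D₁ f (f (Sum.inr s(x, w)))) := mod_cast h.card_image_inter_le hP hP₁ _
        linarith [hcross x (hsep x hx w hw hxw) w hw hxw, mul_le_of_le_one_left hq₀.le hc1])
  exact ⟨ρ', h.trans subset_union_left hρ' heq fun i hi => hAP i (hnew i hi).1⟩

theorem IsTypical.exists_isPooledExtension_univ (hE : IsTypical E c t) (hc : 0 ≤ c) (hc1 : c ≤ 1)
    (hdeg : ∀ w, degOf H w ≤ Δ) (hρ₁ : IsExpansionOn E H D₁ ρ₁)
    (hP : Pairwise (Function.onFun Disjoint P)) (hP₁ : ∀ i ∈ expVerts H D₁, ∀ j, ρ₁ i ∉ P j)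
    {q m : ℝ} (hq : (Δ + 1) * t + m < c ^ Δ * q) (hm : (Δ + 1) * m ≤ c * q)
    (hpool : ∀ j, q + #(assigned H D₁ f j) ≤ #(P j))
    (hcand : ∀ w, w ∉ D₁ → q + #(assigned H D₁ f (f (Sum.inl w))) ≤
      #(candidates E c H D₁ (ρ₁ ∘ Sum.inl) (P ∘ f ∘ Sum.inr) (P (f (Sum.inl w))) w))
    (hcross : ∀ x ∈ D₁, ∀ w, w ∉ D₁ → H.Adj x w →
      q + #(assigned H D₁ f (f (Sum.inr s(x, w)))) ≤ c * #(P (f (Sum.inr s(x, w)))))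
    {Q : Type*} (κ : W → Q) (hκ : ∀ x w, x ∉ D₁ → w ∉ D₁ → H.Adj x w → κ x = κ w)
    (hκm : ∀ a, #{w | w ∉ D₁ ∧ κ w = a} ≤ m) :
    ∃ ρ, IsPooledExtension E H D₁ ρ₁ P f univ ρ := by
  have hstep (s : Finset Q) :
      ∃ ρ, IsPooledExtension E H D₁ ρ₁ P f (D₁ ∪ ({w | κ w ∈ s} : Finset W)) ρ := by
    induction s using Finset.induction_on with
    | empty => exact ⟨ρ₁, by simp, by simpa using hρ₁, fun _ _ => rfl, by simp⟩
    | insert a s ha ih =>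
      obtain ⟨ρ, hρ⟩ := ih
      have hunion : D₁ ∪ ({w | κ w ∈ insert a s} : Finset W) =
          D₁ ∪ ({w | κ w ∈ s} : Finset W) ∪ ({w | w ∉ D₁ ∧ κ w = a} : Finset W) := by
        ext w
        simp only [mem_union, mem_filter, mem_univ, true_and, mem_insert]
        tauto
      rw [hunion]
      refine hρ.exists_union hE hc hc1 hdeg hP hP₁ hq hm hpool
        (fun w hw => hcand w (mem_filter.1 hw).2.1)
        (fun x hx w hw => hcross x hx w (mem_filter.1 hw).2.1) ?_ (hκm a) fun x hx w hw hxw => ?_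
      · refine disjoint_left.2 fun w hw hwa => ?_
        simp only [mem_union, mem_filter, mem_univ, true_and] at hw hwa
        exact hw.elim hwa.1 fun h => ha (hwa.2 ▸ h)
      · by_contra hx₁
        simp only [mem_union, mem_filter, mem_univ, true_and, hx₁, false_or] at hx hw
        exact ha (hw.2 ▸ hκ x w hx₁ hw.1 hxw ▸ hx)
  obtain ⟨ρ, hρ⟩ := hstep (univ.image κ)
  have huniv : D₁ ∪ ({w | κ w ∈ univ.image κ} : Finset W) = univ := by
    ext w
    simp
  exact ⟨ρ, huniv ▸ hρ⟩

end Pooled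

section CrossBoundary

variable {V W J : Type*} [Fintype W] {E : Set (Finset V)} {c t : ℝ} {H : SimpleGraph W} {Δ : ℕ}
  {D₁ : Finset W} {ρ₁ : W ⊕ Sym2 W → V}

lemma exists_assignment_of_card_le_sum {β : Type*} [DecidableEq β] [Fintype J] {cap : J → ℕ}
    {B₀ : Finset β} {f₀ : β → J} (h₀ : ∀ j, #{b ∈ B₀ | f₀ b = j} ≤ cap j) (B : Finset β)
    (hB : #(B₀ ∪ B) ≤ ∑ j, cap j) :
    ∃ f : β → J, Set.EqOn f f₀ B₀ ∧ ∀ j, #{b ∈ B₀ ∪ B | f b = j} ≤ cap j := by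
  induction B using Finset.induction_on with
  | empty => exact ⟨f₀, fun _ _ => rfl, by simpa using h₀⟩
  | insert a B _ ih =>
    rw [union_insert] at hB ⊢
    obtain ⟨f, hf₀, hf⟩ := ih ((card_le_card (subset_insert _ _)).trans hB)
    by_cases ha : a ∈ B₀ ∪ B
    · exact ⟨f, hf₀, by rwa [insert_eq_of_mem ha]⟩
    obtain ⟨j, -, hj⟩ : ∃ j ∈ univ, #{b ∈ B₀ ∪ B | f b = j} < cap j := by
      refine exists_lt_of_sum_lt ?_
      rw [card_insert_of_notMem ha, card_eq_sum_card_fiberwise (f := f) (t := univ)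
        fun _ _ => mem_coe.2 (mem_univ _)] at hB
      exact hB
    have hupd : Set.EqOn (Function.update f a j) f (B₀ ∪ B : Finset β) := fun b hb =>
      Function.update_of_ne (ne_of_mem_of_not_mem hb ha) _ _
    refine ⟨Function.update f a j, fun b hb => (hupd (mem_union_left _ hb)).trans (hf₀ hb),
      fun i => ?_⟩
    rw [filter_insert, Function.update_self, filter_congr fun b hb => by rw [hupd hb]]
    split_ifs with hij
    · exact (card_insert_le _ _).trans (hij ▸ hj)
    · exact hf i

/-- The vertices of the 1-expansion of `H` outside `H[D₁]` that are affected by `D₁`: the vertices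
with a neighbour in `D₁`, and the expansion vertices of the edges meeting `D₁`. -/
noncomputable def touching (H : SimpleGraph W) (D₁ : Finset W) : Finset (W ⊕ Sym2 W) :=
  {i ∈ expVerts H univ \ expVerts H D₁ |
    i.elim (fun w => ∃ x ∈ D₁, H.Adj x w) fun e => ∃ x ∈ D₁, x ∈ e}

lemma inl_mem_touching {x w : W} (hx : x ∈ D₁) (hw : w ∉ D₁) (hxw : H.Adj x w) :
    Sum.inl w ∈ touching H D₁ :=
  mem_filter.2 ⟨by simpa, x, hx, hxw⟩

lemma inr_mk_mem_touching {x w : W} (hx : x ∈ D₁) (hw : w ∉ D₁) (hxw : H.Adj x w) :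
    Sum.inr s(x, w) ∈ touching H D₁ := by
  refine mem_filter.2 ⟨?_, x, hx, Sym2.mem_mk_left x w⟩
  simp [mk_mem_edgesIn, hxw, hw]

lemma card_touching_le (hdeg : ∀ w, degOf H w ≤ Δ) {X : Finset W}
    (hX : ∀ w, w ∉ D₁ → ∀ x ∈ D₁, H.Adj x w → x ∈ X) : #(touching H D₁) ≤ 2 * Δ * #X := by
  let N (x : W) : Finset W := {w | H.Adj x w}
  have hsub : touching H D₁ ⊆
      X.biUnion fun x => (N x).disjSum ((N x).image fun w => s(x, w)) := by
    rintro (w | e) hi <;> simp only [touching, mem_filter, mem_sdiff, inl_mem_expVerts, mem_univ,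
      true_and, inr_mem_expVerts, Sum.elim_inl, Sum.elim_inr] at hi
    · obtain ⟨hw, x, hx, hxw⟩ := hi
      exact mem_biUnion.2 ⟨x, hX w hw x hx hxw, by simpa [N] using hxw⟩
    · obtain ⟨⟨he, he₁⟩, x, hx, w, rfl⟩ := hi
      have hxw := (mk_mem_edgesIn.1 he).1
      have hw : w ∉ D₁ := fun hw => he₁ (mk_mem_edgesIn.2 ⟨hxw, hx, hw⟩)
      exact mem_biUnion.2 ⟨x, hX w hw x hx hxw, by
        simpa [N] using ⟨w, hxw, Or.inl rfl⟩⟩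
  calc #(touching H D₁) ≤ #X * (2 * Δ) := (card_le_card hsub).trans
        (card_biUnion_le_card_mul _ _ _ fun x _ => by
          have h₁ : #(N x) ≤ Δ := hdeg x
          have h₂ : #((N x).image fun w => s(x, w)) ≤ #(N x) := card_image_le
          rw [card_disjSum]
          omega)
    _ = 2 * Δ * #X := mul_comm _ _

lemma exists_assignment_of_touching [Fintype J] {A : J → Finset V} {r : ℕ} {j₁ : J}
    (hr : #(touching H D₁) + r ≤ #(A j₁)) (hrA : ∀ j, r ≤ #(A j))
    (hcount : #(expVerts H univ \ expVerts H D₁) + Fintype.card J * r ≤ ∑ j, #(A j)) :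
    ∃ f : W ⊕ Sym2 W → J, (∀ i ∈ touching H D₁, f i = j₁) ∧
      ∀ j, #(assigned H D₁ f j) + r ≤ #(A j) := by
  have htouch : touching H D₁ ∪ (expVerts H univ \ expVerts H D₁) =
      expVerts H univ \ expVerts H D₁ := union_eq_right.2 (filter_subset _ _)
  have hsum : ∑ j, (#(A j) - r) + Fintype.card J * r = ∑ j, #(A j) := by
    rw [← smul_eq_mul, ← card_univ, ← sum_const, ← sum_add_distrib]
    exact sum_congr rfl fun j _ => Nat.sub_add_cancel (hrA j)
  obtain ⟨f, hf₀, hf⟩ := exists_assignment_of_card_le_sum (cap := fun j => #(A j) - r)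
    (B₀ := touching H D₁) (f₀ := fun _ => j₁) (fun j => by
      by_cases hj : j₁ = j
      · subst hj
        rw [filter_true_of_mem fun _ _ => rfl]
        omega
      · simp [hj])
    (expVerts H univ \ expVerts H D₁) (by rw [htouch]; omega)
  rw [htouch] at hf
  exact ⟨f, hf₀, fun j => Nat.add_le_of_le_sub (hrA j) (hf j)⟩

/-- The pools `A` after `S` has been set aside as a new pool `none`. -/
noncomputable def setAside (A : J → Finset V) (S : Finset V) : Option J → Finset V :=
  fun o => o.elim S fun j => A j \ S

/-- The assignment `f`, except that everything touching `D₁` is assigned to a new pool `none`. -/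
noncomputable def reassign (H : SimpleGraph W) (D₁ : Finset W) (f : W ⊕ Sym2 W → J) :
    W ⊕ Sym2 W → Option J :=
  fun i => if i ∈ touching H D₁ then none else some (f i)

section SetAside

variable {A : J → Finset V} {S : Finset V} {f : W ⊕ Sym2 W → J} {j₁ : J}

lemma pairwise_disjoint_setAside (hA : Pairwise (Function.onFun Disjoint A)) :
    Pairwise (Function.onFun Disjoint (setAside A S)) := by
  rintro (_ | i) (_ | j) hij
  · exact absurd rfl hij
  · exact disjoint_sdiff
  · exact sdiff_disjoint
  · exact (hA fun h => hij (congrArg some h)).mono sdiff_subset sdiff_subset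

lemma reassign_of_mem {i : W ⊕ Sym2 W} (hi : i ∈ touching H D₁) : reassign H D₁ f i = none :=
  if_pos hi

lemma setAside_reassign_subset (hS : S ⊆ A j₁) (hf : ∀ i ∈ touching H D₁, f i = j₁)
    (i : W ⊕ Sym2 W) : setAside A S (reassign H D₁ f i) ⊆ A (f i) := by
  by_cases hi : i ∈ touching H D₁
  · rw [reassign_of_mem hi, hf i hi]
    exact hS
  · simp only [reassign, if_neg hi]
    exact sdiff_subset

lemma card_assigned_reassign_none_le :
    #(assigned H D₁ (reassign H D₁ f) none) ≤ #(touching H D₁) := by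
  refine card_le_card fun i hi => ?_
  by_contra h
  simp [mem_assigned, reassign, h] at hi

lemma card_assigned_reassign_some_add_le {r : ℕ} (hf : ∀ j, #(assigned H D₁ f j) + r ≤ #(A j))
    (hSr : 2 * #S ≤ r) (j : J) :
    #(assigned H D₁ (reassign H D₁ f) (some j)) + #S ≤ #(setAside A S (some j)) := by
  have h₁ : #(assigned H D₁ (reassign H D₁ f) (some j)) ≤ #(assigned H D₁ f j) :=
    card_le_card fun i hi => by
      simp only [mem_assigned, reassign] at hi ⊢
      split_ifs at hi
      exacts [hi.2.elim, ⟨hi.1, Option.some.inj hi.2⟩]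
  have h₂ : #(A j) ≤ #(setAside A S (some j)) + #S := card_le_card_sdiff_add_card
  have h₃ := hf j
  omega

lemma add_card_assigned_le_card_setAside {r : ℕ} (hf : ∀ j, #(assigned H D₁ f j) + r ≤ #(A j))
    (hSr : 2 * #S ≤ r) {q : ℝ} (hqS : q + #(touching H D₁) ≤ #S) (o : Option J) :
    q + #(assigned H D₁ (reassign H D₁ f) o) ≤ #(setAside A S o) := by
  rcases o with _ | j
  · exact (add_le_add_right (mod_cast card_assigned_reassign_none_le) q).trans hqS
  · have hj : (#(assigned H D₁ (reassign H D₁ f) (some j)) + #S : ℝ) ≤ #(setAside A S (some j)) :=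
      mod_cast card_assigned_reassign_some_add_le hf hSr j
    linarith [(#(touching H D₁)).cast_nonneg (α := ℝ)]

lemma candidates_subset_of_mem_touching {w : W} (hw : w ∉ D₁) (hwt : Sum.inl w ∈ touching H D₁) :
    candidates E c H D₁ (ρ₁ ∘ Sum.inl) (fun _ => S) S w ⊆
      candidates E c H D₁ (ρ₁ ∘ Sum.inl) (setAside A S ∘ reassign H D₁ f ∘ Sum.inr)
        (setAside A S (reassign H D₁ f (Sum.inl w))) w := by
  intro v hv
  obtain ⟨hvS, hv⟩ := mem_candidates.1 hv
  rw [reassign_of_mem hwt]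
  refine mem_candidates.2 ⟨hvS, fun x hx hxw => ?_⟩
  rw [Function.comp_apply, Function.comp_apply, reassign_of_mem (inr_mk_mem_touching hx hw hxw)]
  exact hv x hx hxw

lemma subset_candidates_of_notMem_touching {P : Sym2 W → Finset V} {B : Finset V} {w : W}
    (hw : w ∉ D₁) (hwt : Sum.inl w ∉ touching H D₁) :
    B ⊆ candidates E c H D₁ (ρ₁ ∘ Sum.inl) P B w := fun _ hv =>
  mem_candidates.2 ⟨hv, fun _ hx hxw => absurd (inl_mem_touching hx hw hxw) hwt⟩

end SetAside

variable [Fintype V] [Nonempty V]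

-- Vertices touching `D₁` must go to the small set `S` prepared in advance; the others are free.
theorem IsTypical.exists_expansion_of_pools [Fintype J] (hE : IsTypical E c t) (hc : 0 ≤ c)
    (hc1 : c ≤ 1) (hΔ : Δ ≠ 0) (hdeg : ∀ w, degOf H w ≤ Δ) (hρ₁ : IsExpansionOn E H D₁ ρ₁)
    {A : J → Finset V} (hA : Pairwise (Function.onFun Disjoint A))
    (hA₁ : ∀ i ∈ expVerts H D₁, ∀ j, ρ₁ i ∉ A j) {r : ℕ} {j₁ : J} {S : Finset V}
    (hS : S ⊆ A j₁) (hSr : 2 * #S ≤ r) (hr : ∀ j, 2 * r ≤ #(A j))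
    (hcount : #(expVerts H univ \ expVerts H D₁) + Fintype.card J * r ≤ ∑ j, #(A j))
    {q m : ℝ} (hq₀ : 0 ≤ q) (hq : (Δ + 1) * t + m < c ^ Δ * q) (hm : (Δ + 1) * m ≤ c * q)
    (hqS : q + #(touching H D₁) ≤ c ^ Δ * #S)
    (hcand : ∀ w, w ∉ D₁ →
      c ^ Δ * #S ≤ #(candidates E c H D₁ (ρ₁ ∘ Sum.inl) (fun _ => S) S w))
    {Q : Type*} (κ : W → Q) (hκ : ∀ x w, x ∉ D₁ → w ∉ D₁ → H.Adj x w → κ x = κ w)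
    (hκm : ∀ a, #{w | w ∉ D₁ ∧ κ w = a} ≤ m) :
    ∃ ρ, IsExpansionOn E H univ ρ ∧ Set.EqOn ρ ρ₁ (expVerts H D₁) ∧
      (∀ i ∈ expVerts H univ \ expVerts H D₁, ∃ j, ρ i ∈ A j) ∧
      ∀ j, r ≤ #(A j \ (expVerts H univ).image ρ) := by
  have hcS : c ^ Δ * (#S : ℝ) ≤ #S :=
    mul_le_of_le_one_left (Nat.cast_nonneg _) (pow_le_one₀ hc hc1)
  have htS : #(touching H D₁) ≤ #S := by exact_mod_cast (by linarith : (#(touching H D₁) : ℝ) ≤ #S)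
  obtain ⟨f, hft, hf⟩ := exists_assignment_of_touching (H := H) (D₁ := D₁) (r := r) (j₁ := j₁)
    (by have := hr j₁; omega) (fun j => by have := hr j; omega) hcount
  have hP₁ : ∀ i ∈ expVerts H D₁, ∀ o, ρ₁ i ∉ setAside A S o := by
    rintro i hi (_ | j) hmem
    exacts [hA₁ i hi j₁ (hS hmem), hA₁ i hi j (mem_sdiff.1 hmem).1]
  have hnone : (#(assigned H D₁ (reassign H D₁ f) none) : ℝ) ≤ #(touching H D₁) :=
    mod_cast card_assigned_reassign_none_le
  have hpool := add_card_assigned_le_card_setAside hf hSr (hqS.trans hcS)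
  obtain ⟨ρ, hρ⟩ := hE.exists_isPooledExtension_univ hc hc1 hdeg hρ₁
    (pairwise_disjoint_setAside hA) hP₁ hq hm hpool
    (fun w hw => by
      by_cases hwt : Sum.inl w ∈ touching H D₁
      · rw [reassign_of_mem hwt]
        refine (add_le_add_right hnone q).trans (hqS.trans ((hcand w hw).trans ?_))
        simpa only [reassign_of_mem hwt] using Nat.cast_le (α := ℝ).2 (card_le_card
          (candidates_subset_of_mem_touching (E := E) (c := c) (ρ₁ := ρ₁) (A := A) (f := f) hw hwt))
      · exact (hpool _).trans
          (mod_cast card_le_card (subset_candidates_of_notMem_touching hw hwt)))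
    (fun x hx w hw hxw => by
      rw [reassign_of_mem (inr_mk_mem_touching hx hw hxw)]
      exact (add_le_add_right hnone q).trans (hqS.trans (mul_le_mul_of_nonneg_right
        (pow_le_of_le_one hc hc1 hΔ) (Nat.cast_nonneg _))))
    κ hκ hκm
  have hρA : IsPooledExtension E H D₁ ρ₁ A f univ ρ :=
    ⟨hρ.subset, hρ.isExpansionOn, hρ.eqOn, fun i hi =>
      setAside_reassign_subset hS hft i (hρ.mem_pool i hi)⟩
  refine ⟨ρ, hρ.isExpansionOn, hρ.eqOn, fun i hi => ⟨f i, hρA.mem_pool i hi⟩, fun j => ?_⟩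
  exact_mod_cast hρA.le_card_sdiff hA hA₁ (q := r) subset_rfl (by
    rw [add_comm]
    exact_mod_cast hf j)

end CrossBoundary

/-! ### Clusters -/

section Cluster

variable {V Ω : Type*} [Fintype Ω] {M : V → Ω → Prop} {α : ℝ} {B Y : Finset V}

lemma mul_card_le_sum_card_filter (hM : ∀ v, α * Fintype.card Ω ≤ #{p | M v p}) (B : Finset V) :
    α * Fintype.card Ω * #B ≤ ∑ p, (#{v ∈ B | M v p} : ℝ) := by
  calc α * Fintype.card Ω * #B = ∑ _v ∈ B, α * Fintype.card Ω := by
        rw [sum_const, nsmul_eq_mul, mul_comm]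
    _ ≤ ∑ v ∈ B, (#{p | M v p} : ℝ) := sum_le_sum fun v _ => hM v
    _ = ∑ p, (#{v ∈ B | M v p} : ℝ) := mod_cast
        sum_card_bipartiteAbove_eq_sum_card_bipartiteBelow (s := B) (t := univ) M

lemma mul_card_le_card_filter_popular (hM : ∀ v, α * Fintype.card Ω ≤ #{p | M v p}) (hα : 0 ≤ α)
    (hB : B.Nonempty) :
    α / 2 * Fintype.card Ω ≤ #{p | α / 2 * #B ≤ (#{v ∈ B | M v p} : ℝ)} := by
  set Q : Finset Ω := {p | α / 2 * #B ≤ (#{v ∈ B | M v p} : ℝ)} with hQ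
  have hle (p : Ω) : (#{v ∈ B | M v p} : ℝ) ≤ (if p ∈ Q then (#B : ℝ) else 0) + α / 2 * #B := by
    split_ifs with hp
    · have : (#{v ∈ B | M v p} : ℝ) ≤ #B := mod_cast card_filter_le _ _
      have : 0 ≤ α / 2 * (#B : ℝ) := by positivity
      linarith
    · simp only [hQ, mem_filter, mem_univ, true_and, not_le] at hp
      linarith
  have hsum : ∑ p, (#{v ∈ B | M v p} : ℝ) ≤ #Q * #B + α / 2 * #B * Fintype.card Ω := by
    refine (sum_le_sum fun p _ => hle p).trans_eq ?_
    rw [sum_add_distrib, sum_ite_mem, univ_inter, sum_const, sum_const, nsmul_eq_mul, nsmul_eq_mul,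
      card_univ]
    ring
  have hB₀ : (0 : ℝ) < #B := mod_cast hB.card_pos
  refine le_of_mul_le_mul_right ?_ hB₀
  linarith [mul_card_le_sum_card_filter hM B]

lemma card_le_two_mul_card_filter_of_card_pairs_le {r : V → V → Prop} {γ : ℝ} (hγ : 0 < γ)
    (h : (#{z ∈ B ×ˢ B | r z.1 z.2} : ℝ) ≤ γ / 2 * #B ^ 2) :
    (#B : ℝ) ≤ 2 * #{v ∈ B | (#{u ∈ B | r v u} : ℝ) ≤ γ * #B} := by
  have hsum : (#{v ∈ B | ¬ (#{u ∈ B | r v u} : ℝ) ≤ γ * #B} : ℝ) * (γ * #B) ≤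
      #{z ∈ B ×ˢ B | r z.1 z.2} := by
    rw [← nsmul_eq_mul, card_filter (s := B ×ˢ B), sum_product]
    simp only [← card_filter]
    push_cast
    exact (card_nsmul_le_sum _ _ _ fun v hv => (not_le.1 (mem_filter.1 hv).2).le).trans
      (sum_le_sum_of_subset_of_nonneg (filter_subset _ _) fun _ _ _ => Nat.cast_nonneg _)
  have hsplit : (#{v ∈ B | (#{u ∈ B | r v u} : ℝ) ≤ γ * #B} : ℝ) +
      #{v ∈ B | ¬ (#{u ∈ B | r v u} : ℝ) ≤ γ * #B} = #B :=
    mod_cast card_filter_add_card_filter_not _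
  obtain hB | hB := (Nat.cast_nonneg (α := ℝ) #B).eq_or_lt
  · rw [← hB]
    positivity
  · have hγB : 0 < γ * #B := by positivity
    have : (#{v ∈ B | ¬ (#{u ∈ B | r v u} : ℝ) ≤ γ * #B} : ℝ) ≤ #B / 2 :=
      le_of_mul_le_mul_right (hsum.trans (h.trans_eq (by ring))) hγB
    linarith

/-- The common neighbours of `u` and `v` in the bipartite graph `M`. -/
noncomputable def coneighbors (M : V → Ω → Prop) (u v : V) : Finset Ω := {p | M u p ∧ M v p}

lemma sum_card_pairs_few_coneighbors_le {s : ℝ} (hs : 0 ≤ s) (Y : Finset V) :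
    ∑ p, (#{z ∈ {v ∈ Y | M v p} ×ˢ {v ∈ Y | M v p} | (#(coneighbors M z.1 z.2) : ℝ) < s} : ℝ) ≤
      s * #Y ^ 2 := by
  have hswap := sum_card_bipartiteAbove_eq_sum_card_bipartiteBelow
    (s := {z ∈ Y ×ˢ Y | (#(coneighbors M z.1 z.2) : ℝ) < s}) (t := univ)
    fun z p => M z.1 p ∧ M z.2 p
  have hle : ∀ z ∈ ({z ∈ Y ×ˢ Y | (#(coneighbors M z.1 z.2) : ℝ) < s} : Finset (V × V)),
      (#(coneighbors M z.1 z.2) : ℝ) ≤ s := fun z hz => (mem_filter.1 hz).2.le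
  calc _ = ∑ z ∈ Y ×ˢ Y with (#(coneighbors M z.1 z.2) : ℝ) < s,
          (#(coneighbors M z.1 z.2) : ℝ) := by
        norm_cast
        refine Eq.trans (sum_congr rfl fun p _ => congr_arg card ?_) hswap.symm
        ext z
        simp only [bipartiteBelow, mem_filter, mem_product]
        tauto
    _ ≤ #{z ∈ Y ×ˢ Y | (#(coneighbors M z.1 z.2) : ℝ) < s} • s := sum_le_card_nsmul _ _ _ hle
    _ ≤ #(Y ×ˢ Y) • s := nsmul_le_nsmul_left hs (card_le_card (filter_subset _ _))
    _ = s * #Y ^ 2 := by rw [card_product, nsmul_eq_mul]; push_cast; ring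

/- Dependent random choice: the neighbourhood in `Y` of a random `p` is large, and contains few
pairs with few common neighbours. -/
lemma exists_subset_few_pairs_few_coneighbors [Nonempty Ω] (hα : 0 < α)
    (hM : ∀ v, α * Fintype.card Ω ≤ #{p | M v p}) (Y : Finset V) :
    ∃ B ⊆ Y, α / 2 * #Y ≤ #B ∧
      (#{z ∈ B ×ˢ B | (#(coneighbors M z.1 z.2) : ℝ) < α ^ 3 / 16 * Fintype.card Ω} : ℝ) ≤
        α / 8 * #B ^ 2 := by
  set N : ℝ := (Fintype.card Ω : ℝ) with hN
  have hN₀ : 0 < N := Nat.cast_pos.2 Fintype.card_pos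
  let B (p : Ω) : Finset V := {v ∈ Y | M v p}
  let bad (p : Ω) : ℝ :=
    #{z ∈ B p ×ˢ B p | (#(coneighbors M z.1 z.2) : ℝ) < α ^ 3 / 16 * N}
  have hbad : ∑ p, bad p ≤ α ^ 3 / 16 * N * #Y ^ 2 :=
    sum_card_pairs_few_coneighbors_le (by positivity) Y
  have hsq : α ^ 2 * #Y ^ 2 * N ≤ ∑ p, (#(B p) : ℝ) ^ 2 := by
    have hcs := sq_sum_le_card_mul_sum_sq (s := univ) (f := fun p => (#(B p) : ℝ))
    rw [card_univ, ← hN] at hcs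
    refine le_of_mul_le_mul_left (le_trans ?_ hcs) hN₀
    calc N * (α ^ 2 * #Y ^ 2 * N) = (α * N * #Y) ^ 2 := by ring
      _ ≤ _ := by gcongr; exact mul_card_le_sum_card_filter hM Y
  obtain ⟨p, -, hp⟩ : ∃ p ∈ univ, α ^ 2 * #Y ^ 2 / 2 ≤ (#(B p) : ℝ) ^ 2 - 8 / α * bad p := by
    refine exists_le_of_sum_le univ_nonempty ?_
    rw [sum_sub_distrib, ← mul_sum, sum_const, nsmul_eq_mul, card_univ, ← hN]
    have : 8 / α * ∑ p, bad p ≤ 8 / α * (α ^ 3 / 16 * N * #Y ^ 2) := by gcongr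
    have : 8 / α * (α ^ 3 / 16 * N * #Y ^ 2) = α ^ 2 * #Y ^ 2 / 2 * N := by
      field_simp; ring
    linarith
  have hbad₀ : 0 ≤ 8 / α * bad p := by positivity
  refine ⟨B p, filter_subset _ _, le_of_sq_le_sq ?_ (by positivity), ?_⟩
  · nlinarith [sq_nonneg (α * #Y)]
  · have h8 : 8 / α * bad p ≤ (#(B p) : ℝ) ^ 2 := by
      have : 0 ≤ α ^ 2 * (#Y : ℝ) ^ 2 / 2 := by positivity
      linarith
    calc bad p = α / 8 * (8 / α * bad p) := by field_simp
      _ ≤ _ := by gcongr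

/-- The switches from `v` to `q`: the walks `v, p, u, q` in the bipartite graph `M`. When `M`
relates the vertices of a 3-graph to the pairs they form an edge with, the pair `p` of a switch can
hand over its partner `u` to `q` in exchange for `v`. -/
noncomputable def switches [Fintype V] (M : V → Ω → Prop) (v : V) (q : Ω) : Finset (Ω × V) :=
  {t | M v t.1 ∧ M t.2 t.1 ∧ M t.2 q}

lemma mem_switches [Fintype V] {v : V} {q : Ω} {t : Ω × V} :
    t ∈ switches M v q ↔ M v t.1 ∧ M t.2 t.1 ∧ M t.2 q := by
  simp [switches]

lemma card_mul_le_card_switches [Fintype V] {v : V} {q : Ω} {s : ℝ} {U : Finset V}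
    (hU : ∀ u ∈ U, M u q ∧ s ≤ #(coneighbors M v u)) : #U * s ≤ #(switches M v q) := by
  calc #U * s ≤ ∑ u ∈ U, (#(coneighbors M v u) : ℝ) := by
        rw [← nsmul_eq_mul]
        exact card_nsmul_le_sum _ _ _ fun u hu => (hU u hu).2
    _ = #(U.sigma fun u => coneighbors M v u) := by rw [card_sigma]; push_cast; rfl
    _ ≤ #(switches M v q) := by
      norm_cast
      refine card_le_card_of_injOn (fun t => (t.2, t.1)) ?_ ?_
      · rintro ⟨u, p⟩ ht
        simp only [coe_sigma, Set.mem_sigma_iff, mem_coe, coneighbors, mem_filter, mem_univ,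
          true_and] at ht
        exact mem_switches.2 ⟨ht.2.1, ht.2.2, (hU u ht.1).1⟩
      · rintro ⟨u, p⟩ _ ⟨u', p'⟩ _ h
        simp_all

/-- `A` is a cluster with parameters `s` and `k`: there are at least `s` elements of `Ω` to which
every vertex of `A` has at least `k` switches. -/
def IsCluster [Fintype V] (M : V → Ω → Prop) (s k : ℝ) (A : Finset V) : Prop :=
  ∃ Q : Finset Ω, s ≤ #Q ∧ ∀ v ∈ A, ∀ q ∈ Q, k ≤ #(switches M v q)

theorem exists_isCluster_subset [Fintype V] [Nonempty Ω] (hα : 0 < α)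
    (hM : ∀ v, α * Fintype.card Ω ≤ #{p | M v p}) (hY : Y.Nonempty) :
    ∃ A ⊆ Y, α / 4 * #Y ≤ #A ∧
      IsCluster M (α / 2 * Fintype.card Ω) (α ^ 5 / 128 * #Y * Fintype.card Ω) A := by
  obtain ⟨B, hBY, hB, hpairs⟩ := exists_subset_few_pairs_few_coneighbors hα hM Y
  have : (0 : ℝ) < #Y := mod_cast hY.card_pos
  have hB₀ : B.Nonempty := by
    have : (0 : ℝ) < #B := (by positivity : 0 < α / 2 * (#Y : ℝ)).trans_le hB
    exact card_pos.1 (mod_cast this)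
  let few (v : V) : Finset V :=
    {u ∈ B | (#(coneighbors M v u) : ℝ) < α ^ 3 / 16 * Fintype.card Ω}
  have hA : (#B : ℝ) ≤ 2 * #{v ∈ B | (#(few v) : ℝ) ≤ α / 4 * #B} :=
    card_le_two_mul_card_filter_of_card_pairs_le (by positivity) (hpairs.trans_eq (by ring))
  refine ⟨{v ∈ B | (#(few v) : ℝ) ≤ α / 4 * #B}, (filter_subset _ _).trans hBY, by linarith,
    ({q | α / 2 * #B ≤ (#{u ∈ B | M u q} : ℝ)} : Finset Ω),
    mul_card_le_card_filter_popular hM hα.le hB₀, ?_⟩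
  intro v hv q hq
  have hU : α / 4 * (α / 2 * #Y) ≤ (#({u ∈ B | M u q} \ few v) : ℝ) := by
    have hsplit : (#{u ∈ B | M u q} : ℝ) ≤ #({u ∈ B | M u q} \ few v) + #(few v) :=
      mod_cast card_le_card_sdiff_add_card
    have hfew := (mem_filter.1 hv).2
    have hpop := (mem_filter.1 hq).2
    have : α / 4 * (α / 2 * #Y) ≤ α / 4 * #B := by gcongr
    linarith
  calc α ^ 5 / 128 * #Y * Fintype.card Ω
      = α / 4 * (α / 2 * #Y) * (α ^ 3 / 16 * Fintype.card Ω) := by ring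
    _ ≤ #({u ∈ B | M u q} \ few v) * (α ^ 3 / 16 * Fintype.card Ω) := by gcongr
    _ ≤ #(switches M v q) := card_mul_le_card_switches fun u hu => by
      simp only [few, mem_sdiff, mem_filter, not_and, not_lt] at hu
      exact ⟨hu.1.2, hu.2 hu.1.1⟩

lemma exists_pairwiseDisjoint_family [Fintype V] {P : Finset V → Prop} {s : ℝ}
    (h : ∀ Y : Finset V, s ≤ #Y → ∃ A ⊆ Y, A.Nonempty ∧ P A) :
    ∃ 𝒜 : Finset (Finset V), (𝒜 : Set (Finset V)).PairwiseDisjoint id ∧ (∀ A ∈ 𝒜, P A) ∧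
      (#(univ \ 𝒜.biUnion id) : ℝ) < s := by
  obtain ⟨𝒜, h𝒜, hmax⟩ := exists_max_image
    ({𝒜 | (𝒜 : Set (Finset V)).PairwiseDisjoint id ∧ ∀ A ∈ 𝒜, P A} : Finset (Finset (Finset V)))
    card ⟨∅, by simp⟩
  obtain ⟨hdis, hP⟩ := (mem_filter.1 h𝒜).2
  refine ⟨𝒜, hdis, hP, ?_⟩
  by_contra! hs
  obtain ⟨A, hAY, hA, hPA⟩ := h _ hs
  have hAdis : ∀ B ∈ 𝒜, Disjoint A B := fun B hB =>
    disjoint_of_subset_left hAY (disjoint_of_subset_right (subset_biUnion_of_mem id hB)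
      sdiff_disjoint)
  have hA𝒜 : A ∉ 𝒜 := fun hmem => hA.ne_empty (disjoint_self_iff_empty A |>.1 (hAdis A hmem))
  have hins : insert A 𝒜 ∈
      ({𝒜 | (𝒜 : Set (Finset V)).PairwiseDisjoint id ∧ ∀ A ∈ 𝒜, P A} :
        Finset (Finset (Finset V))) := by
    rw [mem_filter, coe_insert]
    exact ⟨mem_univ _, hdis.insert fun B hB _ => hAdis B hB, forall_mem_insert _ _ _ |>.2 ⟨hPA, hP⟩⟩
  have := hmax _ hins
  rw [card_insert_of_notMem hA𝒜] at this
  omega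

lemma exists_cluster_partition [Fintype V] [Nonempty V] [Nonempty Ω] {ζ : ℝ} (hα : 0 < α)
    (hζ : 0 < ζ) (hM : ∀ v, α * Fintype.card Ω ≤ #{p | M v p}) :
    ∃ 𝒜 : Finset (Finset V), (𝒜 : Set (Finset V)).PairwiseDisjoint id ∧
      (∀ A ∈ 𝒜, α * ζ / 4 * Fintype.card V ≤ #A ∧ IsCluster M (α / 2 * Fintype.card Ω)
        (α ^ 5 * ζ / 128 * Fintype.card V * Fintype.card Ω) A) ∧
      (#(univ \ 𝒜.biUnion id) : ℝ) < ζ * Fintype.card V := by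
  have : (0 : ℝ) < Fintype.card V := mod_cast Fintype.card_pos
  refine exists_pairwiseDisjoint_family fun Y hY => ?_
  obtain ⟨A, hAY, hA, Q, hQ, hAQ⟩ := exists_isCluster_subset hα hM
    (card_pos.1 (mod_cast (by positivity : 0 < ζ * Fintype.card V).trans_le hY))
  have hA' : α * ζ / 4 * Fintype.card V ≤ #A := by
    calc α * ζ / 4 * Fintype.card V = α / 4 * (ζ * Fintype.card V) := by ring
      _ ≤ α / 4 * #Y := by gcongr
      _ ≤ #A := hA
  refine ⟨A, hAY, card_pos.1 (mod_cast (by positivity :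
    0 < α * ζ / 4 * Fintype.card V).trans_le hA'), hA', Q, hQ, fun v hv q hq => ?_⟩
  refine le_trans ?_ (hAQ v hv q hq)
  calc α ^ 5 * ζ / 128 * Fintype.card V * Fintype.card Ω =
        α ^ 5 / 128 * (ζ * Fintype.card V) * Fintype.card Ω := by ring
    _ ≤ α ^ 5 / 128 * #Y * Fintype.card Ω := by gcongr

end Cluster

/-! ### Disjoint choices and flexible triples -/

section DisjointChoice

variable {V T Ω ι : Type*} [Fintype T] {σ : T → Finset V} {b : ℕ}

lemma card_filter_not_disjoint_biUnion_le (hb : ∀ t, #{s | ¬ Disjoint (σ s) (σ t)} ≤ b)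
    (f : ι → T) (I : Finset ι) : #{s | ∃ i ∈ I, ¬ Disjoint (σ s) (σ (f i))} ≤ b * #I := by
  calc _ ≤ #(I.biUnion fun i => ({s | ¬ Disjoint (σ s) (σ (f i))} : Finset T)) := by
        refine card_le_card fun s hs => ?_
        simpa using hs
    _ ≤ #I * b := card_biUnion_le_card_mul _ _ _ fun i _ => hb (f i)
    _ = b * #I := mul_comm _ _

lemma exists_pairwiseDisjoint_choice [Nonempty T] (hb : ∀ t, #{s | ¬ Disjoint (σ s) (σ t)} ≤ b)
    {I : Finset ι} {F : ι → Finset T} (h : ∀ i ∈ I, b * #I < #(F i)) :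
    ∃ g : ι → T, (∀ i ∈ I, g i ∈ F i) ∧ (I : Set ι).PairwiseDisjoint (σ ∘ g) := by
  induction I using Finset.induction_on with
  | empty => exact ⟨fun _ => Classical.arbitrary T, by simp, by simp⟩
  | insert a I ha ih =>
    rw [card_insert_of_notMem ha] at h
    obtain ⟨g, hg, hdis⟩ := ih fun i hi =>
      (Nat.mul_le_mul_left b (Nat.le_succ _)).trans_lt (h i (mem_insert_of_mem hi))
    obtain ⟨t, ht, hfree⟩ := exists_mem_notMem_of_card_lt_card <|
      (card_filter_not_disjoint_biUnion_le hb g I).trans_lt <|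
        (Nat.mul_le_mul_left b (Nat.le_succ _)).trans_lt (h a (mem_insert_self a I))
    simp only [mem_filter, mem_univ, true_and, not_exists, not_and, not_not] at hfree
    have hga : ∀ i ∈ I, Function.update g a t i = g i := fun i hi =>
      Function.update_of_ne (ne_of_mem_of_not_mem hi ha) _ _
    refine ⟨Function.update g a t, ?_, ?_⟩
    · refine forall_mem_insert _ _ _ |>.2 ⟨by simpa using ht, fun i hi => ?_⟩
      rw [hga i hi]
      exact hg i hi
    · rw [coe_insert, Set.pairwiseDisjoint_insert_of_notMem (mod_cast ha)]
      refine ⟨fun i hi j hj hij => ?_, fun i hi => ?_⟩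
      · simpa only [Function.onFun, Function.comp_apply, hga i hi, hga j hj] using hdis hi hj hij
      · simpa only [Function.comp_apply, Function.update_self, hga i hi] using hfree i hi

variable [Fintype Ω] {S : Ω → Finset T} {θ : ℝ}

lemma exists_mul_sum_le_sum_filter [DecidableEq T] [Nonempty T]
    (hS : ∀ ω, θ * Fintype.card T ≤ #(S ω)) {w : Ω → ℝ} (hw : ∀ ω, 0 ≤ w ω) :
    ∃ t, θ * ∑ ω, w ω ≤ ∑ ω with t ∈ S ω, w ω := by
  have hswap : ∑ t, ∑ ω with t ∈ S ω, w ω = ∑ ω, #(S ω) * w ω := by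
    simp only [sum_filter]
    rw [sum_comm]
    refine sum_congr rfl fun ω _ => ?_
    rw [sum_ite_mem, univ_inter, sum_const, nsmul_eq_mul]
  obtain ⟨t, -, ht⟩ : ∃ t ∈ (univ : Finset T), θ * ∑ ω, w ω ≤ ∑ ω with t ∈ S ω, w ω := by
    refine exists_le_of_sum_le univ_nonempty ?_
    rw [hswap, sum_const, nsmul_eq_mul, card_univ, mul_sum, mul_sum]
    refine sum_le_sum fun ω _ => ?_
    nlinarith [mul_le_mul_of_nonneg_right (hS ω) (hw ω)]
  exact ⟨t, ht⟩

/- One step of the method of conditional expectations, for the potential in which `ω` loses half of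
its weight whenever `S ω` is hit. -/
lemma exists_insert_sum_half_pow_le [DecidableEq T] [Nonempty T] [Nonempty Ω]
    (hθ : 0 < θ) (hσ : ∀ t, (σ t).Nonempty) {𝒯 : Finset T}
    (hS : ∀ ω, θ * Fintype.card T ≤ #(S ω \ ({s | ∃ t ∈ 𝒯, ¬ Disjoint (σ s) (σ t)} : Finset T))) :
    ∃ t, (∃ ω, t ∈ S ω) ∧ (∀ s ∈ 𝒯, Disjoint (σ t) (σ s)) ∧
      ∑ ω, (1 / 2 : ℝ) ^ #(insert t 𝒯 ∩ S ω) ≤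
        (1 - θ / 2) * ∑ ω, (1 / 2 : ℝ) ^ #(𝒯 ∩ S ω) := by
  set blocked : Finset T := {s | ∃ t ∈ 𝒯, ¬ Disjoint (σ s) (σ t)} with hblocked
  let w (ω : Ω) : ℝ := (1 / 2) ^ #(𝒯 ∩ S ω)
  have hw (ω : Ω) : 0 < w ω := by positivity
  obtain ⟨t, ht⟩ := exists_mul_sum_le_sum_filter hS fun ω => (hw ω).le
  obtain ⟨ω₀, hω₀⟩ : ∃ ω₀, t ∈ S ω₀ \ blocked := by
    by_contra! h
    simp only [h, filter_false, sum_empty] at ht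
    exact (mul_pos hθ (sum_pos (fun ω _ => hw ω) univ_nonempty)).not_ge ht
  rw [mem_sdiff] at hω₀
  have htfree : ∀ s ∈ 𝒯, Disjoint (σ t) (σ s) := by simpa [hblocked] using hω₀.2
  have ht𝒯 : t ∉ 𝒯 := fun h => (hσ t).ne_empty (disjoint_self_iff_empty _ |>.1 (htfree t h))
  have hstep (ω : Ω) : (1 / 2 : ℝ) ^ #(insert t 𝒯 ∩ S ω) ≤
      w ω - 1 / 2 * if t ∈ S ω \ blocked then w ω else 0 := by
    by_cases htω : t ∈ S ω
    · rw [if_pos (mem_sdiff.2 ⟨htω, hω₀.2⟩), insert_inter_of_mem htω,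
        card_insert_of_notMem fun h => ht𝒯 (mem_inter.1 h).1, pow_succ]
      linarith
    · rw [if_neg fun h => htω (mem_sdiff.1 h).1, insert_inter_of_notMem htω]
      simp only [w, mul_zero, sub_zero, le_refl]
  refine ⟨t, ⟨ω₀, hω₀.1⟩, htfree, ?_⟩
  calc ∑ ω, (1 / 2 : ℝ) ^ #(insert t 𝒯 ∩ S ω)
      ≤ ∑ ω, w ω - 1 / 2 * ∑ ω with t ∈ S ω \ blocked, w ω := by
        rw [sum_filter, mul_sum, ← sum_sub_distrib]
        exact sum_le_sum fun ω _ => hstep ω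
    _ ≤ (1 - θ / 2) * ∑ ω, w ω := by linarith

lemma exists_pairwiseDisjoint_sum_half_pow_le [DecidableEq T] [Nonempty T] [Nonempty Ω]
    (hθ : 0 < θ) (hθ₁ : θ ≤ 1) (hσ : ∀ t, (σ t).Nonempty)
    (hb : ∀ t, #{s | ¬ Disjoint (σ s) (σ t)} ≤ b) {m : ℕ}
    (hS : ∀ ω, θ * Fintype.card T + b * m ≤ #(S ω)) :
    ∃ 𝒯 : Finset T, #𝒯 ≤ m ∧ (∀ t ∈ 𝒯, ∃ ω, t ∈ S ω) ∧ (𝒯 : Set T).PairwiseDisjoint σ ∧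
      ∑ ω, (1 / 2 : ℝ) ^ #(𝒯 ∩ S ω) ≤ Fintype.card Ω * (1 - θ / 2) ^ m := by
  induction m with
  | zero => exact ⟨∅, by simp⟩
  | succ m ih =>
    push_cast at hS
    obtain ⟨𝒯, h𝒯m, h𝒯S, h𝒯, hsum⟩ := ih fun ω => by linarith [hS ω, Nat.cast_nonneg (α := ℝ) b]
    have hfree (ω : Ω) : θ * Fintype.card T ≤
        #(S ω \ ({s | ∃ t ∈ 𝒯, ¬ Disjoint (σ s) (σ t)} : Finset T)) := by
      have hblocked := (card_filter_not_disjoint_biUnion_le hb id 𝒯).trans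
        (Nat.mul_le_mul_left b h𝒯m)
      have : (#(S ω) : ℝ) ≤ #(S ω \ ({s | ∃ t ∈ 𝒯, ¬ Disjoint (σ s) (σ t)} : Finset T)) + b * m :=
        mod_cast card_le_card_sdiff_add_card.trans (Nat.add_le_add_left hblocked _)
      linarith [hS ω, Nat.cast_nonneg (α := ℝ) b]
    obtain ⟨t, htS, htfree, ht⟩ := exists_insert_sum_half_pow_le hθ hσ hfree
    refine ⟨insert t 𝒯, (card_insert_le _ _).trans (Nat.succ_le_succ h𝒯m),
      forall_mem_insert _ _ _ |>.2 ⟨htS, h𝒯S⟩, ?_, ?_⟩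
    · rw [coe_insert]
      exact h𝒯.insert fun s hs _ => htfree s hs
    · calc _ ≤ (1 - θ / 2) * (Fintype.card Ω * (1 - θ / 2) ^ m) :=
            ht.trans (mul_le_mul_of_nonneg_left hsum (by linarith))
        _ = Fintype.card Ω * (1 - θ / 2) ^ (m + 1) := by ring

end DisjointChoice

lemma mul_le_log_add_of_half_pow_le {x θ : ℝ} {h m : ℕ} (hx : 0 < x) (hθ : θ < 1)
    (hle : (1 / 2 : ℝ) ^ h ≤ x * (1 - θ) ^ m) : θ * m ≤ Real.log x + h := by
  have hθ₁ : 0 < 1 - θ := by linarith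
  have hlog := Real.log_le_log (by positivity) hle
  rw [Real.log_mul hx.ne' (by positivity), Real.log_pow, Real.log_pow, one_div,
    Real.log_inv] at hlog
  have h₁ : (m : ℝ) * Real.log (1 - θ) ≤ m * -θ := by
    gcongr
    linarith [Real.log_le_sub_one_of_pos hθ₁]
  have h₂ : (h : ℝ) * Real.log 2 ≤ h * 1 := by
    gcongr
    linarith [Real.log_two_lt_d9]
  linarith

section PairVerts

variable {V : Type*}

/-- The set of entries of an ordered pair. -/
noncomputable def pairVerts (p : V × V) : Finset V := {p.1, p.2}

/-- The set of entries of an ordered triple. -/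
noncomputable def tripleVerts (t : (V × V) × V) : Finset V := insert t.2 (pairVerts t.1)

lemma pairVerts_subset_tripleVerts (t : (V × V) × V) : pairVerts t.1 ⊆ tripleVerts t :=
  subset_insert _ _

lemma snd_mem_tripleVerts (t : (V × V) × V) : t.2 ∈ tripleVerts t := mem_insert_self _ _

lemma card_tripleVerts_le (t : (V × V) × V) : #(tripleVerts t) ≤ 3 :=
  (card_insert_le _ _).trans (Nat.succ_le_succ card_le_two)

lemma card_pairs_not_disjoint_le [Fintype V] (X : Finset V) :
    #{p : V × V | ¬ Disjoint (pairVerts p) X} ≤ 2 * #X * Fintype.card V := by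
  calc _ ≤ #(X ×ˢ univ ∪ univ ×ˢ X) := card_le_card fun p hp => by
        simpa [pairVerts, or_iff_not_imp_left] using hp
    _ ≤ _ := card_union_le _ _
    _ = 2 * #X * Fintype.card V := by
      rw [card_product, card_product, card_univ]
      ring

lemma card_triples_not_disjoint_le [Fintype V] (X : Finset V) :
    #{t : (V × V) × V | ¬ Disjoint (tripleVerts t) X} ≤ 3 * #X * Fintype.card V ^ 2 := by
  calc _ ≤ #(({p : V × V | ¬ Disjoint (pairVerts p) X} : Finset (V × V)) ×ˢ univ ∪ univ ×ˢ X) :=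
        card_le_card fun t ht => by
          simpa [tripleVerts, disjoint_insert_left, not_and_or, or_comm, imp_iff_not_or] using ht
    _ ≤ _ := card_union_le _ _
    _ ≤ 2 * #X * Fintype.card V * Fintype.card V + Fintype.card V * Fintype.card V * #X := by
      rw [card_product, card_product, card_univ, card_univ, Fintype.card_prod]
      gcongr
      exact card_pairs_not_disjoint_le X
    _ = 3 * #X * Fintype.card V ^ 2 := by ring

end PairVerts

lemma eventually_three_mul_log_le {θ : ℝ} (hθ : 0 < θ) :
    ∀ᶠ n : ℕ in Filter.atTop, 3 * Real.log n ≤ θ * n := by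
  have hlog := (Real.isLittleO_log_id_atTop.comp_tendsto tendsto_natCast_atTop_atTop).bound
    (by positivity : 0 < θ / 3)
  filter_upwards [hlog] with n hn
  simp only [Function.comp_apply, id, Real.norm_eq_abs, Nat.abs_cast] at hn
  linarith [le_abs_self (Real.log n)]

lemma exists_disjoint_triples_half_pow_le {V Ω : Type*} [Fintype V] [Nonempty V] [Fintype Ω]
    [Nonempty Ω] {κ : ℝ} (hκ : 0 < κ) (hκ1 : κ ≤ 1) {S : Ω → Finset ((V × V) × V)}
    (hΩ : Fintype.card Ω ≤ Fintype.card V ^ 3)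
    (hS : ∀ ω, 3 / 4 * κ * (Fintype.card V : ℝ) ^ 3 ≤ #(S ω)) {m : ℕ}
    (hm : m ≤ κ / 36 * Fintype.card V) :
    ∃ 𝒯 : Finset ((V × V) × V), #𝒯 ≤ m ∧ (∀ t ∈ 𝒯, ∃ ω, t ∈ S ω) ∧
      (𝒯 : Set ((V × V) × V)).PairwiseDisjoint tripleVerts ∧
      ∀ ω, (1 / 2 : ℝ) ^ #(𝒯 ∩ S ω) ≤ Fintype.card V ^ 3 * (1 - κ / 8) ^ m := by
  have hS' (ω : Ω) :
      κ / 4 * Fintype.card ((V × V) × V) + (9 * Fintype.card V ^ 2 : ℕ) * m ≤ (#(S ω) : ℝ) := by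
    have : 9 * (Fintype.card V : ℝ) ^ 2 * m ≤ 9 * Fintype.card V ^ 2 * (κ / 36 * Fintype.card V) :=
      by gcongr
    rw [Fintype.card_prod, Fintype.card_prod]
    push_cast
    linarith [hS ω]
  obtain ⟨𝒯, h𝒯m, h𝒯S, h𝒯, hsum⟩ := exists_pairwiseDisjoint_sum_half_pow_le
    (by positivity : 0 < κ / 4) (by linarith) (fun t => ⟨_, snd_mem_tripleVerts t⟩)
    (fun t => (card_triples_not_disjoint_le _).trans <|
      Nat.mul_le_mul_right _ (by linarith [card_tripleVerts_le t])) hS'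
  refine ⟨𝒯, h𝒯m, h𝒯S, h𝒯, fun ω => ?_⟩
  calc _ ≤ ∑ ω, (1 / 2 : ℝ) ^ #(𝒯 ∩ S ω) :=
        single_le_sum (f := fun ω => (1 / 2 : ℝ) ^ #(𝒯 ∩ S ω))
          (fun _ _ => by positivity) (mem_univ ω)
    _ ≤ Fintype.card Ω * (1 - κ / 4 / 2) ^ m := hsum
    _ ≤ Fintype.card V ^ 3 * (1 - κ / 8) ^ m := by
      rw [show κ / 4 / 2 = κ / 8 by ring]
      have : 0 ≤ 1 - κ / 8 := by linarith
      gcongr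
      exact_mod_cast hΩ

theorem exists_disjoint_triples_many_hits.{u, v} {κ γ : ℝ} (hκ : 0 < κ) (hκ1 : κ ≤ 1) (hγ : 0 < γ)
    (hγκ : γ ≤ κ / 36) :
    ∃ n₀ : ℕ, ∀ (V : Type u) (Ω : Type v) [Fintype V] [Fintype Ω] (S : Ω → Finset ((V × V) × V)),
      n₀ ≤ Fintype.card V → Fintype.card Ω ≤ Fintype.card V ^ 3 →
      (∀ ω, 3 / 4 * κ * (Fintype.card V : ℝ) ^ 3 ≤ #(S ω)) →
      ∃ 𝒯 : Finset ((V × V) × V), (#𝒯 : ℝ) ≤ γ * Fintype.card V ∧ (∀ t ∈ 𝒯, ∃ ω, t ∈ S ω) ∧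
        (𝒯 : Set ((V × V) × V)).PairwiseDisjoint tripleVerts ∧
        ∀ ω, κ * γ / 32 * Fintype.card V ≤ #(𝒯 ∩ S ω) := by
  have hlarge : ∀ᶠ n : ℕ in Filter.atTop, 2 ≤ γ * (n : ℝ) :=
    (Filter.Tendsto.const_mul_atTop hγ tendsto_natCast_atTop_atTop).eventually_ge_atTop 2
  obtain ⟨n₀, hn₀⟩ := Filter.eventually_atTop.1
    ((eventually_three_mul_log_le (by positivity : 0 < κ * γ / 32)).and hlarge)
  refine ⟨n₀, fun V Ω _ _ S hV hΩ hS => ?_⟩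
  obtain ⟨hlog, hγn⟩ := hn₀ _ hV
  have hn : (0 : ℝ) < Fintype.card V := pos_of_mul_pos_right (by linarith) hγ.le
  have : Nonempty V := Fintype.card_pos_iff.1 (Nat.cast_pos.1 hn)
  obtain hΩ₀ | hΩ₀ := isEmpty_or_nonempty Ω
  · exact ⟨∅, by rw [card_empty, Nat.cast_zero]; positivity, by simp, by simp, fun ω => hΩ₀.elim ω⟩
  have hmγ : (⌊γ * Fintype.card V⌋₊ : ℝ) ≤ γ * Fintype.card V := Nat.floor_le (by positivity)
  obtain ⟨𝒯, h𝒯m, h𝒯S, h𝒯, hpow⟩ :=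
    exists_disjoint_triples_half_pow_le hκ hκ1 hΩ hS (hmγ.trans (by gcongr))
  refine ⟨𝒯, (Nat.cast_le.2 h𝒯m).trans hmγ, h𝒯S, h𝒯, fun ω => ?_⟩
  have hhits := mul_le_log_add_of_half_pow_le (by positivity) (by linarith) (hpow ω)
  rw [Real.log_pow] at hhits
  push_cast at hhits
  have : κ * (γ * Fintype.card V / 2) ≤ κ * ⌊γ * Fintype.card V⌋₊ := by
    gcongr
    linarith [Nat.lt_floor_add_one (γ * Fintype.card V)]
  linarith

/-! ### The absorber -/

section GoodPair

variable {V : Type*} {E : Set (Finset V)}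

/-- `v` completes the pair `p` to an edge of `E`. -/
def Completes (E : Set (Finset V)) (v : V) (p : V × V) : Prop := ({p.1, p.2, v} : Finset V) ∈ E

lemma Completes.ne (hE : ∀ e ∈ E, #e = 3) {v : V} {p : V × V} (h : Completes E v p) :
    p.1 ≠ p.2 ∧ v ∉ pairVerts p := by
  have hcard := hE _ h
  refine ⟨fun hp => ?_, fun hv => ?_⟩
  · rw [hp, insert_eq_of_mem (mem_insert_self _ _)] at hcard
    have := card_le_two (a := p.2) (b := v)
    omega
  · rw [show ({p.1, p.2, v} : Finset V) = insert v (pairVerts p) by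
      ext; simp only [pairVerts, mem_insert, mem_singleton]; tauto, insert_eq_of_mem hv] at hcard
    have := card_le_two (a := p.1) (b := p.2)
    rw [pairVerts] at hcard
    omega

variable [Fintype V] {c t : ℝ}

/-- A pair is good if its two entries have many common thick neighbours. An absorber uses good pairs
only, so that vertices of `H` adjacent to the ends of a special edge can still be embedded. -/
def IsGoodPair (E : Set (Finset V)) (c : ℝ) (p : V × V) : Prop :=
  c ^ 2 * Fintype.card V ≤ #{w | IsThick E c univ s(p.1, w) ∧ IsThick E c univ s(p.2, w)}

lemma IsTypical.card_not_isGoodPair_le (hE : IsTypical E c t) (hc : 0 ≤ c) (hc1 : c ≤ 1)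
    (ht : t ≤ c * Fintype.card V) :
    (#{p | ¬ IsGoodPair E c p} : ℝ) ≤ 2 * t * Fintype.card V := by
  let N (x : V) : Finset V := {w | IsThick E c univ s(x, w)}
  let bad : Finset V := {x | (#(N x) : ℝ) < c * #(univ : Finset V)}
  have htV : t ≤ (#(univ : Finset V) : ℝ) := by
    rw [card_univ]
    exact ht.trans (mul_le_of_le_one_left (Nat.cast_nonneg _) hc1)
  have hbad : (#bad : ℝ) ≤ t := hE univ univ htV htV
  have hrow (x : V) (hx : x ∉ bad) : (#{y | ¬ IsGoodPair E c (x, y)} : ℝ) ≤ t := by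
    replace hx : c * Fintype.card V ≤ #(N x) :=
      not_lt.1 fun h => hx (mem_filter.2 ⟨mem_univ _, by rwa [card_univ]⟩)
    refine le_trans ?_ (hE (N x) univ (ht.trans hx) htV)
    refine Nat.cast_le.2 (card_le_card fun y hy => ?_)
    simp only [IsGoodPair, mem_filter, mem_univ, true_and, not_le] at hy ⊢
    rw [filter_filter]
    refine hy.trans_le ?_
    calc c ^ 2 * Fintype.card V = c * (c * Fintype.card V) := by ring
      _ ≤ c * #(N x) := by gcongr
  have hle (x : V) : (#{y | ¬ IsGoodPair E c (x, y)} : ℝ) ≤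
      (if x ∈ bad then (Fintype.card V : ℝ) else 0) + t := by
    split_ifs with hx
    · have : (#{y | ¬ IsGoodPair E c (x, y)} : ℝ) ≤ Fintype.card V := mod_cast card_le_univ _
      linarith [hE.nonneg]
    · linarith [hrow x hx]
  calc (#{p | ¬ IsGoodPair E c p} : ℝ) = ∑ x, (#{y | ¬ IsGoodPair E c (x, y)} : ℝ) := by
        simp only [card_filter]
        push_cast
        rw [Fintype.sum_prod_type]
    _ ≤ ∑ x, ((if x ∈ bad then (Fintype.card V : ℝ) else 0) + t) := sum_le_sum fun x _ => hle x
    _ = (#bad + t) * Fintype.card V := by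
      rw [sum_add_distrib, sum_ite_mem, univ_inter, sum_const, sum_const, nsmul_eq_mul,
        nsmul_eq_mul, card_univ]
      ring
    _ ≤ 2 * t * Fintype.card V := by
      gcongr
      linarith

end GoodPair

/-- A family `𝒯` of disjoint edges, each a good pair `t.1` with an apex `t.2`, is flexible if it
contains at least `h` switches for every `v`, `q` having at least `k` switches. -/
structure IsFlexible {V : Type*} [Fintype V] (E : Set (Finset V)) (c k h : ℝ)
    (𝒯 : Finset ((V × V) × V)) : Prop where
  isGoodPair : ∀ t ∈ 𝒯, IsGoodPair E c t.1
  completes : ∀ t ∈ 𝒯, Completes E t.2 t.1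
  pairwiseDisjoint : (𝒯 : Set ((V × V) × V)).PairwiseDisjoint tripleVerts
  le_card_switches : ∀ v q, k ≤ #(switches (Completes E) v q) →
    h ≤ #(𝒯 ∩ switches (Completes E) v q)

theorem exists_flexible_triples.{u} {κ γ : ℝ} (hκ : 0 < κ) (hκ1 : κ ≤ 1) (hγ : 0 < γ)
    (hγκ : γ ≤ κ / 36) :
    ∃ n₀ : ℕ, ∀ (V : Type u) [Fintype V] (E : Set (Finset V)) (c t : ℝ), n₀ ≤ Fintype.card V →
      IsTypical E c t → 0 ≤ c → c ≤ 1 → t ≤ c * Fintype.card V → t ≤ κ / 8 * Fintype.card V →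
      ∃ 𝒯 : Finset ((V × V) × V), (#𝒯 : ℝ) ≤ γ * Fintype.card V ∧
        IsFlexible E c (κ * (Fintype.card V : ℝ) ^ 3) (κ * γ / 32 * Fintype.card V) 𝒯 := by
  obtain ⟨n₀, hn₀⟩ := exists_disjoint_triples_many_hits.{u, u} hκ hκ1 hγ hγκ
  refine ⟨n₀, fun V _ E c t hV hE hc hc1 htc htκ => ?_⟩
  let Ω := {ω : V × (V × V) //
    κ * (Fintype.card V : ℝ) ^ 3 ≤ #(switches (Completes E) ω.1 ω.2)}
  let S (ω : Ω) : Finset ((V × V) × V) :=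
    {s ∈ switches (Completes E) ω.1.1 ω.1.2 | IsGoodPair E c s.1}
  have hΩ : Fintype.card Ω ≤ Fintype.card V ^ 3 := by
    refine (Fintype.card_subtype_le _).trans_eq ?_
    rw [Fintype.card_prod, Fintype.card_prod]
    ring
  have hS (ω : Ω) : 3 / 4 * κ * (Fintype.card V : ℝ) ^ 3 ≤ #(S ω) := by
    have hbad : (#{s ∈ switches (Completes E) ω.1.1 ω.1.2 | ¬ IsGoodPair E c s.1} : ℝ) ≤
        #{p | ¬ IsGoodPair E c p} * Fintype.card V := by
      have hsub : {s ∈ switches (Completes E) ω.1.1 ω.1.2 | ¬ IsGoodPair E c s.1} ⊆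
          ({p | ¬ IsGoodPair E c p} : Finset (V × V)) ×ˢ (univ : Finset V) := fun s hs => by
        simpa using (mem_filter.1 hs).2
      exact_mod_cast (card_le_card hsub).trans_eq (by rw [card_product, card_univ])
    have hsplit : (#(switches (Completes E) ω.1.1 ω.1.2) : ℝ) = #(S ω) +
        #{s ∈ switches (Completes E) ω.1.1 ω.1.2 | ¬ IsGoodPair E c s.1} :=
      mod_cast (card_filter_add_card_filter_not _).symm
    have hpairs : (#{p | ¬ IsGoodPair E c p} : ℝ) * Fintype.card V ≤
        2 * (κ / 8 * Fintype.card V) * Fintype.card V * Fintype.card V := by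
      refine mul_le_mul_of_nonneg_right ?_ (Nat.cast_nonneg _)
      refine (hE.card_not_isGoodPair_le hc hc1 htc).trans ?_
      gcongr
    linarith [ω.2]
  obtain ⟨𝒯, h𝒯γ, h𝒯S, h𝒯, hhits⟩ := hn₀ V Ω S hV hΩ hS
  refine ⟨𝒯, h𝒯γ, fun s hs => ?_, fun s hs => ?_, h𝒯, fun v q hvq => ?_⟩
  · obtain ⟨ω, hω⟩ := h𝒯S s hs
    exact (mem_filter.1 hω).2
  · obtain ⟨ω, hω⟩ := h𝒯S s hs
    exact (mem_switches.1 (mem_filter.1 hω).1).2.1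
  · exact (hhits ⟨(v, q), hvq⟩).trans <| Nat.cast_le.2 <| card_le_card <|
      inter_subset_inter_left (filter_subset _ _)

lemma IsTypical.exists_disjoint_good_pairs {V ι : Type*} [Fintype V] [Nonempty V] [Fintype ι]
    {E : Set (Finset V)} {c t : ℝ} (hE : IsTypical E c t) (hc : 0 ≤ c) (hc1 : c ≤ 1)
    (ht : t ≤ c * Fintype.card V) {X : Finset V} {base : ι → Finset (V × V)}
    (hbase : ∀ i, 2 * t * Fintype.card V + 2 * #X * Fintype.card V +
      4 * Fintype.card V * Fintype.card ι < #(base i)) :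
    ∃ q : ι → V × V, (∀ i, q i ∈ base i) ∧ (∀ i, IsGoodPair E c (q i)) ∧
      (∀ i, Disjoint (pairVerts (q i)) X) ∧
      Pairwise (Function.onFun Disjoint fun i => pairVerts (q i)) := by
  have hcard (i : ι) : 4 * Fintype.card V * #(univ : Finset ι) <
      #{p ∈ base i | IsGoodPair E c p ∧ Disjoint (pairVerts p) X} := by
    have hcover : base i ⊆ ({p ∈ base i | IsGoodPair E c p ∧ Disjoint (pairVerts p) X} ∪
        (({p | ¬ IsGoodPair E c p} : Finset (V × V)) ∪
          ({p | ¬ Disjoint (pairVerts p) X} : Finset (V × V)))) := by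
      intro p hp
      simp only [mem_union, mem_filter, mem_univ, true_and]
      tauto
    have hle := (card_le_card hcover).trans <| (card_union_le _ _).trans <|
      Nat.add_le_add_left ((card_union_le _ _).trans <|
        Nat.add_le_add_left (card_pairs_not_disjoint_le X) _) _
    rw [card_univ]
    rify at hle ⊢
    linarith [hbase i, hE.card_not_isGoodPair_le hc hc1 ht]
  obtain ⟨q, hq, hdis⟩ := exists_pairwiseDisjoint_choice (σ := pairVerts)
    (fun p => (card_pairs_not_disjoint_le _).trans <| Nat.mul_le_mul_right _ <|
      Nat.mul_le_mul_left 2 (card_le_two (a := p.1) (b := p.2))) fun i _ => hcard i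
  simp only [mem_univ, mem_filter, forall_const] at hq
  exact ⟨q, fun i => (hq i).1, fun i => (hq i).2.1, fun i => (hq i).2.2,
    fun i j hij => hdis (mem_coe.2 (mem_univ i)) (mem_coe.2 (mem_univ j)) hij⟩

section Absorber

variable {V J ι : Type*} [Fintype V] {E : Set (Finset V)} {c : ℝ} {r : ℕ}

/-- An absorber: good pairs `p i`, certain vertices `C` and clusters `A j` partitioning the vertex
set. Whatever sets `R j` of `r` or more vertices remain in the clusters, the pairs can be completed
to edges by distinct vertices taken from `C` and from the `R j`. As `#ι = #C + #J * r`, this uses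
all of `C` and of the `R j` if these have exactly `r` elements. -/
structure IsAbsorber [Fintype J] [Fintype ι] (E : Set (Finset V)) (c : ℝ) (p : ι → V × V)
    (C : Finset V) (A : J → Finset V) (r : ℕ) : Prop where
  isGoodPair : ∀ i, IsGoodPair E c (p i)
  ne : ∀ i, (p i).1 ≠ (p i).2
  disjoint_pairs : Pairwise (Function.onFun Disjoint fun i => pairVerts (p i))
  disjoint_pair_certain : ∀ i, Disjoint (pairVerts (p i)) C
  disjoint_pair_cluster : ∀ i j, Disjoint (pairVerts (p i)) (A j)
  disjoint_certain_cluster : ∀ j, Disjoint C (A j)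
  disjoint_clusters : Pairwise (Function.onFun Disjoint A)
  cover : ∀ v, (∃ i, v ∈ pairVerts (p i)) ∨ v ∈ C ∨ ∃ j, v ∈ A j
  card_eq : Fintype.card ι = #C + Fintype.card J * r
  absorb : ∀ R : J → Finset V, (∀ j, R j ⊆ A j) → (∀ j, r ≤ #(R j)) →
    ∃ g : ι → V, Function.Injective g ∧ (∀ i, Completes E (g i) (p i)) ∧
      ∀ i, g i ∈ C ∨ ∃ j, g i ∈ R j

/-- The vertices in none of the clusters `A₀ j` and in none of the triples `𝒯`. -/
noncomputable def leftover [Fintype J] (A₀ : J → Finset V) (𝒯 : Finset ((V × V) × V)) : Finset V :=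
  univ \ (univ.biUnion A₀ ∪ 𝒯.biUnion tripleVerts)

/-- The raw material of an absorber: clusters `A₀ j`, flexible triples `𝒯`, and one good pair for
each of `r` copies of every cluster and for every leftover vertex. If the apex `t.2` of a triple is
replaced by a vertex of a cluster, it becomes free for one of the pairs of that cluster. -/
structure IsAbsorberKit [Fintype J] (E : Set (Finset V)) (c : ℝ) (A₀ : J → Finset V)
    (𝒯 : Finset ((V × V) × V)) (q : (J × Fin r) ⊕ leftover A₀ 𝒯 → V × V) : Prop where
  disjoint_clusters : Pairwise (Function.onFun Disjoint A₀)
  isGoodPair_triple : ∀ t ∈ 𝒯, IsGoodPair E c t.1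
  completes_triple : ∀ t ∈ 𝒯, Completes E t.2 t.1
  disjoint_triples : (𝒯 : Set ((V × V) × V)).PairwiseDisjoint tripleVerts
  isGoodPair : ∀ i, IsGoodPair E c (q i)
  ne : ∀ i, (q i).1 ≠ (q i).2
  disjoint_pairs : Pairwise (Function.onFun Disjoint fun i => pairVerts (q i))
  disjoint_pair_triples : ∀ i, Disjoint (pairVerts (q i)) (𝒯.biUnion tripleVerts)
  disjoint_pair_leftover : ∀ i, Disjoint (pairVerts (q i)) (leftover A₀ 𝒯)
  completes_leftover : ∀ z : leftover A₀ 𝒯, Completes E z (q (Sum.inr z))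
  card_le_card_switches : ∀ j, ∀ v ∈ A₀ j, ∀ l,
    Fintype.card J * r ≤ #(𝒯 ∩ switches (Completes E) v (q (Sum.inl (j, l))))

lemma injective_sumElim_extend {S T Z : Type*} {τ : S → T} (hτ : Function.Injective τ) :
    Function.Injective (Sum.elim (Function.extend τ Sum.inl (Sum.inr ∘ Sum.inl))
      (Sum.elim (Sum.inr ∘ Sum.inl ∘ τ) (Sum.inr ∘ Sum.inr)) : T ⊕ (S ⊕ Z) → S ⊕ (T ⊕ Z)) := by
  have hext (t : T) : (∃ s, t = τ s ∧
        Function.extend τ Sum.inl (Sum.inr ∘ Sum.inl : T → S ⊕ (T ⊕ Z)) t = Sum.inl s) ∨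
      (∀ s, τ s ≠ t) ∧ Function.extend τ Sum.inl (Sum.inr ∘ Sum.inl : T → S ⊕ (T ⊕ Z)) t =
        Sum.inr (Sum.inl t) := by
    by_cases h : ∃ s, τ s = t
    · obtain ⟨s, rfl⟩ := h
      exact .inl ⟨s, rfl, hτ.extend_apply _ _ s⟩
    · exact .inr ⟨fun s hs => h ⟨s, hs⟩, Function.extend_apply' _ _ _ h⟩
  rintro (t | s | z) (t' | s' | z') h
  all_goals grind [Function.Injective]

lemma injective_triple_snd {V : Type*} {𝒯 : Finset ((V × V) × V)}
    (h𝒯 : (𝒯 : Set ((V × V) × V)).PairwiseDisjoint tripleVerts) :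
    Function.Injective fun t : 𝒯 => t.1.2 := fun t t' h => by
  by_contra hne
  refine disjoint_left.1 (h𝒯 t.2 t'.2 fun h' => hne (Subtype.ext h')) (snd_mem_tripleVerts _) ?_
  rw [show t.1.2 = t'.1.2 from h]
  exact snd_mem_tripleVerts _

lemma pairVerts_subset_biUnion {V : Type*} {𝒯 : Finset ((V × V) × V)} {t : (V × V) × V}
    (ht : t ∈ 𝒯) : pairVerts t.1 ⊆ 𝒯.biUnion tripleVerts :=
  (pairVerts_subset_tripleVerts t).trans (subset_biUnion_of_mem tripleVerts ht)

lemma image_snd_subset_biUnion {V : Type*} {𝒯 : Finset ((V × V) × V)} :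
    𝒯.image Prod.snd ⊆ 𝒯.biUnion tripleVerts :=
  image_subset_iff.2 fun t ht => mem_biUnion.2 ⟨t, ht, snd_mem_tripleVerts t⟩

lemma disjoint_pairVerts_image_snd {V : Type*} {E : Set (Finset V)} {𝒯 : Finset ((V × V) × V)}
    {t : (V × V) × V} (hE : ∀ e ∈ E, #e = 3) (h𝒯 : ∀ t ∈ 𝒯, Completes E t.2 t.1)
    (hdis : (𝒯 : Set ((V × V) × V)).PairwiseDisjoint tripleVerts) (ht : t ∈ 𝒯) :
    Disjoint (pairVerts t.1) (𝒯.image Prod.snd) := by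
  refine disjoint_right.2 fun v hv hvt => ?_
  obtain ⟨t', ht', rfl⟩ := mem_image.1 hv
  obtain rfl | hne := eq_or_ne t t'
  · exact ((h𝒯 t ht).ne hE).2 hvt
  · exact disjoint_left.1 (hdis ht ht' hne) (pairVerts_subset_tripleVerts t hvt)
      (snd_mem_tripleVerts t')

lemma disjoint_biUnion_leftover [Fintype J] {A₀ : J → Finset V} {𝒯 : Finset ((V × V) × V)} :
    Disjoint (𝒯.biUnion tripleVerts) (leftover A₀ 𝒯) :=
  disjoint_of_subset_left subset_union_right disjoint_sdiff

variable [Fintype J] {A₀ : J → Finset V} {𝒯 : Finset ((V × V) × V)}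
  {q : (J × Fin r) ⊕ leftover A₀ 𝒯 → V × V}

lemma IsAbsorberKit.injective_sumElim (h : IsAbsorberKit E c A₀ 𝒯 q) {a : J × Fin r → V}
    (ha : Function.Injective a) (haA : ∀ s, a s ∈ A₀ s.1 \ 𝒯.biUnion tripleVerts) :
    Function.Injective (Sum.elim a (Sum.elim (fun t : 𝒯 => t.1.2)
      (Subtype.val : leftover A₀ 𝒯 → V))) := by
  have hmem (t : 𝒯) : t.1.2 ∈ 𝒯.biUnion tripleVerts :=
    mem_biUnion.2 ⟨t.1, t.2, snd_mem_tripleVerts _⟩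
  refine ha.sumElim ((injective_triple_snd h.disjoint_triples).sumElim Subtype.val_injective
    fun t z htz => (mem_sdiff.1 z.2).2 (htz ▸ mem_union_right _ (hmem t))) ?_
  rintro s (t | z) hs
  · exact (mem_sdiff.1 (haA s)).2 (by rw [show a s = t.1.2 from hs]; exact hmem t)
  · refine (mem_sdiff.1 z.2).2 (mem_union_left _ (mem_biUnion.2 ⟨s.1, mem_univ _, ?_⟩))
    exact (show a s = z from hs) ▸ (mem_sdiff.1 (haA s)).1

lemma IsAbsorberKit.exists_injective_completes [Nonempty V] (h : IsAbsorberKit E c A₀ 𝒯 q)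
    {R : J → Finset V} (hR : ∀ j, R j ⊆ A₀ j \ 𝒯.biUnion tripleVerts) (hr : ∀ j, r ≤ #(R j)) :
    ∃ g : 𝒯 ⊕ ((J × Fin r) ⊕ leftover A₀ 𝒯) → V, Function.Injective g ∧
      (∀ i, Completes E (g i) (Sum.elim (fun t : 𝒯 => t.1.1) q i)) ∧
      ∀ i, g i ∈ 𝒯.image Prod.snd ∪ leftover A₀ 𝒯 ∨ ∃ j, g i ∈ R j := by
  have hemb (j : J) : Nonempty (Fin r ↪ R j) :=
    Function.Embedding.nonempty_of_card_le (by simpa using hr j)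
  let a (s : J × Fin r) : V := (hemb s.1).some s.2
  have haR (s) : a s ∈ R s.1 := ((hemb s.1).some s.2).2
  have ha : Function.Injective a := by
    rintro ⟨j, l⟩ ⟨j', l'⟩ hs
    obtain rfl : j = j' := by
      by_contra hne
      refine disjoint_left.1 (h.disjoint_clusters hne) (mem_sdiff.1 (hR j (haR (j, l)))).1 ?_
      rw [hs]
      exact (mem_sdiff.1 (hR j' (haR (j', l')))).1
    exact Prod.ext rfl ((hemb j).some.injective (Subtype.ext hs))
  obtain ⟨τ, hτinj, hτ⟩ := exists_injOn_mem_of_card_le (I := univ)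
    (F := fun s : J × Fin r => 𝒯 ∩ switches (Completes E) (a s) (q (Sum.inl s))) fun s _ => by
      simpa using h.card_le_card_switches s.1 (a s) (mem_sdiff.1 (hR _ (haR s))).1 s.2
  simp only [mem_univ, mem_inter, mem_switches, forall_const] at hτ
  let τ' (s : J × Fin r) : 𝒯 := ⟨τ s, (hτ s).1⟩
  have hτ' : Function.Injective τ' := fun s s' hs =>
    hτinj (mem_coe.2 (mem_univ s)) (mem_coe.2 (mem_univ s')) (congrArg Subtype.val hs)
  refine ⟨_, (h.injective_sumElim ha fun s => hR _ (haR s)).comp (injective_sumElim_extend hτ'),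
    ?_, ?_⟩
  · rintro (t | s | z)
    · obtain ⟨s, rfl⟩ | ht := em (∃ s, τ' s = t)
      · simpa [hτ'.extend_apply] using (hτ s).2.1
      · simpa [Function.extend_apply' _ _ _ ht] using h.completes_triple t.1 t.2
    · exact (hτ s).2.2.2
    · exact h.completes_leftover z
  · rintro (t | s | z)
    · obtain ⟨s, rfl⟩ | ht := em (∃ s, τ' s = t)
      · exact .inr ⟨s.1, by simpa [hτ'.extend_apply] using haR s⟩
      · refine .inl (mem_union_left _ (mem_image.2 ⟨t.1, t.2, ?_⟩))
        simp [Function.extend_apply' _ _ _ ht]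
    · exact .inl (mem_union_left _ (mem_image.2 ⟨τ s, (hτ s).1, rfl⟩))
    · exact .inl (mem_union_right _ z.2)

lemma IsAbsorberKit.pairwise_disjoint_pairs (h : IsAbsorberKit E c A₀ 𝒯 q) :
    Pairwise (Function.onFun Disjoint fun i => pairVerts (Sum.elim (fun t : 𝒯 => t.1.1) q i)) := by
  have hmix (t : 𝒯) (i) : Disjoint (pairVerts t.1.1) (pairVerts (q i)) :=
    (disjoint_of_subset_right (pairVerts_subset_biUnion t.2) (h.disjoint_pair_triples i)).symm
  rintro (t | i) (t' | i') hne
  · exact disjoint_of_subset_left (pairVerts_subset_tripleVerts _) <|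
      disjoint_of_subset_right (pairVerts_subset_tripleVerts _) <|
        h.disjoint_triples t.2 t'.2 fun h' => hne (congrArg _ (Subtype.ext h'))
  · exact hmix t i'
  · exact (hmix t' i).symm
  · exact h.disjoint_pairs fun h' => hne (congrArg _ h')

lemma mem_pairVerts_or_mem_leftover (v : V) :
    (∃ i, v ∈ pairVerts (Sum.elim (fun t : 𝒯 => t.1.1) q i)) ∨
      v ∈ 𝒯.image Prod.snd ∪ leftover A₀ 𝒯 ∨
      ∃ j, v ∈ A₀ j \ (𝒯.biUnion tripleVerts ∪ univ.biUnion fun i => pairVerts (q i)) := by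
  simp only [leftover, mem_union, mem_sdiff, mem_biUnion, mem_univ, true_and, mem_image]
  by_cases hT : ∃ t ∈ 𝒯, v ∈ tripleVerts t
  · obtain ⟨t, ht, hv⟩ := hT
    obtain rfl | hv := mem_insert.1 hv
    · exact .inr (.inl (.inl ⟨t, ht, rfl⟩))
    · exact .inl ⟨Sum.inl ⟨t, ht⟩, hv⟩
  · by_cases hq : ∃ i, v ∈ pairVerts (q i)
    · obtain ⟨i, hi⟩ := hq
      exact .inl ⟨Sum.inr i, hi⟩
    · by_cases hA : ∃ j, v ∈ A₀ j
      · obtain ⟨j, hj⟩ := hA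
        exact .inr <| .inr ⟨j, hj, fun h' => h'.elim hT fun ⟨i, _, hi⟩ => hq ⟨i, hi⟩⟩
      · exact .inr <| .inl <| .inr fun h' => h'.elim hA hT

theorem IsAbsorberKit.isAbsorber [Nonempty V] (hE : ∀ e ∈ E, #e = 3)
    (h : IsAbsorberKit E c A₀ 𝒯 q) :
    IsAbsorber E c (Sum.elim (fun t : 𝒯 => t.1.1) q) (𝒯.image Prod.snd ∪ leftover A₀ 𝒯)
      (fun j => A₀ j \ (𝒯.biUnion tripleVerts ∪ univ.biUnion fun i => pairVerts (q i))) r where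
  isGoodPair := Sum.rec (fun t => h.isGoodPair_triple t.1 t.2) h.isGoodPair
  ne := Sum.rec (fun t => (Completes.ne hE (h.completes_triple t.1 t.2)).1) h.ne
  disjoint_pairs := h.pairwise_disjoint_pairs
  disjoint_pair_certain := by
    rintro (t | i)
    · exact disjoint_union_right.2 ⟨disjoint_pairVerts_image_snd hE h.completes_triple
        h.disjoint_triples t.2, disjoint_of_subset_left (pairVerts_subset_biUnion t.2)
          disjoint_biUnion_leftover⟩
    · exact disjoint_union_right.2 ⟨disjoint_of_subset_right image_snd_subset_biUnion
        (h.disjoint_pair_triples i), h.disjoint_pair_leftover i⟩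
  disjoint_pair_cluster := by
    rintro (t | i) j
    · exact disjoint_of_subset_left
        ((pairVerts_subset_biUnion t.2).trans subset_union_left) disjoint_sdiff
    · exact disjoint_of_subset_left ((subset_biUnion_of_mem (fun i => pairVerts (q i))
        (mem_univ i)).trans subset_union_right) disjoint_sdiff
  disjoint_certain_cluster j := by
    refine disjoint_union_left.2 ⟨disjoint_of_subset_left
      (image_snd_subset_biUnion.trans subset_union_left) disjoint_sdiff, ?_⟩
    exact disjoint_of_subset_right (sdiff_subset.trans <|
      (subset_biUnion_of_mem A₀ (mem_univ j)).trans subset_union_left) sdiff_disjoint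
  disjoint_clusters j j' hne := disjoint_of_subset_left sdiff_subset <|
    disjoint_of_subset_right sdiff_subset <| h.disjoint_clusters hne
  cover := mem_pairVerts_or_mem_leftover
  card_eq := by
    rw [card_union_of_disjoint (disjoint_of_subset_left image_snd_subset_biUnion
      disjoint_biUnion_leftover), card_image_of_injOn (Set.injOn_iff_injective.2
        (injective_triple_snd h.disjoint_triples))]
    simp only [Fintype.card_sum, Fintype.card_prod, Fintype.card_fin, Fintype.card_coe]
    ring
  absorb R hR hr := h.exists_injective_completes
    (fun j => (hR j).trans (sdiff_subset_sdiff subset_rfl subset_union_left)) hr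

end Absorber

lemma card_biUnion_tripleVerts_le {V : Type*} (𝒯 : Finset ((V × V) × V)) :
    #(𝒯.biUnion tripleVerts) ≤ 3 * #𝒯 :=
  (card_biUnion_le_card_mul _ _ _ fun t _ => card_tripleVerts_le t).trans_eq (mul_comm _ _)

lemma card_le_card_sdiff_union_add_card {V : Type*} {A B T P : Finset V} (hBA : B ⊆ A)
    (hPB : Disjoint P B) : #B ≤ #(A \ (T ∪ P)) + #T := by
  refine card_le_card_sdiff_add_card.trans (Nat.add_le_add_right (card_le_card ?_) _)
  refine fun v hv => mem_sdiff.2 ⟨hBA (mem_sdiff.1 hv).1, fun hv' => ?_⟩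
  exact (mem_union.1 hv').elim (mem_sdiff.1 hv).2 (disjoint_right.1 hPB (mem_sdiff.1 hv).1)

section ExistsAbsorber

variable {V J : Type*} [Fintype V] [Fintype J] {E : Set (Finset V)} {c t s k h : ℝ} {r : ℕ}
  {A₀ : J → Finset V} {𝒯 : Finset ((V × V) × V)}

lemma card_leftover_le : #(leftover A₀ 𝒯) ≤ #(univ \ univ.biUnion A₀) :=
  card_le_card (sdiff_subset_sdiff subset_rfl subset_union_left)

/- The pairs `q i` avoid a reserve `B j` in every cluster, so that the clusters stay large when the
pairs are removed from them. -/
theorem IsTypical.exists_isAbsorberKit [Nonempty V] (htyp : IsTypical E c t) (hc : 0 ≤ c)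
    (hc1 : c ≤ 1) (ht : t ≤ c * Fintype.card V) (hE : ∀ e ∈ E, #e = 3)
    (hdeg : ∀ v, s ≤ #{p | Completes E v p})
    (hA₀ : Pairwise (Function.onFun Disjoint A₀)) (hk : 0 < k)
    (hcluster : ∀ j, IsCluster (Completes E) s k (A₀ j))
    (h𝒯 : IsFlexible E c k h 𝒯) (hh : Fintype.card J * r ≤ h)
    {b : ℕ} (hb : 0 < b) (hbA : ∀ j, b + 3 * #𝒯 ≤ #(A₀ j))
    (hs : 2 * t * Fintype.card V + 2 * (Fintype.card J * (b + 3 * #𝒯) +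
      #(univ \ univ.biUnion A₀) + 3 * #𝒯) * Fintype.card V +
      4 * Fintype.card V * (Fintype.card J * r + #(univ \ univ.biUnion A₀)) < s) :
    ∃ q : (J × Fin r) ⊕ leftover A₀ 𝒯 → V × V, IsAbsorberKit E c A₀ 𝒯 q ∧
      ∀ j, b ≤ #(A₀ j \ (𝒯.biUnion tripleVerts ∪ univ.biUnion fun i => pairVerts (q i))) := by
  choose Q hQ hAQ using hcluster
  choose B hBA hB using fun j => exists_subset_card_eq (hbA j)
  have h𝒯V := card_biUnion_tripleVerts_le 𝒯
  let X : Finset V := univ.biUnion B ∪ leftover A₀ 𝒯 ∪ 𝒯.biUnion tripleVerts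
  have hX : #X ≤ Fintype.card J * (b + 3 * #𝒯) + #(univ \ univ.biUnion A₀) + 3 * #𝒯 := by
    refine (card_union_le _ _).trans (add_le_add ((card_union_le _ _).trans
      (add_le_add ?_ card_leftover_le)) h𝒯V)
    simpa only [card_univ] using card_biUnion_le_card_mul univ B _ fun j _ => (hB j).le
  let base : (J × Fin r) ⊕ leftover A₀ 𝒯 → Finset (V × V) :=
    Sum.elim (fun s => Q s.1) fun z => ({p | Completes E z p} : Finset (V × V))
  have hbase : ∀ i, s ≤ #(base i) := Sum.rec (fun s => hQ s.1) fun z => hdeg z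
  have hι : Fintype.card ((J × Fin r) ⊕ leftover A₀ 𝒯) ≤
      Fintype.card J * r + #(univ \ univ.biUnion A₀) := by
    simpa using card_leftover_le
  obtain ⟨q, hq, hgood, hqX, hqdis⟩ := htyp.exists_disjoint_good_pairs hc hc1 ht (X := X)
    (base := base) fun i => by
      refine lt_of_le_of_lt ?_ (hs.trans_le (hbase i))
      rify at hX hι
      gcongr
  have hne : ∀ i, (q i).1 ≠ (q i).2 := by
    rintro (⟨j, l⟩ | z)
    · obtain ⟨v, hv⟩ : (A₀ j).Nonempty := card_pos.1 (by have := hbA j; omega)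
      obtain ⟨x, hx⟩ := card_pos.1 <| Nat.cast_pos.1 <| hk.trans_le <|
        hAQ j v hv _ (hq (Sum.inl (j, l)))
      exact ((mem_switches.1 hx).2.2.ne hE).1
    · exact (Completes.ne hE (mem_filter.1 (hq (Sum.inr z))).2).1
  refine ⟨q, ⟨hA₀, h𝒯.isGoodPair, h𝒯.completes, h𝒯.pairwiseDisjoint, hgood, hne, hqdis,
    fun i => disjoint_of_subset_right subset_union_right (hqX i),
    fun i => disjoint_of_subset_right (subset_union_right.trans subset_union_left) (hqX i),
    fun z => (mem_filter.1 (hq (Sum.inr z))).2,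
    fun j v hv l => by
      exact_mod_cast hh.trans (h𝒯.le_card_switches v _ (hAQ j v hv _ (hq (Sum.inl (j, l)))))⟩,
    fun j => ?_⟩
  have hqB : Disjoint (univ.biUnion fun i => pairVerts (q i)) (B j) :=
    (disjoint_biUnion_left _ _ _).2 fun i _ => disjoint_of_subset_right
      ((subset_biUnion_of_mem B (mem_univ j)).trans (subset_union_left.trans subset_union_left))
        (hqX i)
  have := card_le_card_sdiff_union_add_card (T := 𝒯.biUnion tripleVerts) (hBA j) hqB
  rw [hB] at this
  omega

lemma card_mul_le_card_of_pairwise_disjoint {A : J → Finset V} {s : ℝ}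
    (hA : Pairwise (Function.onFun Disjoint A)) (hs : ∀ j, s ≤ #(A j)) :
    Fintype.card J * s ≤ Fintype.card V := by
  calc Fintype.card J * s ≤ ∑ j, (#(A j) : ℝ) := by
        rw [← card_univ, ← nsmul_eq_mul]
        exact card_nsmul_le_sum _ _ _ fun j _ => hs j
    _ = #(univ.biUnion A) := by
      rw [card_biUnion fun i _ j _ hij => hA hij]
      push_cast
      rfl
    _ ≤ Fintype.card V := mod_cast card_le_univ _

end ExistsAbsorber

lemma absorber_estimates {α ζ δ κ γ n t τ j r z : ℝ} (hα1 : α ≤ 1) (hζ : 0 < ζ)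
    (hζα : ζ ≤ α / 80) (hδ : 0 < δ) (hδζ : δ ≤ ζ / 4) (hκ : 0 < κ) (hκδ : κ ≤ α * δ / 32)
    (hγ : γ = κ / 36) (hn : 0 < n) (hτ : τ ≤ γ * n) (hj : 0 ≤ j) (hjn : j * (δ * n) ≤ n)
    (hr : r ≤ 2 * (δ * κ * γ / 64) * n) (hz : z ≤ ζ * n) (ht : t ≤ κ / 8 * n) :
    j * r ≤ κ * γ / 32 * n ∧ 2 * r + 3 * τ ≤ δ * n ∧ τ + (j * r + z) ≤ 3 * ζ * n ∧
      2 * t * n + 2 * (j * (2 * r + 3 * τ) + z + 3 * τ) * n + 4 * n * (j * r + z) <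
        α / 2 * n ^ 2 := by
  have hα : 0 < α := by linarith
  have hκζ : κ ≤ ζ / 128 := by nlinarith
  have hγ₀ : 0 < γ := by linarith
  have hjr : j * r ≤ κ * γ / 32 * n := by
    calc j * r ≤ j * (2 * (δ * κ * γ / 64) * n) := by gcongr
      _ = κ * γ / 32 * (j * (δ * n)) := by ring
      _ ≤ κ * γ / 32 * n := by gcongr
  have hκγ : κ * γ / 32 ≤ ζ / 128 := by nlinarith
  have hρ : 2 * (2 * (δ * κ * γ / 64)) + 3 * γ ≤ α / 100 * δ := by
    have : δ * (κ * γ / 32) ≤ 1 * (κ * γ / 32) := by gcongr; linarith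
    nlinarith
  have hrτ : 2 * r + 3 * τ ≤ α / 100 * (δ * n) := by nlinarith
  have hj' : j * (2 * r + 3 * τ) ≤ α / 100 * n := by
    calc j * (2 * r + 3 * τ) ≤ j * (α / 100 * (δ * n)) := by gcongr
      _ = α / 100 * (j * (δ * n)) := by ring
      _ ≤ α / 100 * n := by gcongr
  have hjr' : j * r ≤ ζ * n := hjr.trans (by gcongr; linarith)
  have hτ' : τ ≤ ζ / 100 * n := hτ.trans (by gcongr; linarith)
  have hζn : ζ * n ≤ α / 80 * n := by gcongr
  have ht' : t ≤ ζ * n := ht.trans (by gcongr; linarith)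
  have hαn : 0 < α * n := by positivity
  refine ⟨hjr, hrτ.trans ?_, by nlinarith, ?_⟩
  · nlinarith [(by positivity : 0 < δ * n)]
  · have : 2 * t + 2 * (j * (2 * r + 3 * τ) + z + 3 * τ) + 4 * (j * r + z) < α / 2 * n := by
      linarith
    nlinarith

theorem exists_isCluster_family.{u} {V : Type u} [Fintype V] [Nonempty V] {E : Set (Finset V)}
    {α ζ : ℝ} (hα : 0 < α) (hζ : 0 < ζ) (hζ1 : ζ ≤ 1)
    (hdeg : ∀ v, α * (Fintype.card V : ℝ) ^ 2 ≤ #{p | Completes E v p}) :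
    ∃ (J : Type u) (_ : Fintype J) (A₀ : J → Finset V), Nonempty J ∧
      Pairwise (Function.onFun Disjoint A₀) ∧ (∀ j, α * ζ / 4 * Fintype.card V ≤ #(A₀ j)) ∧
      (∀ j, IsCluster (Completes E) (α / 2 * (Fintype.card V : ℝ) ^ 2)
        (α ^ 5 * ζ / 128 * (Fintype.card V : ℝ) ^ 3) (A₀ j)) ∧
      (#(univ \ univ.biUnion A₀) : ℝ) ≤ ζ * Fintype.card V := by
  have hΩ : (Fintype.card (V × V) : ℝ) = (Fintype.card V : ℝ) ^ 2 := by
    rw [Fintype.card_prod]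
    push_cast
    ring
  obtain ⟨𝒜, hdis, h𝒜, hrest⟩ := exists_cluster_partition (M := Completes E) hα hζ
    (by simpa only [hΩ] using hdeg)
  obtain ⟨A, hA⟩ : 𝒜.Nonempty := by
    rw [nonempty_iff_ne_empty]
    rintro rfl
    rw [biUnion_empty, sdiff_empty, card_univ] at hrest
    exact hrest.not_ge (mul_le_of_le_one_left (Nat.cast_nonneg _) hζ1)
  refine ⟨𝒜, inferInstance, Subtype.val, ⟨A, hA⟩,
    fun A B hAB => hdis A.2 B.2 (Subtype.coe_injective.ne hAB), fun j => (h𝒜 j j.2).1,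
    fun j => ?_, ?_⟩
  · have := (h𝒜 j j.2).2
    rwa [hΩ, mul_assoc, ← pow_succ'] at this
  · rw [show univ.biUnion (Subtype.val : 𝒜 → Finset V) = 𝒜.biUnion id by ext; simp]
    exact hrest.le

theorem IsTypical.exists_isAbsorber.{u} {V : Type u} [Fintype V] {E : Set (Finset V)}
    {α ζ c t δ κ γ : ℝ} {𝒯 : Finset ((V × V) × V)} (htyp : IsTypical E c t) (hα : 0 < α)
    (hα1 : α ≤ 1) (hζ : 0 < ζ) (hζα : ζ ≤ α / 80) (hc : 0 ≤ c) (hc1 : c ≤ 1)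
    (hδ : δ = α * ζ / 4) (hκ : κ = α ^ 5 * ζ / 128) (hγ : γ = κ / 36)
    (hV : 1 ≤ δ * κ * γ / 64 * Fintype.card V) (htκ : t ≤ κ / 8 * Fintype.card V)
    (htc : t ≤ c * Fintype.card V) (hE : ∀ e ∈ E, #e = 3)
    (hdeg : ∀ v, α * (Fintype.card V : ℝ) ^ 2 ≤ #{p | Completes E v p})
    (h𝒯 : IsFlexible E c (κ * (Fintype.card V : ℝ) ^ 3) (κ * γ / 32 * Fintype.card V) 𝒯)
    (h𝒯γ : #𝒯 ≤ γ * Fintype.card V) :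
    ∃ (J ι : Type u) (_ : Fintype J) (_ : Fintype ι) (p : ι → V × V) (C : Finset V)
      (A : J → Finset V) (r : ℕ), Nonempty J ∧ IsAbsorber E c p C A r ∧
      δ * κ * γ / 64 * Fintype.card V ≤ r ∧ (Fintype.card ι : ℝ) ≤ 3 * ζ * Fintype.card V ∧
      ∀ j, 2 * r ≤ #(A j) := by
  have hδ₀ : 0 < δ := by rw [hδ]; positivity
  have hκ₀ : 0 < κ := by rw [hκ]; positivity
  have hγ₀ : 0 < γ := by rw [hγ]; positivity
  have hn : (0 : ℝ) < Fintype.card V :=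
    pos_of_mul_pos_right (zero_lt_one.trans_le hV) (by positivity)
  have : Nonempty V := Fintype.card_pos_iff.1 (Nat.cast_pos.1 hn)
  obtain ⟨J, _, A₀, hJ, hA₀, hδA, hcluster, hrest⟩ :=
    exists_isCluster_family hα hζ (by linarith) hdeg
  rw [← hδ] at hδA
  rw [← hκ] at hcluster
  let r := ⌊2 * (δ * κ * γ / 64) * Fintype.card V⌋₊
  have hr : (r : ℝ) ≤ 2 * (δ * κ * γ / 64) * Fintype.card V := Nat.floor_le (by positivity)
  have hr' : 2 * (δ * κ * γ / 64) * Fintype.card V < r + 1 := Nat.lt_floor_add_one _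
  have hr₀ : 0 < r := by
    rify
    linarith
  have hα4 : α ^ 4 ≤ α := pow_le_of_le_one hα.le hα1 (by norm_num)
  have hκδ : κ ≤ α * δ / 32 := by
    rw [hκ, hδ]
    calc α ^ 5 * ζ / 128 = α ^ 4 * (α * ζ / 4) / 32 := by ring
      _ ≤ α * (α * ζ / 4) / 32 := by gcongr
  obtain ⟨hjr, hrτ, hι, hs⟩ := absorber_estimates hα1 hζ hζα hδ₀ (by rw [hδ]; nlinarith) hκ₀ hκδ hγ
    hn h𝒯γ (Nat.cast_nonneg (Fintype.card J)) (card_mul_le_card_of_pairwise_disjoint hA₀ hδA) hr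
    hrest htκ
  obtain ⟨q, hq, hqA⟩ := htyp.exists_isAbsorberKit (r := r) (b := 2 * r) hc hc1 htc hE
    (fun v => le_trans (by gcongr; linarith) (hdeg v)) hA₀ (by positivity) hcluster h𝒯 hjr
    (by omega) (fun j => by rify; exact hrτ.trans (hδA j)) (by push_cast; exact hs)
  refine ⟨J, 𝒯 ⊕ ((J × Fin r) ⊕ leftover A₀ 𝒯), inferInstance, inferInstance, _, _, _, r, hJ,
    hq.isAbsorber hE, by linarith, le_trans ?_ hι, hqA⟩
  have : (#(leftover A₀ 𝒯) : ℝ) ≤ #(univ \ univ.biUnion A₀) := mod_cast card_leftover_le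
  simp only [Fintype.card_sum, Fintype.card_prod, Fintype.card_fin, Fintype.card_coe, Nat.cast_add,
    Nat.cast_mul] at this ⊢
  gcongr

theorem exists_isAbsorber.{u} {α ζ c : ℝ} (hα : 0 < α) (hα1 : α ≤ 1) (hζ : 0 < ζ) (hζα : ζ ≤ α / 80)
    (hc : 0 < c) (hc1 : c ≤ 1) :
    ∃ (ρ ε₀ : ℝ) (n₀ : ℕ), 0 < ρ ∧ 0 < ε₀ ∧ ∀ (V : Type u) [Fintype V] (E : Set (Finset V)) (t : ℝ),
      n₀ ≤ Fintype.card V → (∀ e ∈ E, #e = 3) → t ≤ ε₀ * Fintype.card V → IsTypical E c t →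
      (∀ v, α * (Fintype.card V : ℝ) ^ 2 ≤ #{p | Completes E v p}) →
      ∃ (J ι : Type u) (_ : Fintype J) (_ : Fintype ι) (p : ι → V × V) (C : Finset V)
        (A : J → Finset V) (r : ℕ), Nonempty J ∧ IsAbsorber E c p C A r ∧
        ρ * Fintype.card V ≤ r ∧ (Fintype.card ι : ℝ) ≤ 3 * ζ * Fintype.card V ∧
        ∀ j, 2 * r ≤ #(A j) := by
  set δ : ℝ := α * ζ / 4 with hδ
  set κ : ℝ := α ^ 5 * ζ / 128 with hκ
  set γ : ℝ := κ / 36 with hγ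
  have hκ1 : κ ≤ 1 := by
    have : α ^ 5 ≤ 1 := pow_le_one₀ hα.le hα1
    rw [hκ]
    nlinarith
  obtain ⟨n₀, hn₀⟩ := exists_flexible_triples.{u} (κ := κ) (γ := γ) (by positivity) hκ1
    (by positivity) le_rfl
  refine ⟨δ * κ * γ / 64, min (κ / 8) c, max n₀ ⌈1 / (δ * κ * γ / 64)⌉₊, by positivity,
    by positivity, fun V _ E t hV hE ht htyp hdeg => ?_⟩
  have hρ := (div_le_iff₀' (by positivity)).1 (Nat.ceil_le.1 ((le_max_right _ _).trans hV))
  have htκ : t ≤ κ / 8 * Fintype.card V := ht.trans (by gcongr; exact min_le_left _ _)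
  have htc : t ≤ c * Fintype.card V := ht.trans (by gcongr; exact min_le_right _ _)
  obtain ⟨𝒯, h𝒯γ, h𝒯⟩ := hn₀ V E c t ((le_max_left _ _).trans hV) htyp hc.le hc1 htc htκ
  exact htyp.exists_isAbsorber hα hα1 hζ hζα hc.le hc1 hδ hκ hγ hρ htκ htc hE hdeg h𝒯 h𝒯γ

/-! ### Separable graphs -/

section Separable

universe u

variable {W : Type u} [Fintype W] {H : SimpleGraph W} {Δ : ℕ}

lemma card_nonisolated_le : #{w | ∃ x, H.Adj w x} ≤ 2 * edgeCnt H := by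
  calc #{w | ∃ x, H.Adj w x} ≤ #((edgesIn H univ).biUnion Sym2.toFinset) := card_le_card fun w hw =>
        by
          obtain ⟨x, hx⟩ := (mem_filter.1 hw).2
          exact mem_biUnion.2 ⟨s(w, x), mk_mem_edgesIn.2 ⟨hx, mem_univ _, mem_univ _⟩, by simp⟩
    _ ≤ #(edgesIn H univ) * 2 := card_biUnion_le_card_mul _ _ _ fun e _ => by
      induction e with | _ x y => exact Sym2.toFinset_mk_eq (x := x) (y := y) ▸ card_le_two
    _ = 2 * edgeCnt H := by simp [edgesIn, edgeCnt, mul_comm]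

/-- The vertices adjacent to an end of the edge `a`; both ends of `a` are among them. -/
noncomputable def edgeNbhd (a : H.Dart) : Finset W := {z | H.Adj a.fst z ∨ H.Adj a.snd z}

lemma card_darts_fst_mem_le (hdeg : ∀ w, degOf H w ≤ Δ) (S : Finset W) :
    #{a : H.Dart | a.fst ∈ S} ≤ Δ * #S := by
  calc #{a : H.Dart | a.fst ∈ S} ≤ #(S.biUnion fun x => ({a | a.fst = x} : Finset H.Dart)) :=
        card_le_card fun a ha => by simpa using ha
    _ ≤ #S * Δ := card_biUnion_le_card_mul _ _ _ fun x _ => by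
      rw [H.dart_fst_fiber_card_eq_degree, ← H.card_neighborFinset_eq_degree,
        H.neighborFinset_eq_filter]
      exact hdeg x
    _ = Δ * #S := mul_comm _ _

lemma card_darts_snd_mem_le (hdeg : ∀ w, degOf H w ≤ Δ) (S : Finset W) :
    #{a : H.Dart | a.snd ∈ S} ≤ Δ * #S :=
  (card_le_card_of_injOn SimpleGraph.Dart.symm (by simp [Set.MapsTo])
    (SimpleGraph.Dart.symm_involutive.injective.injOn)).trans (card_darts_fst_mem_le hdeg S)

lemma card_edgeNbhd_le (hdeg : ∀ w, degOf H w ≤ Δ) (a : H.Dart) : #(edgeNbhd a) ≤ 2 * Δ := by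
  rw [edgeNbhd, filter_or]
  exact (card_union_le _ _).trans ((add_le_add (hdeg _) (hdeg _)).trans_eq (two_mul Δ).symm)

lemma card_not_disjoint_edgeNbhd_le (hdeg : ∀ w, degOf H w ≤ Δ) (a : H.Dart) :
    #{b : H.Dart | ¬ Disjoint (edgeNbhd b) (edgeNbhd a)} ≤ 4 * Δ ^ 3 := by
  have hz (z : W) : #{b : H.Dart | z ∈ edgeNbhd b} ≤ 2 * Δ ^ 2 := by
    let N : Finset W := {x | H.Adj z x}
    have hN : Δ * #N ≤ Δ ^ 2 := (Nat.mul_le_mul_left Δ (hdeg z)).trans_eq (sq Δ).symm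
    calc _ ≤ #(({b | b.fst ∈ N} : Finset H.Dart) ∪ ({b | b.snd ∈ N} : Finset H.Dart)) :=
          card_le_card fun b hb => by simpa [edgeNbhd, N, H.adj_comm z] using hb
      _ ≤ Δ ^ 2 + Δ ^ 2 := (card_union_le _ _).trans
          (add_le_add ((card_darts_fst_mem_le hdeg N).trans hN)
            ((card_darts_snd_mem_le hdeg N).trans hN))
      _ = 2 * Δ ^ 2 := (two_mul _).symm
  calc _ ≤ #((edgeNbhd a).biUnion fun z => ({b | z ∈ edgeNbhd b} : Finset H.Dart)) :=
        card_le_card fun b hb => by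
          obtain ⟨z, hzb, hza⟩ := not_disjoint_iff.1 (mem_filter.1 hb).2
          exact mem_biUnion.2 ⟨z, hza, by simpa using hzb⟩
    _ ≤ #(edgeNbhd a) * (2 * Δ ^ 2) := card_biUnion_le_card_mul _ _ _ fun z _ => hz z
    _ ≤ 2 * Δ * (2 * Δ ^ 2) := by gcongr; exact card_edgeNbhd_le hdeg a
    _ = 4 * Δ ^ 3 := by ring

lemma exists_subset_sum_mem_Icc {Q : Type*} {f : Q → ℝ} {s : Finset Q} {L M : ℝ}
    (hM : ∀ a ∈ s, f a ≤ M) (hLM : 0 ≤ L + M) (h : L ≤ ∑ a ∈ s, f a) :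
    ∃ T ⊆ s, ∑ a ∈ T, f a ∈ Set.Icc L (L + M) := by
  induction s using Finset.induction_on with
  | empty => exact ⟨∅, subset_rfl, h, by simpa using hLM⟩
  | insert a s ha ih =>
    by_cases hs : L ≤ ∑ a ∈ s, f a
    · obtain ⟨T, hT, hTL⟩ := ih (fun b hb => hM b (mem_insert_of_mem hb)) hs
      exact ⟨T, hT.trans (subset_insert _ _), hTL⟩
    · refine ⟨insert a s, subset_rfl, h, ?_⟩
      rw [sum_insert ha]
      linarith [hM a (mem_insert_self a s)]

/- Only the `a` with `β * g a ≤ f a` are used. -/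
lemma exists_subset_le_sum_and_mul_sum_le {Q : Type*} {f g : Q → ℝ} {s : Finset Q} {L M β : ℝ}
    (hM : ∀ a ∈ s, f a ≤ M) (hLM : 0 ≤ L + M) (hg : ∀ a ∈ s, 0 ≤ β * g a)
    (h : L + β * ∑ a ∈ s, g a ≤ ∑ a ∈ s, f a) :
    ∃ T ⊆ s, L ≤ ∑ a ∈ T, f a ∧ β * ∑ a ∈ T, g a ≤ L + M := by
  set s' : Finset Q := {a ∈ s | β * g a ≤ f a}
  have hs' : ∑ a ∈ s, f a ≤ ∑ a ∈ s', f a + β * ∑ a ∈ s, g a := by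
    rw [mul_sum, sum_filter, ← sum_add_distrib]
    refine sum_le_sum fun a ha => ?_
    split_ifs <;> linarith [hg a ha]
  obtain ⟨T, hT, hTL, hTM⟩ := exists_subset_sum_mem_Icc (s := s') (L := L)
    (fun a ha => hM a (filter_subset _ _ ha)) hLM (by linarith)
  refine ⟨T, hT.trans (filter_subset _ _), hTL, le_trans ?_ hTM⟩
  rw [mul_sum]
  exact sum_le_sum fun a ha => (mem_filter.1 (hT ha)).2

lemma Separable.exists_component_map {μ : ℝ} (h : Separable H μ) :
    ∃ (X : Finset W) (Q : Type u) (κ : W → Q), #X ≤ μ * Fintype.card W ∧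
      (∀ x ∉ X, ∀ y ∉ X, H.Adj x y → κ x = κ y) ∧
      ∀ a, #{w | w ∉ X ∧ κ w = a} ≤ μ * Fintype.card W := by
  obtain ⟨X, hX, hcomp⟩ := h
  let κ (w : W) : Option (H.induce (X : Set W)ᶜ).ConnectedComponent :=
    if hw : w ∉ X then some ((H.induce (X : Set W)ᶜ).connectedComponentMk ⟨w, hw⟩) else none
  refine ⟨X, _, κ, hX, fun x hx y hy hxy => ?_, fun a => ?_⟩
  · have hadj : (H.induce (X : Set W)ᶜ).Adj ⟨x, hx⟩ ⟨y, hy⟩ := hxy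
    simp only [κ, dif_pos hx, dif_pos hy, SimpleGraph.ConnectedComponent.sound hadj.reachable]
  · cases a with
    | none =>
      refine (Nat.cast_le.2 (card_le_card (t := ∅) fun w hw => ?_)).trans
        (by simpa using (Nat.cast_nonneg #X).trans hX)
      obtain ⟨hwX, hw⟩ : w ∉ X ∧ κ w = none := by simpa using hw
      simp [κ, hwX] at hw
    | some a =>
      refine le_trans ?_ (hcomp a)
      rw [← Set.ncard_image_of_injective _ Subtype.val_injective, Set.ncard_eq_toFinset_card']
      refine mod_cast card_le_card fun w hw => ?_
      obtain ⟨hwX, hw⟩ : w ∉ X ∧ κ w = some a := by simpa using hw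
      simpa [κ, hwX] using hw

section Components

variable {X : Finset W} {Q : Type*} {κ : W → Q}

lemma two_mul_edgeCnt_le_card_add (hdeg : ∀ w, degOf H w ≤ Δ) (X : Finset W) :
    2 * edgeCnt H ≤ #{b : H.Dart | b.fst ∉ X ∧ b.snd ∉ X} + 2 * Δ * #X := by
  have hcov : (univ : Finset H.Dart) ⊆ ({b | b.fst ∉ X ∧ b.snd ∉ X} : Finset H.Dart) ∪
      (({b | b.fst ∈ X} : Finset H.Dart) ∪ ({b | b.snd ∈ X} : Finset H.Dart)) := by
    intro b _
    simp only [mem_union, mem_filter_univ]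
    tauto
  calc 2 * edgeCnt H = Fintype.card H.Dart := by
        rw [H.dart_card_eq_twice_card_edges, edgeCnt]
        congr 2
        ext e
        simp
    _ ≤ _ := card_le_card hcov
    _ ≤ _ + (Δ * #X + Δ * #X) := (card_union_le _ _).trans (add_le_add_right
        ((card_union_le _ _).trans (add_le_add (card_darts_fst_mem_le hdeg X)
          (card_darts_snd_mem_le hdeg X))) _)
    _ = _ := by ring

/- A union `K` of components of `H - X`, each containing at least `β / 2` times as many edges as
vertices. -/
lemma exists_dense_part (hdeg : ∀ w, degOf H w ≤ Δ) {m β L : ℝ} (hL : 0 ≤ L) (hβ : 0 ≤ β)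
    (hX : #X ≤ m) (hκ : ∀ x ∉ X, ∀ y ∉ X, H.Adj x y → κ x = κ y)
    (hκm : ∀ a, #{w | w ∉ X ∧ κ w = a} ≤ m)
    (hLe : L + β * Fintype.card W + 2 * Δ * m ≤ 2 * edgeCnt H) :
    ∃ K : Finset W, Disjoint K X ∧ (∀ x ∈ K, ∀ y ∉ X, H.Adj x y → y ∈ K) ∧
      β * #K ≤ L + Δ * m ∧ L ≤ #{a : H.Dart | a.fst ∈ K ∧ a.snd ∈ K} := by
  let S (a : Q) : Finset W := {w ∈ ({w | w ∉ X} : Finset W) | κ w = a}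
  let D (a : Q) : Finset H.Dart := {b ∈ ({b | b.fst ∉ X ∧ b.snd ∉ X} : Finset H.Dart) | κ b.fst = a}
  have hS (a) : #(S a) ≤ m := by simpa only [S, filter_filter] using hκm a
  have hDS (a) : (#(D a) : ℝ) ≤ Δ * #(S a) :=
    mod_cast (card_le_card fun b hb => by
      simp only [D, S, mem_filter, mem_univ, true_and] at hb ⊢
      exact ⟨hb.1.1, hb.2⟩).trans (card_darts_fst_mem_le hdeg (S a))
  have hDsum : #{b : H.Dart | b.fst ∉ X ∧ b.snd ∉ X} = ∑ a ∈ univ.image κ, #(D a) :=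
    card_eq_sum_card_fiberwise fun _ _ => mem_image_of_mem κ (mem_univ _)
  have hSsum : #({w | w ∉ X} : Finset W) = ∑ a ∈ univ.image κ, #(S a) :=
    card_eq_sum_card_fiberwise fun _ _ => mem_image_of_mem κ (mem_univ _)
  obtain ⟨T, -, hTL, hTM⟩ := exists_subset_le_sum_and_mul_sum_le (s := univ.image κ)
    (f := fun a => (#(D a) : ℝ)) (g := fun a => (#(S a) : ℝ)) (L := L) (β := β) (M := Δ * m)
    (fun a _ => (hDS a).trans (by gcongr; exact hS a))
    (add_nonneg hL (mul_nonneg (Nat.cast_nonneg _) ((Nat.cast_nonneg _).trans hX)))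
    (fun a _ => by positivity) (by
      have hdarts := two_mul_edgeCnt_le_card_add hdeg X
      have hSW := hSsum.symm.trans_le (card_le_univ _)
      rw [hDsum] at hdarts
      rify at hdarts hSW
      have : β * ∑ a ∈ univ.image κ, (#(S a) : ℝ) ≤ β * Fintype.card W := by gcongr
      have : 2 * Δ * (#X : ℝ) ≤ 2 * Δ * m := by gcongr
      linarith)
  refine ⟨T.biUnion S, (disjoint_biUnion_left _ _ _).2 fun a _ => disjoint_left.2 fun w hw => by
    simp only [S, mem_filter] at hw; tauto, fun x hx y hy hxy => ?_, le_trans ?_ hTM, hTL.trans ?_⟩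
  · simp only [S, mem_biUnion, mem_filter, mem_univ, true_and] at hx ⊢
    obtain ⟨a, ha, hxX, rfl⟩ := hx
    exact ⟨_, ha, hy, (hκ x hxX y hy hxy).symm⟩
  · gcongr
    exact mod_cast card_biUnion_le
  · rw [← Nat.cast_sum, ← card_biUnion fun a _ b _ hab =>
      disjoint_left.2 fun e ha hb => hab ((mem_filter.1 ha).2.symm.trans (mem_filter.1 hb).2)]
    exact_mod_cast card_le_card fun b hb => by
      simp only [D, S, mem_biUnion, mem_filter, mem_univ, true_and] at hb ⊢
      obtain ⟨a, ha, ⟨hfst, hsnd⟩, rfl⟩ := hb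
      exact ⟨⟨_, ha, hfst, rfl⟩, _, ha, hsnd, (hκ _ hfst _ hsnd b.adj).symm⟩

end Components

end Separable

/-! ### Graphs with few edges -/

section FewEdges

variable {V W : Type*} [Fintype V] [Fintype W] {E : Set (Finset V)} {H : SimpleGraph W}

lemma IsExpansionOn.exists_univ_of_forall_adj_mem [Nonempty V] {D : Finset W} {ρ : W ⊕ Sym2 W → V}
    (h : IsExpansionOn E H D ρ) (hD : ∀ x y, H.Adj x y → x ∈ D)
    (hcard : Fintype.card W + edgeCnt H ≤ Fintype.card V) :
    ∃ ρ', IsExpansionOn E H univ ρ' := by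
  have hedges : edgesIn H univ \ edgesIn H D = ∅ := sdiff_eq_empty_iff_subset.2 fun e he => by
    induction e with | _ x y => ?_
    have hxy := (mk_mem_edgesIn.1 he).1
    exact mk_mem_edgesIn.2 ⟨hxy, hD x y hxy, hD y x hxy.symm⟩
  have hsub : expVerts H D ⊆ expVerts H univ := expVerts_mono (subset_univ D)
  obtain ⟨g, hginj, hg⟩ := exists_injOn_mem_of_card_le (I := expVerts H univ \ expVerts H D)
    (F := fun _ => ((expVerts H D).image ρ)ᶜ) fun _ _ => by
      rw [card_compl, card_image_of_injOn h.1, card_sdiff_of_subset hsub, card_expVerts_univ]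
      omega
  let ρ' := (expVerts H D).piecewise ρ g
  have hρ' : Set.EqOn ρ' ρ (expVerts H D) := fun i hi => piecewise_eq_of_mem _ _ _ hi
  have hρ'g : Set.EqOn ρ' g (expVerts H univ \ expVerts H D : Finset _) := fun i hi =>
    piecewise_eq_of_notMem _ _ _ (mem_sdiff.1 hi).2
  refine ⟨ρ', (h.congr hρ').of_expVerts_subset hsub (F := (expVerts H D).image ρ)
    (fun i hi => hρ' hi ▸ mem_image_of_mem ρ hi) (hginj.congr hρ'g.symm)
    (fun i hi => hρ'g hi ▸ mem_compl.1 (hg i hi)) fun e he => ?_⟩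
  rw [hedges] at he
  exact absurd he (notMem_empty e)

theorem IsTypical.hasExpansionCopy_of_few_edges {c t : ℝ} {Δ : ℕ} [Nonempty V]
    (hE : IsTypical E c t) (hc : 0 ≤ c) (hc1 : c ≤ 1) (hdeg : ∀ w, degOf H w ≤ Δ)
    (hcard : Fintype.card W + edgeCnt H ≤ Fintype.card V) (ht : t ≤ c ^ Δ * Fintype.card V)
    (hV : Δ * t + 2 * edgeCnt H < c ^ Δ * Fintype.card V)
    (hcV : (Δ + 1) * (2 * edgeCnt H) ≤ c * Fintype.card V) : HasExpansionCopy E H := by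
  set K : Finset W := {w | ∃ x, H.Adj w x}
  have hKcard : (#K : ℝ) ≤ 2 * edgeCnt H := mod_cast card_nonisolated_le
  have hempty : expVerts H ∅ = ∅ := by
    rw [expVerts, eq_empty_of_forall_notMem (s := edgesIn H ∅)
      (Sym2.ind fun x y => by simp [mk_mem_edgesIn]), empty_disjSum, map_empty]
  obtain ⟨ρ, hρ, -⟩ := hE.exists_extend hc hc1 hdeg (A := fun _ => univ)
    (fun _ => by rwa [card_univ]) (disjoint_empty_left K) (F := ∅)
    (ρ := fun _ => Classical.arbitrary V) (hρ := ⟨by simp [hempty], fun e he => by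
      simpa [hempty] using inr_mem_expVerts.2 he⟩)
    (by simp [hempty])
    (fun w _ => by
      rw [empty_inter, card_empty, card_univ, Nat.cast_zero]
      linarith)
    (by simp)
    (fun e _ => by
      rw [empty_inter, card_empty, card_univ, Nat.cast_zero, zero_add]
      exact (mul_le_mul_of_nonneg_left hKcard (by positivity)).trans hcV)
  obtain ⟨ρ', hρ'⟩ := hρ.exists_univ_of_forall_adj_mem
    (fun x y hxy => mem_union_right _ (mem_filter.2 ⟨mem_univ _, y, hxy⟩)) hcard
  exact hρ'.hasExpansionCopy

end FewEdges

/-! ### Reserving edges for the absorber -/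

section ReservedDarts

variable {V W T ι : Type*} {E : Set (Finset V)} {H : SimpleGraph W} {p : ι → V × V}

/-- The two entries of each of the pairs `p i`. -/
def pairEnds (p : ι → T × T) : ι ⊕ ι → T := Sum.elim (fun i => (p i).1) fun i => (p i).2

lemma pairEnds_injective {p : ι → T × T} (hne : ∀ i, (p i).1 ≠ (p i).2)
    (hp : Pairwise (Function.onFun Disjoint fun i => pairVerts (p i))) :
    Function.Injective (pairEnds p) := by
  have hp' {i j : ι} {x : T} (hi : x ∈ pairVerts (p i)) (hj : x ∈ pairVerts (p j)) : i = j := by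
    by_contra hij
    exact disjoint_left.1 (hp hij) hi hj
  have h₁ (i) : (p i).1 ∈ pairVerts (p i) := by simp [pairVerts]
  have h₂ (i) : (p i).2 ∈ pairVerts (p i) := by simp [pairVerts]
  rintro (i | i) (j | j) h <;> simp only [pairEnds, Sum.elim_inl, Sum.elim_inr] at h
  · obtain rfl := hp' (h ▸ h₁ i) (h₁ j)
    rfl
  · obtain rfl := hp' (h ▸ h₁ i) (h₂ j)
    exact absurd h (hne i)
  · obtain rfl := hp' (h ▸ h₂ i) (h₁ j)
    exact absurd h.symm (hne i)
  · obtain rfl := hp' (h ▸ h₂ i) (h₂ j)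
    rfl

/-- `H` without the edges of the darts `g i`, whose expansion vertices an absorber provides last. -/
def deleteDarts (g : ι → H.Dart) : SimpleGraph W := H.deleteEdges (Set.range fun i => (g i).edge)

/-- The ends of the darts `g i`. -/
noncomputable def dartEnds [Fintype ι] (g : ι → H.Dart) : Finset W :=
  univ.image (pairEnds fun i => (g i).toProd)

variable {g : ι → H.Dart}

lemma deleteDarts_le : deleteDarts g ≤ H := H.deleteEdges_le _

lemma mem_dartEnds [Fintype ι] {x : W} :
    x ∈ dartEnds g ↔ ∃ i, x ∈ pairVerts (g i).toProd := by
  simp only [dartEnds, pairEnds, pairVerts, mem_image, mem_univ, true_and, Sum.exists,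
    Sum.elim_inl, Sum.elim_inr, mem_insert, mem_singleton, ← exists_or, eq_comm (a := x)]

lemma fst_mem_dartEnds [Fintype ι] (i : ι) : (g i).fst ∈ dartEnds g :=
  mem_dartEnds.2 ⟨i, by simp [pairVerts]⟩

lemma snd_mem_dartEnds [Fintype ι] (i : ι) : (g i).snd ∈ dartEnds g :=
  mem_dartEnds.2 ⟨i, by simp [pairVerts]⟩

variable [Fintype W]

lemma mem_edgeNbhd_of_adj {a : H.Dart} {x w : W} (hx : x ∈ pairVerts a.toProd) (hxw : H.Adj x w) :
    w ∈ edgeNbhd a := by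
  simp only [pairVerts, mem_insert, mem_singleton] at hx
  rcases hx with rfl | rfl
  exacts [by simp [edgeNbhd, hxw], by simp [edgeNbhd, hxw]]

lemma pairVerts_subset_edgeNbhd (a : H.Dart) : pairVerts a.toProd ⊆ edgeNbhd a := by
  intro x hx
  simp only [pairVerts, mem_insert, mem_singleton] at hx
  rcases hx with rfl | rfl
  exacts [by simp [edgeNbhd, a.adj.symm], by simp [edgeNbhd, a.adj]]

lemma eq_of_mem_edgeNbhd (hg : Pairwise (Function.onFun Disjoint fun i => edgeNbhd (g i))) {i j : ι}
    {w : W} (hi : w ∈ edgeNbhd (g i)) (hj : w ∈ edgeNbhd (g j)) : i = j := by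
  by_contra hij
  exact disjoint_left.1 (hg hij) hi hj

lemma pairEnds_toProd_injective
    (hg : Pairwise (Function.onFun Disjoint fun i => edgeNbhd (g i))) :
    Function.Injective (pairEnds fun i => (g i).toProd) :=
  pairEnds_injective (fun i => (g i).adj.ne) fun _ _ hij =>
    (hg hij).mono (pairVerts_subset_edgeNbhd _) (pairVerts_subset_edgeNbhd _)

lemma edge_injective (hg : Pairwise (Function.onFun Disjoint fun i => edgeNbhd (g i))) :
    Function.Injective fun i => (g i).edge := fun i j hij => by
  have hfst : (g i).fst ∈ s((g j).fst, (g j).snd) := by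
    rw [← show s((g i).fst, (g i).snd) = s((g j).fst, (g j).snd) from hij]
    exact Sym2.mem_mk_left _ _
  refine eq_of_mem_edgeNbhd hg (w := (g i).fst)
    (pairVerts_subset_edgeNbhd _ (by simp [pairVerts])) (pairVerts_subset_edgeNbhd _ ?_)
  simpa only [pairVerts, mem_insert, mem_singleton] using Sym2.mem_iff.1 hfst

lemma degOf_deleteDarts_le (w : W) : degOf (deleteDarts g) w ≤ degOf H w :=
  card_le_card (monotone_filter_right _ fun _ _ h => deleteDarts_le h)

lemma mem_edgesIn_deleteDarts {D : Finset W} {e : Sym2 W} :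
    e ∈ edgesIn (deleteDarts g) D ↔ e ∈ edgesIn H D ∧ ∀ i, (g i).edge ≠ e := by
  simp only [edgesIn, deleteDarts, mem_filter, mem_univ, true_and, SimpleGraph.edgeSet_deleteEdges,
    Set.mem_sdiff, Set.mem_range, not_exists]
  tauto

lemma mem_edgesIn_univ_sdiff_deleteDarts {e : Sym2 W} :
    e ∈ edgesIn H univ \ edgesIn (deleteDarts g) univ ↔ ∃ i, (g i).edge = e := by
  rw [mem_sdiff, mem_edgesIn_deleteDarts]
  constructor
  · rintro ⟨he, h⟩
    by_contra! hne
    exact h ⟨he, hne⟩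
  · rintro ⟨i, rfl⟩
    exact ⟨by simp [edgesIn], fun h => h.2 i rfl⟩

lemma edgesIn_deleteDarts_dartEnds [Fintype ι]
    (hg : Pairwise (Function.onFun Disjoint fun i => edgeNbhd (g i))) :
    edgesIn (deleteDarts g) (dartEnds g) = ∅ := by
  refine eq_empty_of_forall_notMem fun e he => ?_
  induction e with | _ x y => ?_
  obtain ⟨he, hne⟩ := mem_edgesIn_deleteDarts.1 he
  obtain ⟨hxy, hx, hy⟩ := mk_mem_edgesIn.1 he
  obtain ⟨i, hi⟩ := mem_dartEnds.1 hx
  obtain ⟨j, hj⟩ := mem_dartEnds.1 hy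
  obtain rfl := eq_of_mem_edgeNbhd hg (mem_edgeNbhd_of_adj hi hxy) (pairVerts_subset_edgeNbhd _ hj)
  refine hne i ?_
  simp only [pairVerts, mem_insert, mem_singleton] at hi hj
  rcases hi with rfl | rfl <;> rcases hj with rfl | rfl
  exacts [(H.irrefl hxy).elim, rfl, Sym2.eq_swap, (H.irrefl hxy).elim]

lemma card_expVerts_deleteDarts_add [Fintype ι]
    (hg : Pairwise (Function.onFun Disjoint fun i => edgeNbhd (g i))) :
    #(expVerts (deleteDarts g) univ) + Fintype.card ι = Fintype.card W + edgeCnt H := by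
  have hsub : edgesIn (deleteDarts g) univ ⊆ edgesIn H univ := fun e he =>
    (mem_edgesIn_deleteDarts.1 he).1
  have hcard := card_sdiff_add_card_eq_card hsub
  have himage : edgesIn H univ \ edgesIn (deleteDarts g) univ = univ.image fun i => (g i).edge := by
    ext e
    simp only [mem_edgesIn_univ_sdiff_deleteDarts, mem_image, mem_univ, true_and]
  rw [himage, card_image_of_injective _ (edge_injective hg), card_univ] at hcard
  rw [← card_expVerts_univ, expVerts, expVerts, card_disjSum, card_disjSum]
  omega

lemma exists_isExpansionOn_dartEnds [Fintype ι] [Nonempty V] (hne : ∀ i, (p i).1 ≠ (p i).2)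
    (hp : Pairwise (Function.onFun Disjoint fun i => pairVerts (p i)))
    (hg : Pairwise (Function.onFun Disjoint fun i => edgeNbhd (g i))) :
    ∃ ρ, IsExpansionOn E (deleteDarts g) (dartEnds g) ρ ∧
      ∀ i, ρ (Sum.inl (g i).fst) = (p i).1 ∧ ρ (Sum.inl (g i).snd) = (p i).2 := by
  have hinj := pairEnds_toProd_injective hg
  let φ : W → V := Function.extend (pairEnds fun i => (g i).toProd) (pairEnds p)
    fun _ => Classical.arbitrary V
  have hφ (k) : φ (pairEnds (fun i => (g i).toProd) k) = pairEnds p k := hinj.extend_apply _ _ _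
  refine ⟨Sum.elim φ fun _ => Classical.arbitrary V, ⟨?_, ?_⟩, fun i =>
    ⟨hφ (Sum.inl i), hφ (Sum.inr i)⟩⟩
  · rw [expVerts, edgesIn_deleteDarts_dartEnds hg]
    refine injOn_disjSum (fun x hx y hy hxy => ?_) (by simp) (by simp)
    obtain ⟨k, -, rfl⟩ := mem_image.1 hx
    obtain ⟨l, -, rfl⟩ := mem_image.1 hy
    exact congrArg _ (pairEnds_injective hne hp
      (by simpa only [Function.comp_apply, Sum.elim_inl, hφ] using hxy))
  · rw [edgesIn_deleteDarts_dartEnds hg]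
    simp

lemma exists_mem_pairVerts_of_mem_expVerts_dartEnds [Fintype ι]
    (hg : Pairwise (Function.onFun Disjoint fun i => edgeNbhd (g i))) {ρ : W ⊕ Sym2 W → V}
    (hρ : ∀ i, ρ (Sum.inl (g i).fst) = (p i).1 ∧ ρ (Sum.inl (g i).snd) = (p i).2)
    {x : W ⊕ Sym2 W} (hx : x ∈ expVerts (deleteDarts g) (dartEnds g)) :
    ∃ i, ρ x ∈ pairVerts (p i) := by
  rcases x with x | e
  · obtain ⟨i, hi⟩ := mem_dartEnds.1 (inl_mem_expVerts.1 hx)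
    refine ⟨i, ?_⟩
    simp only [pairVerts, mem_insert, mem_singleton] at hi ⊢
    rcases hi with rfl | rfl
    exacts [.inl (hρ i).1, .inr (hρ i).2]
  · rw [inr_mem_expVerts, edgesIn_deleteDarts_dartEnds hg] at hx
    exact absurd hx (notMem_empty e)

lemma IsExpansionOn.exists_of_deleteDarts {ρ : W ⊕ Sym2 W → V}
    (h : IsExpansionOn E (deleteDarts g) univ ρ)
    (hg : Pairwise (Function.onFun Disjoint fun i => edgeNbhd (g i)))
    (hρ : ∀ i, ρ (Sum.inl (g i).fst) = (p i).1 ∧ ρ (Sum.inl (g i).snd) = (p i).2) {k : ι → V}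
    (hk : Function.Injective k) (hkρ : ∀ i, k i ∉ (expVerts (deleteDarts g) univ).image ρ)
    (hkp : ∀ i, Completes E (k i) (p i)) : ∃ ρ', IsExpansionOn E H univ ρ' := by
  let ρ' : W ⊕ Sym2 W → V :=
    Sum.elim (ρ ∘ Sum.inl) (Function.extend (fun i => (g i).edge) k (ρ ∘ Sum.inr))
  have hρ' : Set.EqOn ρ' ρ (expVerts (deleteDarts g) univ) := by
    rintro (w | e) he
    · rfl
    · refine Function.extend_apply' _ _ _ fun ⟨i, hi⟩ => ?_
      exact (mem_edgesIn_deleteDarts.1 (inr_mem_expVerts.1 he)).2 i hi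
  have hρ'k (i) : ρ' (Sum.inr (g i).edge) = k i := (edge_injective hg).extend_apply _ _ _
  have hnew {x} (hx : x ∈ expVerts H univ \ expVerts (deleteDarts g) univ) :
      ∃ i, x = Sum.inr (g i).edge := by
    rcases x with w | e
    · simp at hx
    · have he : e ∈ edgesIn H univ \ edgesIn (deleteDarts g) univ := by simpa using hx
      obtain ⟨i, rfl⟩ := mem_edgesIn_univ_sdiff_deleteDarts.1 he
      exact ⟨i, rfl⟩
  refine ⟨ρ', (h.congr hρ').of_expVerts_subset (fun x hx => ?_)
    (F := (expVerts (deleteDarts g) univ).image ρ) (fun x hx => hρ' hx ▸ mem_image_of_mem ρ hx)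
    (fun x hx y hy hxy => ?_) (fun x hx => ?_) fun e he => ?_⟩
  · rcases x with w | e
    · simp
    · exact inr_mem_expVerts.2 (mem_edgesIn_deleteDarts.1 (inr_mem_expVerts.1 hx)).1
  · obtain ⟨i, rfl⟩ := hnew hx
    obtain ⟨j, rfl⟩ := hnew hy
    rw [hρ'k, hρ'k] at hxy
    rw [hk hxy]
  · obtain ⟨i, rfl⟩ := hnew hx
    rw [hρ'k]
    exact hkρ i
  · obtain ⟨i, rfl⟩ := mem_edgesIn_univ_sdiff_deleteDarts.1 he
    rw [hρ'k]
    rw [show (g i).edge = s((g i).fst, (g i).snd) from rfl, Sym2.map_mk, insert_toFinset_mk]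
    simpa [ρ', Completes, ← (hρ i).1, ← (hρ i).2] using hkp i

end ReservedDarts

/-! ### Graphs with many edges -/

section CorePools

variable {V W : Type*} [Fintype V] [Fintype W] {E : Set (Finset V)} {c t b : ℝ}
  {H : SimpleGraph W} {Δ : ℕ} {D D₁ : Finset W} {S : Finset V}

/-- The pools for extending a copy `φ` of the expansion of `H[D]` to `H[D₁]`: inside `D₁` everything
compatible with `φ`, and outside `D₁` only the set `S`, in which later candidates are to survive. -/
noncomputable def corePools (E : Set (Finset V)) (c : ℝ) (H : SimpleGraph W) (D D₁ : Finset W)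
    (φ : W → V) (S : Finset V) : W ⊕ Sym2 W → Finset V :=
  Sum.elim (fun w => if w ∈ D₁ then candidates E c H D φ (fun _ => univ) univ w else S)
    fun e => if e ∈ edgesIn H D₁ then univ else S

lemma le_mul_card_corePools (hc : 0 ≤ c) {φ : W → V}
    (hb : ∀ w, b ≤ #(candidates E c H D φ (fun _ => univ) univ w)) (htb : t ≤ c ^ Δ * b)
    (hS : t ≤ c ^ Δ * #S) (i : W ⊕ Sym2 W) : t ≤ c ^ Δ * #(corePools E c H D D₁ φ S i) := by
  have hcΔ : 0 ≤ c ^ Δ := pow_nonneg hc Δ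
  rcases i with w | e <;> simp only [corePools, Sum.elim_inl, Sum.elim_inr]
  · split_ifs
    exacts [htb.trans (mul_le_mul_of_nonneg_left (hb w) hcΔ), hS]
  · split_ifs
    · induction e with | _ x y => ?_
      exact htb.trans (mul_le_mul_of_nonneg_left
        ((hb x).trans (mod_cast card_le_card (subset_univ _))) hcΔ)
    · exact hS

lemma IsTypical.exists_extend_core [Nonempty V] (hE : IsTypical E c t) (hc : 0 ≤ c) (hc1 : c ≤ 1)
    (hdeg : ∀ w, degOf H w ≤ Δ) (hD : D ⊆ D₁) (hclosed : ∀ x ∈ D, ∀ w, H.Adj x w → w ∈ D₁)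
    {ρ₀ : W ⊕ Sym2 W → V} (hρ₀ : IsExpansionOn E H D ρ₀) {F : Finset V}
    (hF : ∀ i ∈ expVerts H D, ρ₀ i ∈ F)
    (hb : ∀ w, b ≤ #(candidates E c H D (ρ₀ ∘ Sum.inl) (fun _ => univ) univ w))
    (htb : t ≤ c ^ Δ * b) (hS : t ≤ c ^ Δ * #S) (hverts : Δ * t + #D₁ + #F < c ^ Δ * b)
    (hedges : #F + (Δ + 1) * #D₁ ≤ c * Fintype.card V) :
    ∃ ρ₁, IsExpansionOn E H D₁ ρ₁ ∧ Set.EqOn ρ₁ ρ₀ (expVerts H D) ∧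
      (∀ i ∈ expVerts H D₁ \ expVerts H D, ρ₁ i ∉ F) ∧
      ∀ w, w ∉ D₁ → c ^ Δ * #S ≤ #(candidates E c H D₁ (ρ₁ ∘ Sum.inl) (fun _ => S) S w) := by
  let A := corePools E c H D D₁ (ρ₀ ∘ Sum.inl) S
  have hA_edge {e} (he : e ∈ edgesIn H D₁) : A (Sum.inr e) = univ := if_pos he
  have hA_vert {w} (hw : w ∈ D₁ \ D) :
      A (Sum.inl w) = candidates E c H D (ρ₀ ∘ Sum.inl) (fun _ => univ) univ w :=
    if_pos (mem_sdiff.1 hw).1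
  have hD₁ : D ∪ (D₁ \ D) = D₁ := union_sdiff_of_subset hD
  have hK : (#(D₁ \ D) : ℝ) ≤ #D₁ := mod_cast card_le_card sdiff_subset
  have hinter (B : Finset V) : (#(F ∩ B) : ℝ) ≤ #F := mod_cast card_le_card inter_subset_left
  obtain ⟨ρ₁, hρ₁, heq, hnew, hcand⟩ := hE.exists_extend hc hc1 hdeg
    (A := A) (le_mul_card_corePools hc hb htb hS) disjoint_sdiff hρ₀ hF (K := D₁ \ D)
    (fun w hw => by
      have : c ^ Δ * b ≤ c ^ Δ * #(A (Sum.inl w)) := by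
        rw [hA_vert hw]
        exact mul_le_mul_of_nonneg_left (hb w) (pow_nonneg hc Δ)
      linarith [hinter (A (Sum.inl w))])
    (fun w hw v hv x hx hxw => by
      rw [hA_edge (mk_mem_edgesIn.2 ⟨hxw, hD hx, (mem_sdiff.1 hw).1⟩)]
      exact (mem_candidates.1 (hA_vert hw ▸ hv)).2 x hx hxw)
    (fun e he => by
      rw [hA_edge (hD₁ ▸ (mem_sdiff.1 he).1), card_univ]
      have : ((Δ : ℝ) + 1) * #(D₁ \ D) ≤ (Δ + 1) * #D₁ := by gcongr
      linarith [hinter univ])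
  rw [hD₁] at hρ₁ hnew
  refine ⟨ρ₁, hρ₁, heq, fun i hi => (hnew i hi).2, fun w hw => ?_⟩
  have hAw : A (Sum.inl w) = S := if_neg hw
  have hwcand := hcand w fun h => hw (mem_sdiff.1 h).1
  rw [hAw] at hwcand
  refine hwcand.trans (mod_cast card_le_card fun v hv => ?_)
  obtain ⟨hvS, hv⟩ := mem_candidates.1 hv
  refine mem_candidates.2 ⟨hvS, fun x hx hxw => ?_⟩
  have hAe : A (Sum.inr s(x, w)) = S := if_neg fun h => hw (mk_mem_edgesIn.1 h).2.2
  exact hAe ▸ hv x (mem_sdiff.2 ⟨hx, fun hxD => hw (hclosed x hxD w hxw)⟩) hxw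

end CorePools

section ManyEdges

variable {V W J ι : Type*} [Fintype V] [Fintype W] [Fintype ι] {E : Set (Finset V)} {c t : ℝ}
  {H : SimpleGraph W} {Δ r : ℕ} {p : ι → V × V} {g : ι → H.Dart} {D₁ : Finset W}

lemma le_card_candidates_dartEnds (hc : 0 ≤ c) (hc1 : c ≤ 1) (hp : ∀ i, IsGoodPair E c (p i))
    (hg : Pairwise (Function.onFun Disjoint fun i => edgeNbhd (g i))) {φ : W → V}
    (hφ : ∀ i, φ (g i).fst = (p i).1 ∧ φ (g i).snd = (p i).2) (w : W) :
    c ^ 2 * Fintype.card V ≤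
      #(candidates E c (deleteDarts g) (dartEnds g) φ (fun _ => univ) univ w) := by
  have hnbhd {x} (hx : x ∈ dartEnds g) (hxw : (deleteDarts g).Adj x w) :
      ∃ i, x ∈ pairVerts (g i).toProd ∧ w ∈ edgeNbhd (g i) := by
    obtain ⟨i, hi⟩ := mem_dartEnds.1 hx
    exact ⟨i, hi, mem_edgeNbhd_of_adj hi (deleteDarts_le hxw)⟩
  by_cases hw : ∃ i, w ∈ edgeNbhd (g i)
  · obtain ⟨i, hi⟩ := hw
    refine (hp i).trans (mod_cast card_le_card fun v hv => ?_)
    have hv' : IsThick E c univ s((p i).1, v) ∧ IsThick E c univ s((p i).2, v) := by simpa using hv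
    refine mem_candidates.2 ⟨mem_univ v, fun x hx hxw => ?_⟩
    obtain ⟨j, hxj, hj⟩ := hnbhd hx hxw
    obtain rfl := eq_of_mem_edgeNbhd hg hi hj
    simp only [pairVerts, mem_insert, mem_singleton] at hxj
    rcases hxj with rfl | rfl
    exacts [(hφ i).1 ▸ hv'.1, (hφ i).2 ▸ hv'.2]
  · have huniv : candidates E c (deleteDarts g) (dartEnds g) φ (fun _ => univ) univ w = univ :=
      eq_univ_iff_forall.2 fun v => mem_candidates.2 ⟨mem_univ v, fun x hx hxw => by
        obtain ⟨i, -, hi⟩ := hnbhd hx hxw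
        exact absurd ⟨i, hi⟩ hw⟩
    rw [huniv, card_univ]
    exact mul_le_of_le_one_left (Nat.cast_nonneg _) (pow_le_one₀ hc hc1)

variable [Fintype J]

lemma IsAbsorber.exists_forbidden {C : Finset V} {A : J → Finset V} (h : IsAbsorber E c p C A r)
    (hr : ∀ j, 2 * r ≤ #(A j)) :
    ∃ F : Finset V, #F ≤ 4 * Fintype.card ι ∧ (∀ i, pairVerts (p i) ⊆ F) ∧ C ⊆ F ∧
      ∀ j, 2 * r ≤ #(A j ∩ F) := by
  choose A' hA' hA'r using fun j => exists_subset_card_eq (hr j)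
  refine ⟨univ.biUnion (fun i => pairVerts (p i)) ∪ C ∪ univ.biUnion A', ?_, fun i => ?_,
    subset_union_right.trans subset_union_left, fun j => ?_⟩
  · have h₁ : #(univ.biUnion fun i => pairVerts (p i)) ≤ Fintype.card ι * 2 :=
      card_biUnion_le_card_mul _ _ _ fun _ _ => card_le_two
    have h₂ : #(univ.biUnion A') ≤ Fintype.card J * (2 * r) :=
      card_biUnion_le_card_mul _ _ _ fun j _ => (hA'r j).le
    have h₃ : Fintype.card J * (2 * r) = 2 * (Fintype.card J * r) := by ring
    have h₄ := card_union_le (univ.biUnion fun i => pairVerts (p i)) C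
    have h₅ := card_union_le (univ.biUnion (fun i => pairVerts (p i)) ∪ C) (univ.biUnion A')
    have := h.card_eq
    omega
  · exact (subset_biUnion_of_mem (fun i => pairVerts (p i)) (mem_univ i)).trans
      (subset_union_left.trans subset_union_left)
  · rw [← hA'r j]
    exact card_le_card (subset_inter (hA' j)
      ((subset_biUnion_of_mem A' (mem_univ j)).trans subset_union_right))

lemma IsAbsorber.exists_isExpansionOn_core [Nonempty V] {C : Finset V} {A : J → Finset V}
    (h : IsAbsorber E c p C A r) (hE : IsTypical E c t) (hc : 0 ≤ c) (hc1 : c ≤ 1)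
    (hdeg : ∀ w, degOf H w ≤ Δ)
    (hg : Pairwise (Function.onFun Disjoint fun i => edgeNbhd (g i))) (hD : dartEnds g ⊆ D₁)
    (hclosed : ∀ x ∈ dartEnds g, ∀ w, H.Adj x w → w ∈ D₁) (hr : ∀ j, 2 * r ≤ #(A j)) (j₁ : J)
    {s : ℕ} (hs : s ≤ r) (hts : t ≤ c ^ Δ * s) (htV : t ≤ c ^ Δ * (c ^ 2 * Fintype.card V))
    (hverts : Δ * t + #D₁ + 4 * Fintype.card ι < c ^ Δ * (c ^ 2 * Fintype.card V))
    (hedges : 4 * Fintype.card ι + (Δ + 1) * #D₁ ≤ c * Fintype.card V) :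
    ∃ ρ₁, IsExpansionOn E (deleteDarts g) D₁ ρ₁ ∧
      (∀ i, ρ₁ (Sum.inl (g i).fst) = (p i).1 ∧ ρ₁ (Sum.inl (g i).snd) = (p i).2) ∧
      (∀ x ∈ expVerts (deleteDarts g) D₁, ρ₁ x ∉ C) ∧
      (∀ j, 2 * r ≤ #(A j \ (expVerts (deleteDarts g) D₁).image ρ₁)) ∧
      ∃ S ⊆ A j₁ \ (expVerts (deleteDarts g) D₁).image ρ₁, #S = s ∧ ∀ w, w ∉ D₁ →
        c ^ Δ * s ≤ #(candidates E c (deleteDarts g) D₁ (ρ₁ ∘ Sum.inl) (fun _ => S) S w) := by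
  obtain ⟨F, hFcard, hpF, hCF, hAF⟩ := h.exists_forbidden hr
  have hFcard' : (#F : ℝ) ≤ 4 * Fintype.card ι := mod_cast hFcard
  obtain ⟨S, hSA, rfl⟩ := exists_subset_card_eq (s := A j₁ ∩ F) (n := s)
    (by have := hAF j₁; omega)
  obtain ⟨ρ₀, hρ₀, hρ₀p⟩ := exists_isExpansionOn_dartEnds h.ne h.disjoint_pairs hg
  have hpair {x} (hx : x ∈ expVerts (deleteDarts g) (dartEnds g)) :=
    exists_mem_pairVerts_of_mem_expVerts_dartEnds hg hρ₀p hx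
  obtain ⟨ρ₁, hρ₁, heq, hnew, hcand⟩ := hE.exists_extend_core hc hc1
    (fun w => (degOf_deleteDarts_le w).trans (hdeg w)) hD
    (fun x hx w hxw => hclosed x hx w (deleteDarts_le hxw)) hρ₀
    (fun x hx => (hpair hx).elim fun i hi => hpF i hi)
    (le_card_candidates_dartEnds hc hc1 h.isGoodPair hg hρ₀p) htV hts (by linarith) (by linarith)
  have hcases {x} (hx : x ∈ expVerts (deleteDarts g) D₁) :
      (∃ i, ρ₁ x ∈ pairVerts (p i)) ∨ ρ₁ x ∉ F := by
    by_cases hx₀ : x ∈ expVerts (deleteDarts g) (dartEnds g)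
    exacts [.inl (heq hx₀ ▸ hpair hx₀), .inr (hnew x (mem_sdiff.2 ⟨hx, hx₀⟩))]
  have hreserved (j) : A j ∩ F ⊆ A j \ (expVerts (deleteDarts g) D₁).image ρ₁ := by
    refine fun v hv => mem_sdiff.2 ⟨(mem_inter.1 hv).1, fun hmem => ?_⟩
    obtain ⟨x, hx, rfl⟩ := mem_image.1 hmem
    rcases hcases hx with ⟨i, hi⟩ | hxF
    exacts [disjoint_left.1 (h.disjoint_pair_cluster i j) hi (mem_inter.1 hv).1,
      hxF (mem_inter.1 hv).2]
  refine ⟨ρ₁, hρ₁, fun i => ?_, fun x hx hxC => ?_,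
    fun j => (hAF j).trans (card_le_card (hreserved j)), S, hSA.trans (hreserved j₁), rfl, hcand⟩
  · rw [heq (inl_mem_expVerts.2 (fst_mem_dartEnds i)),
      heq (inl_mem_expVerts.2 (snd_mem_dartEnds i))]
    exact hρ₀p i
  · rcases hcases hx with ⟨i, hi⟩ | hxF
    exacts [disjoint_left.1 (h.disjoint_pair_certain i) hi hxC, hxF (hCF hxC)]

lemma IsAbsorber.card_sdiff_add_le {C : Finset V} {A : J → Finset V} (h : IsAbsorber E c p C A r)
    (hcard : Fintype.card W + edgeCnt H ≤ Fintype.card V)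
    (hg : Pairwise (Function.onFun Disjoint fun i => edgeNbhd (g i))) (hD : dartEnds g ⊆ D₁)
    {ρ₁ : W ⊕ Sym2 W → V}
    (hρ₁ : ∀ i, ρ₁ (Sum.inl (g i).fst) = (p i).1 ∧ ρ₁ (Sum.inl (g i).snd) = (p i).2) :
    #(expVerts (deleteDarts g) univ \ expVerts (deleteDarts g) D₁) + Fintype.card J * r ≤
      ∑ j, #(A j \ (expVerts (deleteDarts g) D₁).image ρ₁) := by
  set I := (expVerts (deleteDarts g) D₁).image ρ₁
  have hcover : (univ : Finset V) ⊆ I ∪ C ∪ univ.biUnion fun j => A j \ I := by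
    intro v _
    by_cases hvI : v ∈ I
    · simp [hvI]
    rcases h.cover v with ⟨i, hi⟩ | hC | ⟨j, hj⟩
    · simp only [pairVerts, mem_insert, mem_singleton, ← (hρ₁ i).1, ← (hρ₁ i).2] at hi
      refine absurd ?_ hvI
      rcases hi with rfl | rfl
      exacts [mem_image_of_mem ρ₁ (inl_mem_expVerts.2 (hD (fst_mem_dartEnds i))),
        mem_image_of_mem ρ₁ (inl_mem_expVerts.2 (hD (snd_mem_dartEnds i)))]
    · simp [hC]
    · exact mem_union_right _ (mem_biUnion.2 ⟨j, mem_univ j, mem_sdiff.2 ⟨hj, hvI⟩⟩)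
  have hV : Fintype.card V ≤
      #(expVerts (deleteDarts g) D₁) + #C + ∑ j, #(A j \ I) := by
    rw [← card_univ]
    exact (card_le_card hcover).trans ((card_union_le _ _).trans (add_le_add
      ((card_union_le _ _).trans (Nat.add_le_add_right card_image_le _)) card_biUnion_le))
  have hsub : expVerts (deleteDarts g) D₁ ⊆ expVerts (deleteDarts g) univ :=
    expVerts_mono (subset_univ D₁)
  have := card_sdiff_add_card_eq_card hsub
  have := card_expVerts_deleteDarts_add hg
  have := h.card_eq
  omega

/-- A core of `H`: a set `D₁`, to be embedded first, that contains darts `g i` with disjoint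
neighbourhoods. `D₁` is attached to the rest of `H` only through the vertices in `X`, which are not
ends of the darts, and the classes of `κ` split the rest into small parts without edges between
them. -/
structure IsCore {Q : Type*} (g : ι → H.Dart) (D₁ X : Finset W) (κ : W → Q) (m : ℝ) : Prop where
  disjoint_edgeNbhds : Pairwise (Function.onFun Disjoint fun i => edgeNbhd (g i))
  dartEnds_subset : dartEnds g ⊆ D₁
  disjoint_dartEnds : Disjoint (dartEnds g) X
  mem_of_adj : ∀ x ∈ D₁, ∀ w, w ∉ D₁ → H.Adj x w → x ∈ X
  eq_of_adj : ∀ x w, x ∉ D₁ → w ∉ D₁ → H.Adj x w → κ x = κ w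
  card_boundary_le : #X ≤ m
  card_class_le : ∀ a, #{w | w ∉ D₁ ∧ κ w = a} ≤ m

theorem IsAbsorber.hasExpansionCopy [Nonempty V] [Nonempty J] {C : Finset V} {A : J → Finset V}
    (h : IsAbsorber E c p C A r) (hr : ∀ j, 2 * r ≤ #(A j)) (hE : IsTypical E c t) (hc : 0 ≤ c)
    (hc1 : c ≤ 1) (hΔ : Δ ≠ 0) (hdeg : ∀ w, degOf H w ≤ Δ)
    (hcard : Fintype.card W + edgeCnt H ≤ Fintype.card V)
    {X : Finset W} {Q : Type*} {κ : W → Q} {m : ℝ} (hg : IsCore g D₁ X κ m) {s : ℕ} (hs : 2 * s ≤ r)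
    (hts : t ≤ c ^ Δ * s) (htV : t ≤ c ^ Δ * (c ^ 2 * Fintype.card V))
    (hverts : Δ * t + #D₁ + 4 * Fintype.card ι < c ^ Δ * (c ^ 2 * Fintype.card V))
    (hedges : 4 * Fintype.card ι + (Δ + 1) * #D₁ ≤ c * Fintype.card V)
    {q : ℝ} (hq₀ : 0 ≤ q) (hq : (Δ + 1) * t + m < c ^ Δ * q) (hm : (Δ + 1) * m ≤ c * q)
    (hqs : q + 2 * Δ * m ≤ c ^ Δ * s) : HasExpansionCopy E H := by
  have j₁ : J := Classical.arbitrary J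
  have hD := hg.dartEnds_subset
  obtain ⟨ρ₁, hρ₁, hρ₁p, hρ₁C, hA', S, hSA, rfl, hcand⟩ := h.exists_isExpansionOn_core hE hc hc1
    hdeg hg.disjoint_edgeNbhds hD (fun x hx w hxw => by_contra fun hw =>
      disjoint_left.1 hg.disjoint_dartEnds hx (hg.mem_of_adj x (hD hx) w hw hxw))
    hr j₁ (by omega) hts htV hverts hedges
  set I := (expVerts (deleteDarts g) D₁).image ρ₁
  have htouch : (#(touching (deleteDarts g) D₁) : ℝ) ≤ 2 * Δ * m :=
    calc (#(touching (deleteDarts g) D₁) : ℝ) ≤ 2 * Δ * #X :=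
          mod_cast card_touching_le (fun w => (degOf_deleteDarts_le w).trans (hdeg w))
            fun w hw x hx hxw => hg.mem_of_adj x hx w hw (deleteDarts_le hxw)
      _ ≤ 2 * Δ * m := mul_le_mul_of_nonneg_left hg.card_boundary_le (by positivity)
  obtain ⟨ρ, hρ, heq, hnew, hleft⟩ := hE.exists_expansion_of_pools hc hc1 hΔ
    (fun w => (degOf_deleteDarts_le w).trans (hdeg w)) hρ₁
    (fun i j hij => (h.disjoint_clusters hij).mono sdiff_subset sdiff_subset)
    (fun x hx j hxA => (mem_sdiff.1 hxA).2 (mem_image_of_mem ρ₁ hx)) hSA hs hA'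
    (h.card_sdiff_add_le hcard hg.disjoint_edgeNbhds hD hρ₁p) hq₀ hq hm (by linarith) hcand κ
    (fun x w hx hw hxw => hg.eq_of_adj x w hx hw (deleteDarts_le hxw)) hg.card_class_le
  have hρC {x} (hx : x ∈ expVerts (deleteDarts g) univ) : ρ x ∉ C := by
    by_cases hx₁ : x ∈ expVerts (deleteDarts g) D₁
    · exact heq hx₁ ▸ hρ₁C x hx₁
    · obtain ⟨j, hj⟩ := hnew x (mem_sdiff.2 ⟨hx, hx₁⟩)
      exact disjoint_right.1 (h.disjoint_certain_cluster j) (mem_sdiff.1 hj).1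
  obtain ⟨k, hk, hkp, hkmem⟩ := h.absorb
    (fun j => (A j \ I) \ (expVerts (deleteDarts g) univ).image ρ)
    (fun j => sdiff_subset.trans sdiff_subset) hleft
  have hkρ (i) : k i ∉ (expVerts (deleteDarts g) univ).image ρ := by
    rcases hkmem i with hC | ⟨j, hj⟩
    · rw [mem_image]
      rintro ⟨x, hx, hxk⟩
      exact hρC hx (hxk ▸ hC)
    · exact (mem_sdiff.1 hj).2
  have hρp (i) : ρ (Sum.inl (g i).fst) = (p i).1 ∧ ρ (Sum.inl (g i).snd) = (p i).2 := by
    rw [heq (inl_mem_expVerts.2 (hD (fst_mem_dartEnds i))),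
      heq (inl_mem_expVerts.2 (hD (snd_mem_dartEnds i)))]
    exact hρ₁p i
  obtain ⟨ρ', hρ'⟩ := hρ.exists_of_deleteDarts hg.disjoint_edgeNbhds hρp hk hkρ hkp
  exact hρ'.hasExpansionCopy

lemma exists_spaced_darts {L : ℝ} (hdeg : ∀ w, degOf H w ≤ Δ) {K : Finset W}
    (hK : L ≤ #{a : H.Dart | a.fst ∈ K ∧ a.snd ∈ K}) (hL : 4 * Δ ^ 3 * Fintype.card ι < L) :
    ∃ g : ι → H.Dart, Pairwise (Function.onFun Disjoint fun i => edgeNbhd (g i)) ∧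
      dartEnds g ⊆ K := by
  have hlt : 4 * Δ ^ 3 * Fintype.card ι < #{a : H.Dart | a.fst ∈ K ∧ a.snd ∈ K} := by
    exact_mod_cast hL.trans_le hK
  have : Nonempty H.Dart := (card_pos.1 (Nat.zero_lt_of_lt hlt)).to_type
  obtain ⟨g, hgK, hg⟩ := exists_pairwiseDisjoint_choice
    (card_not_disjoint_edgeNbhd_le hdeg) (I := (univ : Finset ι))
    (F := fun _ => {a : H.Dart | a.fst ∈ K ∧ a.snd ∈ K}) fun i _ => by rwa [card_univ]
  refine ⟨g, fun i j hij => hg (mem_univ i) (mem_univ j) hij, fun x hx => ?_⟩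
  obtain ⟨i, hi⟩ := mem_dartEnds.1 hx
  have hgi := (mem_filter.1 (hgK i (mem_univ i))).2
  simp only [pairVerts, mem_insert, mem_singleton] at hi
  rcases hi with rfl | rfl
  exacts [hgi.1, hgi.2]

end ManyEdges

section Assembly

universe u

variable {ι : Type*} [Fintype ι] {Δ : ℕ} {c θ ε μ : ℝ}

theorem Separable.exists_isCore {W : Type u} [Fintype W] {H : SimpleGraph W} {N : ℝ}
    (h : Separable H μ) (hΔ : Δ ≠ 0) (hdeg : ∀ w, degOf H w ≤ Δ) (hμ : 0 ≤ μ) (hθ : 0 < θ)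
    (hθ1 : θ ≤ 1) (hμθ : 4 * Δ * μ ≤ θ ^ 2) (hW : Fintype.card W ≤ N) (he : θ * N ≤ edgeCnt H)
    (hι : 16 * Δ ^ 3 * Fintype.card ι < θ ^ 2 * N) :
    ∃ (g : ι → H.Dart) (D₁ X : Finset W) (Q : Type u) (κ : W → Q),
      IsCore g D₁ X κ (μ * N) ∧ #D₁ ≤ θ * N := by
  have hN : 0 ≤ N := (Nat.cast_nonneg _).trans hW
  have hΔ1 : (1 : ℝ) ≤ Δ := mod_cast Nat.one_le_iff_ne_zero.2 hΔ
  have hμW : μ * Fintype.card W ≤ μ * N := by gcongr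
  have hθN : θ ^ 2 * N ≤ θ * N := by gcongr; nlinarith
  have hμN : 4 * (Δ * (μ * N)) ≤ θ ^ 2 * N := by nlinarith
  obtain ⟨X, Q, κ, hX, hκ, hκcard⟩ := h.exists_component_map
  obtain ⟨K, hKX, hKadj, hKcard, hKdarts⟩ := exists_dense_part hdeg (m := μ * N) (β := θ)
    (L := θ ^ 2 * N / 4) (by positivity) hθ.le (hX.trans hμW) hκ
    (fun a => (hκcard a).trans hμW) (by
      have : θ * Fintype.card W ≤ θ * N := by gcongr
      linarith)
  obtain ⟨g, hg, hgK⟩ := exists_spaced_darts (ι := ι) hdeg hKdarts (by linarith)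
  refine ⟨g, K ∪ X, X, Q, κ, ⟨hg, hgK.trans subset_union_left, hKX.mono_left hgK,
    fun x hx w hw hxw => ?_, fun x w hx hw => ?_, hX.trans hμW, fun a => ?_⟩, ?_⟩
  · rw [notMem_union] at hw
    exact (mem_union.1 hx).resolve_left fun hxK => hw.1 (hKadj x hxK w hw.2 hxw)
  · rw [notMem_union] at hx hw
    exact hκ x hx.2 w hw.2
  · refine (Nat.cast_le.2 (card_le_card fun w hw => ?_)).trans ((hκcard a).trans hμW)
    simp only [mem_filter, mem_univ, true_and, notMem_union] at hw ⊢
    exact ⟨hw.1.2, hw.2⟩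
  · have hK : (#K : ℝ) ≤ θ * N / 2 := le_of_mul_le_mul_left (by linarith) hθ
    have hX' : (#X : ℝ) ≤ θ * N / 4 := by
      have : μ * N ≤ Δ * (μ * N) := le_mul_of_one_le_left (by positivity) hΔ1
      linarith
    have : (#(K ∪ X) : ℝ) ≤ #K + #X := mod_cast card_union_le K X
    have : 0 ≤ θ * N := by positivity
    linarith

variable {V J W : Type*} [Fintype V] [Fintype J] [Fintype W] {E : Set (Finset V)}
  {H : SimpleGraph W} {p : ι → V × V} {C : Finset V} {A : J → Finset V} {r : ℕ}

theorem IsAbsorber.hasExpansionCopy_of_isCore [Nonempty V] [Nonempty J]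
    (h : IsAbsorber E c p C A r) (hr : ∀ j, 2 * r ≤ #(A j)) {t : ℝ} (hE : IsTypical E c t)
    (hc : 0 < c) (hc1 : c ≤ 1) (hΔ : Δ ≠ 0) (hdeg : ∀ w, degOf H w ≤ Δ)
    (hcard : Fintype.card W + edgeCnt H ≤ Fintype.card V) {g : ι → H.Dart} {D₁ X : Finset W}
    {Q : Type*} {κ : W → Q} {m : ℝ} (hg : IsCore g D₁ X κ m) {s : ℕ} (hs : 2 * s ≤ r) {b : ℝ}
    (hb : 0 < b) (hbV : 4 * (Δ + 1) * b ≤ c ^ Δ * (c ^ 2 * Fintype.card V)) (htb : t ≤ b)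
    (hD₁ : #D₁ ≤ b) (hι : 4 * Fintype.card ι ≤ b) (hts : 8 * (Δ + 1) * t ≤ (c ^ Δ) ^ 2 * s)
    (hm : 0 < m) (hms : 8 * (Δ + 1) * m ≤ (c ^ Δ) ^ 2 * s) : HasExpansionCopy E H := by
  have hΔ1 : (1 : ℝ) ≤ Δ := mod_cast Nat.one_le_iff_ne_zero.2 hΔ
  have ht : 0 ≤ t := hE.nonneg
  set a := c ^ Δ
  have ha : 0 < a := pow_pos hc Δ
  have hac : a ≤ c := pow_le_of_le_one hc.le hc1 hΔ
  have has : a ^ 2 * s ≤ a * s := by gcongr; nlinarith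
  have hacs : a ^ 2 * s ≤ c * (a * s) := by rw [pow_two, mul_assoc]; gcongr
  have hacV : a * (c ^ 2 * Fintype.card V) ≤ c * Fintype.card V := by
    rw [← mul_assoc]; gcongr; nlinarith
  have hΔt : t ≤ Δ * t := le_mul_of_one_le_left ht hΔ1
  have hΔb : b ≤ Δ * b := le_mul_of_one_le_left hb.le hΔ1
  have hΔm : m ≤ Δ * m := le_mul_of_one_le_left hm.le hΔ1
  have hΔtb : Δ * t ≤ Δ * b := by gcongr
  have hΔD₁ : Δ * (#D₁ : ℝ) ≤ Δ * b := by gcongr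
  exact h.hasExpansionCopy hr hE hc.le hc1 hΔ hdeg hcard hg hs (q := a * s / 2) (by linarith)
    (by linarith) (by linarith) (by linarith) (by positivity) (by linarith) (by linarith)
    (by linarith)

theorem IsAbsorber.hasExpansionCopy_of_separable [Nonempty V] [Nonempty J]
    (h : IsAbsorber E c p C A r) (hr : ∀ j, 2 * r ≤ #(A j))
    (hE : IsTypical E c (ε * Fintype.card V)) (hc : 0 < c) (hc1 : c ≤ 1) (hΔ : Δ ≠ 0)
    (hθ : 0 < θ) (hθ1 : θ ≤ 1) (hθc : 4 * (Δ + 1) * θ ≤ c ^ Δ * c ^ 2) (hεθ : ε ≤ θ) {σ : ℝ} {s : ℕ}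
    (hσ : σ * Fintype.card V ≤ s) (hs : 2 * s ≤ r) (hεσ : 8 * (Δ + 1) * ε ≤ (c ^ Δ) ^ 2 * σ)
    (hμ : 0 < μ) (hμθ : 4 * Δ * μ ≤ θ ^ 2) (hμσ : 8 * (Δ + 1) * μ ≤ (c ^ Δ) ^ 2 * σ)
    (hι : 16 * Δ ^ 3 * Fintype.card ι < θ ^ 2 * Fintype.card V) (hsep : Separable H μ)
    (hdeg : ∀ w, degOf H w ≤ Δ) (he : θ * Fintype.card V ≤ edgeCnt H)
    (hcard : Fintype.card W + edgeCnt H ≤ Fintype.card V) : HasExpansionCopy E H := by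
  have : (0 : ℝ) < Fintype.card V := mod_cast Fintype.card_pos
  have hscale {x : ℝ} (hx : 8 * (Δ + 1) * x ≤ (c ^ Δ) ^ 2 * σ) :
      8 * (Δ + 1) * (x * Fintype.card V) ≤ (c ^ Δ) ^ 2 * s :=
    calc 8 * (Δ + 1) * (x * Fintype.card V) = 8 * (Δ + 1) * x * Fintype.card V := by ring
      _ ≤ (c ^ Δ) ^ 2 * σ * Fintype.card V := by gcongr
      _ ≤ (c ^ Δ) ^ 2 * s := by rw [mul_assoc]; gcongr
  have hι' : 4 * (Fintype.card ι : ℝ) ≤ θ * Fintype.card V :=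
    calc 4 * (Fintype.card ι : ℝ) ≤ 16 * 1 * Fintype.card ι := by gcongr; norm_num
      _ ≤ 16 * Δ ^ 3 * Fintype.card ι := by
          gcongr
          exact one_le_pow₀ (mod_cast Nat.one_le_iff_ne_zero.2 hΔ)
      _ ≤ θ ^ 2 * Fintype.card V := hι.le
      _ ≤ θ * Fintype.card V := by gcongr; exact pow_le_of_le_one hθ.le hθ1 two_ne_zero
  obtain ⟨g, D₁, X, Q, κ, hg, hD₁⟩ := hsep.exists_isCore hΔ hdeg hμ.le hθ hθ1 hμθ
    (Nat.cast_le.2 ((Nat.le_add_right _ _).trans hcard)) he hι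
  refine h.hasExpansionCopy_of_isCore hr hE hc hc1 hΔ hdeg hcard hg hs (by positivity) ?_
    (by gcongr) hD₁ hι' (hscale hεσ) (by positivity) (hscale hμσ)
  rw [← mul_assoc, ← mul_assoc]
  gcongr

end Assembly

lemma hDeg_le_card_completes {V : Type*} [Fintype V] {E : Set (Finset V)}
    (hE : ∀ e ∈ E, #e = 3) (v : V) : hDeg E v ≤ #{p | Completes E v p} := by
  refine (card_le_card fun e he => ?_).trans
    (card_image_le (f := fun p : V × V => ({p.1, p.2, v} : Finset V)))
  obtain ⟨heE, hve⟩ : e ∈ E ∧ v ∈ e := by simpa using he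
  obtain ⟨x, y, -, hxy⟩ : ∃ x y, x ≠ y ∧ e.erase v = {x, y} :=
    card_eq_two.1 (by rw [card_erase_of_mem hve, hE e heE])
  have hxyv : ({x, y, v} : Finset V) = e := by
    rw [← insert_erase hve, hxy]
    grind
  have hcomp : Completes E v (x, y) := hxyv.symm.subst (motive := (· ∈ E)) heE
  exact mem_image.2 ⟨(x, y), by simpa using hcomp, hxyv⟩

theorem exists_forall_hasExpansionCopy_of_many_edges.{v, w} {Δ : ℕ} {c α θ : ℝ} (hΔ : Δ ≠ 0)
    (hc : 0 < c) (hc1 : c ≤ 1) (hα : 0 < α) (hα1 : α ≤ 1) (hθ : 0 < θ) (hθ1 : θ ≤ 1)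
    (hθc : 4 * (Δ + 1) * θ ≤ c ^ Δ * c ^ 2) :
    ∃ (ε₀ μ : ℝ) (n₀ : ℕ), 0 < ε₀ ∧ 0 < μ ∧ ∀ ε ≤ ε₀, ∀ (V : Type v) [Fintype V] [Nonempty V]
      (E : Set (Finset V)), n₀ ≤ Fintype.card V → (∀ e ∈ E, #e = 3) →
      IsTypical E c (ε * Fintype.card V) → (∀ v, α * (Fintype.card V : ℝ) ^ 2 ≤ hDeg E v) →
      ∀ (W : Type w) [Fintype W] (H : SimpleGraph W), Separable H μ → (∀ w, degOf H w ≤ Δ) →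
      θ * Fintype.card V ≤ edgeCnt H → Fintype.card W + edgeCnt H ≤ Fintype.card V →
      HasExpansionCopy E H := by
  have : (0 : ℝ) < Δ := mod_cast Nat.pos_of_ne_zero hΔ
  set ζ := min (α / 80) (θ ^ 2 / (64 * Δ ^ 3))
  have hζ : 0 < ζ := by positivity
  have hζθ : ζ * (64 * Δ ^ 3) ≤ θ ^ 2 := (le_div_iff₀ (by positivity)).1 (min_le_right _ _)
  obtain ⟨ρ, ε₁, n₀, hρ, hε₁, habs⟩ :=
    exists_isAbsorber.{v} hα hα1 hζ (min_le_left _ _ : ζ ≤ α / 80) hc hc1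
  set τ := (c ^ Δ) ^ 2 * (ρ / 4) / (8 * (Δ + 1))
  have hτ {x : ℝ} (hx : x ≤ τ) : 8 * (Δ + 1) * x ≤ (c ^ Δ) ^ 2 * (ρ / 4) :=
    (le_div_iff₀' (by positivity)).1 hx
  set ε₀ := min ε₁ (min θ τ)
  set μ := min (θ ^ 2 / (4 * Δ)) τ
  refine ⟨ε₀, μ, ⌈2 / ρ⌉₊ + n₀, by positivity, by positivity,
    fun ε hε V _ _ E hV hE htyp hdegE W _ H hsep hdeg he hcard => ?_⟩
  have hεθτ : ε ≤ min θ τ := hε.trans (min_le_right _ _)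
  obtain ⟨J, ι, _, _, p, C, A, r, _, hA, hr, hι, hAr⟩ := habs V E (ε * Fintype.card V)
    ((Nat.le_add_left _ _).trans hV) hE (by gcongr; exact hε.trans (min_le_left _ _)) htyp
    fun v => (hdegE v).trans (mod_cast hDeg_le_card_completes hE v)
  have hr2 : ρ / 4 * Fintype.card V ≤ (r / 2 : ℕ) := by
    have hρV : 2 ≤ Fintype.card V * ρ :=
      (div_le_iff₀ hρ).1 (Nat.ceil_le.1 ((Nat.le_add_right _ _).trans hV))
    have : (r : ℝ) ≤ 2 * (r / 2 : ℕ) + 1 := by norm_cast; omega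
    linarith
  have hι' : 16 * Δ ^ 3 * Fintype.card ι < θ ^ 2 * Fintype.card V :=
    calc 16 * (Δ : ℝ) ^ 3 * Fintype.card ι ≤ 16 * Δ ^ 3 * (3 * ζ * Fintype.card V) := by gcongr
      _ < ζ * (64 * Δ ^ 3) * Fintype.card V := by
          have : 0 < ζ * Δ ^ 3 * Fintype.card V := by positivity
          linarith
      _ ≤ θ ^ 2 * Fintype.card V := by gcongr
  exact hA.hasExpansionCopy_of_separable hAr htyp hc hc1 hΔ hθ hθ1 hθc
    (hεθτ.trans (min_le_left _ _)) hr2 (Nat.mul_div_le r 2) (hτ (hεθτ.trans (min_le_right _ _)))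
    (by positivity) ((le_div_iff₀' (by positivity)).1 (min_le_left _ _)) (hτ (min_le_right _ _))
    hι' hsep hdeg he hcard

theorem exists_forall_isTypical_hasExpansionCopy.{v, w} {Δ : ℕ} {c α : ℝ} (hΔ : Δ ≠ 0) (hc : 0 < c)
    (hc1 : c ≤ 1) (hα : 0 < α) (hα1 : α ≤ 1) :
    ∃ (ε μ : ℝ) (n₀ : ℕ), 0 < ε ∧ 0 < μ ∧ ∀ (V : Type v) [Fintype V] [Nonempty V]
      (E : Set (Finset V)), n₀ ≤ Fintype.card V → (∀ e ∈ E, #e = 3) →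
      IsTypical E c (ε * Fintype.card V) → (∀ v, α * (Fintype.card V : ℝ) ^ 2 ≤ hDeg E v) →
      ∀ (W : Type w) [Fintype W] (H : SimpleGraph W), Separable H μ → (∀ w, degOf H w ≤ Δ) →
      Fintype.card W + edgeCnt H ≤ Fintype.card V → HasExpansionCopy E H := by
  have : (0 : ℝ) < Δ := mod_cast Nat.pos_of_ne_zero hΔ
  set a := c ^ Δ
  have ha₀ : 0 < a := pow_pos hc Δ
  have hac : a ≤ c := pow_le_of_le_one hc.le hc1 hΔ
  obtain ⟨θ, hθ, hθc⟩ : ∃ θ : ℝ, 0 < θ ∧ 4 * (Δ + 1) * θ = a * c ^ 2 :=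
    ⟨a * c ^ 2 / (4 * (Δ + 1)), by positivity, by field_simp⟩
  have hθa : 4 * (Δ + 1) * θ ≤ a :=
    hθc.trans_le (mul_le_of_le_one_right ha₀.le (pow_le_one₀ hc.le hc1))
  have hΔθ : 0 < Δ * θ := by positivity
  obtain ⟨ε₀, μ, n₀, hε₀, hμ, hmany⟩ :=
    exists_forall_hasExpansionCopy_of_many_edges.{v, w} hΔ hc hc1 hα hα1 hθ (by linarith) hθc.le
  set ε := min ε₀ θ
  have hεθ : ε ≤ θ := min_le_right _ _
  refine ⟨ε, μ, n₀, by positivity, hμ, fun V _ _ E hV hE htyp hdegE W _ H hsep hdeg hcard => ?_⟩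
  have : (0 : ℝ) < Fintype.card V := mod_cast Fintype.card_pos
  rcases le_or_gt (θ * Fintype.card V) (edgeCnt H) with he | he
  · exact hmany ε (min_le_left _ _) V E hV hE htyp hdegE W H hsep hdeg he hcard
  have hΔε : Δ * ε ≤ Δ * θ := by gcongr
  refine htyp.hasExpansionCopy_of_few_edges hc.le hc1 hdeg hcard ?_ ?_ ?_
  · change ε * _ ≤ a * _
    gcongr
    linarith
  · calc Δ * (ε * Fintype.card V) + 2 * (edgeCnt H : ℝ)
        < (Δ * θ + 2 * θ) * Fintype.card V := by nlinarith
      _ ≤ a * Fintype.card V := by gcongr; linarith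
  · calc (Δ + 1) * (2 * (edgeCnt H : ℝ)) ≤ (Δ + 1) * (2 * (θ * Fintype.card V)) := by gcongr
      _ = 2 * (Δ + 1) * θ * Fintype.card V := by ring
      _ ≤ c * Fintype.card V := by gcongr; linarith

/-! ## Statement 2 -/

theorem stmt2 (Δ : ℕ) (hΔ : 1 ≤ Δ) (d α : ℝ) (hd : 0 < d) (hα : 0 < α) :
    ∃ (η μ : ℝ) (n₀ : ℕ), 0 < η ∧ 0 < μ ∧
    ∀ n : ℕ, n₀ ≤ n →
    ∀ (V : Type) [Fintype V] (E : Set (Finset V)),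
      Fintype.card V = n →
      (∀ e ∈ E, e.card = 3) →
      (∀ U₁ U₂ U₃ : Finset V,
        d * (U₁.card : ℝ) * (U₂.card : ℝ) * (U₃.card : ℝ) - η * (n : ℝ) ^ 3 ≤
          (tripCount E U₁ U₂ U₃ : ℝ)) →
      (∀ v : V, α * (n : ℝ) ^ 2 ≤ (hDeg E v : ℝ)) →
      ∀ (W : Type) [Fintype W] (H : SimpleGraph W),
        Separable H μ → (∀ w, degOf H w ≤ Δ) →
        Fintype.card W + edgeCnt H ≤ n →
        HasExpansionCopy E H := by
  set d₁ := min d 1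
  set α₁ := min α 1
  have hd₁ : 0 < d₁ := by positivity
  obtain ⟨ε, μ, n₀, hε, hμ, hcopy⟩ := exists_forall_isTypical_hasExpansionCopy
    (c := d₁ / 4) (α := α₁) (Nat.one_le_iff_ne_zero.1 hΔ) (by positivity)
    (by linarith [min_le_right d 1]) (by positivity) (min_le_right α 1)
  refine ⟨d₁ / 4 * ε ^ 3, μ, max n₀ 1, by positivity, hμ, ?_⟩
  rintro _ hn V _ E rfl hE hdense hdegE W _ H hsep hdeg hcard
  have : Nonempty V := Fintype.card_pos_iff.1 ((le_max_right _ _).trans hn)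
  have hεV : 0 < ε * Fintype.card V := by positivity
  refine hcopy V E ((le_max_left _ _).trans hn) hE
    (isTypical_of_dense (δ := d₁ / 4 * ε ^ 3 * Fintype.card V ^ 3) hd₁ hεV ?_ fun U₁ U₂ U₃ => ?_)
    (fun v => le_trans ?_ (hdegE v)) W H hsep hdeg hcard
  · have : 0 < d₁ * (ε * Fintype.card V) ^ 3 := by positivity
    linarith
  · refine le_trans ?_ (hdense U₁ U₂ U₃)
    gcongr
    exact min_le_left d 1
  · gcongr
    exact min_le_left α 1
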